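/- arXiv:1510.06964 — 2 statements merged into one kernel-verified Lean document; each statement's English description precedes it below -/
import Mathlib

section
/- For every integer k ≥ 4, if G is a connected non-complete k-regular simple graph, then any two proper k-colourings of G are Kempe equivalent, i.e., the set of k-colourings of G forms a single Kempe class. -/
open SimpleGraph
open scoped Classical

variable {V : Type*}

/-- A proper `k`-colouring of `G`. -/
def IsProperColoring (G : SimpleGraph V) (k : ℕ) (c : V → Fin k) : Prop :=
  ∀ ⦃u v : V⦄, G.Adj u v → c u ≠ c v

/-- `c'` is obtained from `c` by a single Kempe change: the colours `a` and `b` are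
swapped on the connected component (of the subgraph induced by the vertices coloured
`a` or `b`) containing `v0`, and all other vertices keep their colour. -/

def KempeStep (G : SimpleGraph V) (k : ℕ) (c c' : V → Fin k) : Prop :=
  ∃ a b : Fin k, ∃ v0 : {x : V | c x = a ∨ c x = b},
    ∀ v : V, c' v =
      if h : c v = a ∨ c v = b then
        if (G.induce {x : V | c x = a ∨ c x = b}).Reachable v0 ⟨v, h⟩
          then Equiv.swap a b (c v) else c v
      else c v

/-- Two colourings are Kempe equivalent if one is obtained from the other by a finite
sequence of Kempe changes. -/
def KempeEquiv (G : SimpleGraph V) (k : ℕ) (c c' : V → Fin k) : Prop :=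
  Relation.ReflTransGen (KempeStep G k) c c'

/-- The set of all proper `k`-colourings of `G` forms a single Kempe class. -/
def KempeClass (G : SimpleGraph V) (k : ℕ) : Prop :=
  ∀ c c' : V → Fin k, IsProperColoring G k c → IsProperColoring G k c' →
    KempeEquiv G k c c'

/-- `G` is `d`-degenerate: every nonempty set of vertices contains a vertex with at
most `d` neighbours inside the set. -/
def Degenerate (G : SimpleGraph V) (d : ℕ) : Prop :=
  ∀ S : Set V, S.Nonempty → ∃ v ∈ S, (S ∩ G.neighborSet v).ncard ≤ d

/-- `G` is 3-connected: more than 3 vertices, and deleting any at most 2 vertices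
leaves it connected. -/
def ThreeConnected [Fintype V] (G : SimpleGraph V) : Prop :=
  3 < Fintype.card V ∧ ∀ S : Set V, S.ncard ≤ 2 → (G.induce Sᶜ).Connected

/-
Kempe changes are localized by forbidding them to touch a frozen set of vertices. If the vertices
of a connected graph have degree at most `k` and a precolouring leaves some uncoloured vertex with a
spare colour in every component of the uncoloured part, then its proper extensions are pairwise
equivalent by changes of uncoloured vertices only: colour the component inwards towards that vertex.
This settles graphs with a clique separator, by treating the two sides separately, and graphs
containing a `k`-clique, by deleting the clique and joining two of its outside neighbours.

Otherwise choose `s` such that deleting `s` and any one further vertex leaves the graph connected.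
If `y` is at distance two from `s`, the colourings in which `s` and `y` have the same colour are
equivalent, the spare colour being at a common neighbour. So a Kempe class is determined by any
second neighbour of `s` to which it can give the colour of `s`, and distinct classes have disjoint
sets of such matchable second neighbours. Counting the colours around the second neighbours that
are not matchable shows that such a set is at least as large as its complement; two classes would
therefore split the second neighbours of `s` into halves, and the same count bounds the halves by
two, a case excluded by inspecting the neighbourhood of `s`.
-/

section KempeCalculus

variable {G : SimpleGraph V} {k : ℕ} {F F' S T : Set V} {a b : Fin k} {c c' c'' : V → Fin k}

/-- The colouring obtained from `c` by exchanging the colours `a` and `b` on `S`. -/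
noncomputable def swapOn (c : V → Fin k) (a b : Fin k) (S : Set V) : V → Fin k :=
  fun v => if v ∈ S then Equiv.swap a b (c v) else c v

/-- `S` is a union of Kempe chains of `c` for the colours `a` and `b`. -/
structure IsKempeUnion (G : SimpleGraph V) (c : V → Fin k) (a b : Fin k) (S : Set V) : Prop where
  color_mem : ∀ v ∈ S, c v = a ∨ c v = b
  closed : ∀ v ∈ S, ∀ u, G.Adj v u → c u = a ∨ c u = b → u ∈ S

/-- A simultaneous Kempe change on a union of chains (for one pair of colours) which avoids the
frozen set `F`. Allowing unions makes the relation symmetric and stable under gluing. -/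
def KempeMove (G : SimpleGraph V) (F : Set V) (c c' : V → Fin k) : Prop :=
  ∃ a b S, Disjoint S F ∧ IsKempeUnion G c a b S ∧ c' = swapOn c a b S

/-- Kempe equivalence through changes that never touch the frozen set `F`. -/
def KempeEquivFixing (G : SimpleGraph V) (F : Set V) (c c' : V → Fin k) : Prop :=
  Relation.ReflTransGen (KempeMove G F) c c'

theorem swapOn_of_mem {v : V} (hv : v ∈ S) : swapOn c a b S v = Equiv.swap a b (c v) :=
  if_pos hv

theorem swapOn_of_notMem {v : V} (hv : v ∉ S) : swapOn c a b S v = c v :=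
  if_neg hv

theorem swapOn_of_ne {v : V} (ha : c v ≠ a) (hb : c v ≠ b) : swapOn c a b S v = c v := by
  unfold swapOn
  split_ifs
  · exact Equiv.swap_apply_of_ne_of_ne ha hb
  · rfl

theorem swapOn_comm (c : V → Fin k) (a b : Fin k) (S : Set V) :
    swapOn c a b S = swapOn c b a S := by
  unfold swapOn
  rw [Equiv.swap_comm]

theorem swapOn_swapOn (c : V → Fin k) (a b : Fin k) (S : Set V) :
    swapOn (swapOn c a b S) a b S = c := by
  funext v
  by_cases hv : v ∈ S <;> simp [swapOn, hv]

theorem swapOn_swapOn_sdiff (h : T ⊆ S) :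
    swapOn (swapOn c a b T) a b (S \ T) = swapOn c a b S := by
  funext v
  by_cases hT : v ∈ T
  · simp [swapOn, hT, h hT]
  · simp [swapOn, hT]

theorem swap_apply_mem_pair {x : Fin k} :
    (Equiv.swap a b x = a ∨ Equiv.swap a b x = b) ↔ (x = a ∨ x = b) := by
  rw [Equiv.swap_apply_eq_iff, Equiv.swap_apply_eq_iff, Equiv.swap_apply_left,
    Equiv.swap_apply_right, or_comm]

theorem swapOn_mem_pair {v : V} :
    (swapOn c a b S v = a ∨ swapOn c a b S v = b) ↔ (c v = a ∨ c v = b) := by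
  unfold swapOn
  split_ifs
  · exact swap_apply_mem_pair
  · rfl

namespace IsKempeUnion

theorem of_swapOn (h : IsKempeUnion G c a b S) (T : Set V) :
    IsKempeUnion G (swapOn c a b T) a b S where
  color_mem v hv := swapOn_mem_pair.2 (h.color_mem v hv)
  closed v hv u huv hu := h.closed v hv u huv (swapOn_mem_pair.1 hu)

theorem sdiff (hS : IsKempeUnion G c a b S) (hT : IsKempeUnion G c a b T) :
    IsKempeUnion G c a b (S \ T) where
  color_mem v hv := hS.color_mem v hv.1
  closed v hv u huv hu :=
    ⟨hS.closed v hv.1 u huv hu, fun huT => hv.2 (hT.closed u huT v huv.symm (hS.color_mem v hv.1))⟩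

theorem swap_colors (h : IsKempeUnion G c a b S) : IsKempeUnion G c b a S where
  color_mem v hv := (h.color_mem v hv).symm
  closed v hv u huv hu := h.closed v hv u huv hu.symm

theorem swapOn_ne {u v : V} (h : IsKempeUnion G c a b S) (huv : G.Adj u v) (hu : u ∈ S)
    (hv : v ∉ S) : swapOn c a b S u ≠ swapOn c a b S v := fun heq =>
  hv (h.closed u hu v huv (swapOn_mem_pair.1 (heq ▸ (h.of_swapOn S).color_mem u hu)))

theorem isProperColoring_swapOn (h : IsKempeUnion G c a b S) (hc : IsProperColoring G k c) :
    IsProperColoring G k (swapOn c a b S) := by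
  intro u v huv
  by_cases hu : u ∈ S <;> by_cases hv : v ∈ S
  · simpa [swapOn, hu, hv] using hc huv
  · exact h.swapOn_ne huv hu hv
  · exact (h.swapOn_ne huv.symm hv hu).symm
  · simpa [swapOn, hu, hv] using hc huv

theorem kempeMove (h : IsKempeUnion G c a b S) (hF : Disjoint S F) :
    KempeMove G F c (swapOn c a b S) :=
  ⟨a, b, S, hF, h, rfl⟩

theorem singleton (hc : IsProperColoring G k c) {r : V} {f : Fin k}
    (hf : ∀ u, G.Adj r u → c u ≠ f) : IsKempeUnion G c (c r) f {r} where
  color_mem := by simp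
  closed := by
    rintro v rfl u huv (h | h)
    · exact absurd h.symm (hc huv)
    · exact absurd h (hf u huv)

end IsKempeUnion

namespace KempeMove

theorem symm (h : KempeMove G F c c') : KempeMove G F c' c := by
  obtain ⟨a, b, S, hF, hS, rfl⟩ := h
  exact ⟨a, b, S, hF, hS.of_swapOn S, (swapOn_swapOn c a b S).symm⟩

theorem isProperColoring (h : KempeMove G F c c') (hc : IsProperColoring G k c) :
    IsProperColoring G k c' := by
  obtain ⟨a, b, S, -, hS, rfl⟩ := h
  exact hS.isProperColoring_swapOn hc

theorem eqOn (h : KempeMove G F c c') : Set.EqOn c' c F := by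
  obtain ⟨a, b, S, hF, -, rfl⟩ := h
  exact fun v hv => swapOn_of_notMem (Set.disjoint_right.1 hF hv)

theorem mono (h : KempeMove G F c c') (hF : F' ⊆ F) : KempeMove G F' c c' := by
  obtain ⟨a, b, S, hSF, hS⟩ := h
  exact ⟨a, b, S, hSF.mono_right hF, hS⟩

theorem update (hc : IsProperColoring G k c) {r : V} (hr : r ∉ F) {f : Fin k}
    (hf : ∀ u, G.Adj r u → c u ≠ f) : KempeMove G F c (Function.update c r f) := by
  refine ⟨c r, f, {r}, by simpa using hr, .singleton hc hf, ?_⟩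
  funext v
  rcases eq_or_ne v r with rfl | hv
  · simp [swapOn]
  · simp [swapOn, hv]

theorem equivFixing (h : KempeMove G F c c') : KempeEquivFixing G F c c' :=
  Relation.ReflTransGen.single h

end KempeMove

namespace KempeEquivFixing

@[refl]
protected theorem refl (c : V → Fin k) : KempeEquivFixing G F c c :=
  Relation.ReflTransGen.refl

theorem symm (h : KempeEquivFixing G F c c') : KempeEquivFixing G F c' c := by
  induction h with
  | refl => rfl
  | tail _ h ih => exact ih.head h.symm

theorem trans (h : KempeEquivFixing G F c c') (h' : KempeEquivFixing G F c' c'') :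
    KempeEquivFixing G F c c'' :=
  Relation.ReflTransGen.trans h h'

theorem isProperColoring (h : KempeEquivFixing G F c c') (hc : IsProperColoring G k c) :
    IsProperColoring G k c' := by
  induction h with
  | refl => exact hc
  | tail _ h ih => exact h.isProperColoring ih

theorem eqOn (h : KempeEquivFixing G F c c') : Set.EqOn c' c F := by
  induction h with
  | refl => exact Set.eqOn_refl _ _
  | tail _ h ih => exact h.eqOn.trans ih

theorem mono (h : KempeEquivFixing G F c c') (hF : F' ⊆ F) : KempeEquivFixing G F' c c' :=
  Relation.ReflTransGen.mono (fun _ _ h' => h'.mono hF) _ _ h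

theorem unfrozen (h : KempeEquivFixing G F c c') : KempeEquivFixing G ∅ c c' :=
  h.mono (Set.empty_subset F)

theorem perm_comp (G : SimpleGraph V) (σ : Equiv.Perm (Fin k)) (c : V → Fin k) :
    KempeEquivFixing G ∅ c (σ ∘ c) := by
  induction σ using Equiv.Perm.swap_induction_on with
  | one => rfl
  | swap_mul σ x y _ ih =>
    refine ih.trans (KempeMove.equivFixing ⟨x, y, {v | σ (c v) = x ∨ σ (c v) = y}, by simp,
      ⟨fun v hv => hv, fun _ _ _ _ hu => hu⟩, ?_⟩)
    funext v
    by_cases hv : σ (c v) = x ∨ σ (c v) = y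
    · simp [swapOn, hv]
    · obtain ⟨hx, hy⟩ := not_or.1 hv
      simp [swapOn, hv, Equiv.swap_apply_of_ne_of_ne hx hy]

end KempeEquivFixing

/-- The Kempe chain of `r` for the colours `a` and `b`. If `r` itself has another colour, this
is `r` together with the chains meeting its neighbourhood. -/
def kempeChain (G : SimpleGraph V) (c : V → Fin k) (a b : Fin k) (r : V) : Set V :=
  {v | Relation.ReflTransGen (fun x y => G.Adj x y ∧ (c y = a ∨ c y = b)) r v}

theorem self_mem_kempeChain (r : V) : r ∈ kempeChain G c a b r :=
  Relation.ReflTransGen.refl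

theorem mem_kempeChain_of_adj {r u v : V} (hv : v ∈ kempeChain G c a b r) (huv : G.Adj v u)
    (hu : c u = a ∨ c u = b) : u ∈ kempeChain G c a b r :=
  Relation.ReflTransGen.tail hv ⟨huv, hu⟩

theorem kempeChain_subset {r : V} (hr : r ∈ S)
    (hS : ∀ v ∈ S, ∀ u, G.Adj v u → c u = a ∨ c u = b → u ∈ S) : kempeChain G c a b r ⊆ S := by
  intro v hv
  induction hv with
  | refl => exact hr
  | tail _ h ih => exact hS _ ih _ h.1 h.2

theorem isKempeUnion_kempeChain {r : V} (hr : c r = a ∨ c r = b) :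
    IsKempeUnion G c a b (kempeChain G c a b r) where
  color_mem _ hv := kempeChain_subset (S := {v | c v = a ∨ c v = b}) hr (fun _ _ _ _ hu => hu) hv
  closed _ hv _ huv hu := mem_kempeChain_of_adj hv huv hu

theorem mem_kempeChain_iff_reachable {r v : V} (hr : c r = a ∨ c r = b) (hv : c v = a ∨ c v = b) :
    v ∈ kempeChain G c a b r ↔
      (G.induce {x : V | c x = a ∨ c x = b}).Reachable ⟨r, hr⟩ ⟨v, hv⟩ := by
  set H := G.induce {x : V | c x = a ∨ c x = b}
  constructor
  · intro h
    suffices ∃ hv, H.Reachable ⟨r, hr⟩ ⟨v, hv⟩ from this.2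
    refine kempeChain_subset (S := {v | ∃ hv, H.Reachable ⟨r, hr⟩ ⟨v, hv⟩}) ⟨hr, .rfl⟩ ?_ h
    rintro x ⟨hx, hrx⟩ y hxy hy
    have hadj : H.Adj ⟨x, hx⟩ ⟨y, hy⟩ := hxy
    exact ⟨hy, hrx.trans hadj.reachable⟩
  · rintro ⟨p⟩
    suffices ∀ {x y} (_ : H.Walk x y), x.1 ∈ kempeChain G c a b r → y.1 ∈ kempeChain G c a b r from
      this p (self_mem_kempeChain r)
    intro x y p
    induction p with
    | nil => exact id
    | @cons _ z _ hxz _ ih => exact fun hx => ih (mem_kempeChain_of_adj hx hxz z.2)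

theorem kempeStep_swapOn_kempeChain {r : V} (hr : c r = a ∨ c r = b) :
    KempeStep G k c (swapOn c a b (kempeChain G c a b r)) := by
  refine ⟨a, b, ⟨r, hr⟩, fun v => ?_⟩
  split_ifs with hv hrv
  · exact swapOn_of_mem ((mem_kempeChain_iff_reachable hr hv).2 hrv)
  · exact swapOn_of_notMem fun h => hrv ((mem_kempeChain_iff_reachable hr hv).1 h)
  · obtain ⟨ha, hb⟩ := not_or.1 hv
    exact swapOn_of_ne ha hb

theorem IsKempeUnion.kempeEquiv_swapOn [Finite V] (hS : IsKempeUnion G c a b S) :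
    KempeEquiv G k c (swapOn c a b S) := by
  induction hn : S.ncard using Nat.strong_induction_on generalizing S c with
  | _ n ih =>
    rcases S.eq_empty_or_nonempty with rfl | ⟨r, hr⟩
    · have hid : swapOn c a b ∅ = c := funext fun v => swapOn_of_notMem (Set.notMem_empty v)
      exact hid.symm ▸ .refl
    have hcr := hS.color_mem r hr
    have hsub : kempeChain G c a b r ⊆ S := kempeChain_subset hr hS.closed
    have hlt : (S \ kempeChain G c a b r).ncard < n := hn ▸ Set.ncard_lt_ncard
      ⟨Set.sdiff_subset, fun h => (h hr).2 (self_mem_kempeChain r)⟩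
    rw [← swapOn_swapOn_sdiff hsub]
    exact .head (kempeStep_swapOn_kempeChain hcr)
      (ih _ hlt ((hS.sdiff (isKempeUnion_kempeChain hcr)).of_swapOn _) rfl)

theorem KempeEquivFixing.kempeEquiv [Finite V] (h : KempeEquivFixing G F c c') :
    KempeEquiv G k c c' := by
  induction h with
  | refl => exact .refl
  | tail _ h ih =>
    obtain ⟨a, b, S, -, hS, rfl⟩ := h
    exact ih.trans hS.kempeEquiv_swapOn

end KempeCalculus

section Slack

/-- The graph obtained from `G` by deleting all edges that meet `X`; the vertices of `X` are kept,
so that colourings of `G` and of `isolate G X` live on the same type. -/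
def isolate (G : SimpleGraph V) (X : Set V) : SimpleGraph V where
  Adj u v := G.Adj u v ∧ u ∉ X ∧ v ∉ X
  symm := ⟨fun _ _ h => ⟨h.1.symm, h.2.2, h.2.1⟩⟩
  loopless := ⟨fun _ h => h.1.ne rfl⟩

variable {G : SimpleGraph V} {k : ℕ} {F S X : Set V} {a b : Fin k} {α β c c' d : V → Fin k} {r : V}

theorem isolate_le : isolate G X ≤ G :=
  fun _ _ h => h.1

theorem IsProperColoring.anti {H : SimpleGraph V} (hc : IsProperColoring G k c) (h : H ≤ G) :
    IsProperColoring H k c :=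
  fun _ _ huv => hc (h huv)

theorem isProperColoring_isolate_iff :
    IsProperColoring (isolate G {r}) k c ↔ ∀ u v, u ≠ r → v ≠ r → G.Adj u v → c u ≠ c v :=
  ⟨fun h _ _ hu hv huv => h ⟨huv, hu, hv⟩, fun h _ _ huv => h _ _ huv.2.1 huv.2.2 huv.1⟩

theorem IsProperColoring.update (hc : IsProperColoring (isolate G {r}) k c) {f : Fin k}
    (hf : ∀ u, G.Adj r u → c u ≠ f) : IsProperColoring G k (Function.update c r f) := by
  intro u v huv
  rcases eq_or_ne u r with rfl | hu
  · simpa [huv.ne'] using (hf v huv).symm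
  rcases eq_or_ne v r with rfl | hv
  · simpa [huv.ne] using hf u huv.symm
  · simpa [hu, hv] using hc ⟨huv, hu, hv⟩

theorem IsProperColoring.update_isolate (hc : IsProperColoring G k c) (f : Fin k) :
    IsProperColoring (isolate G {r}) k (Function.update c r f) := by
  refine isProperColoring_isolate_iff.2 fun u v hu hv huv => ?_
  simpa [hu, hv] using hc huv

theorem exists_color_notMem {s : Set (Fin k)} (h : s.ncard < k) : ∃ f, f ∉ s := by
  by_contra! hs
  simp [Set.eq_univ_of_forall hs] at h

namespace IsKempeUnion

theorem of_isolate (hS : IsKempeUnion (isolate G {r}) c a b S) (hr : r ∉ S)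
    (hcc : Set.EqOn c' c {r}ᶜ) (hrS : ∀ v ∈ S, G.Adj r v → ¬(c' r = a ∨ c' r = b)) :
    IsKempeUnion G c' a b S where
  color_mem v hv := hcc (ne_of_mem_of_not_mem hv hr) ▸ hS.color_mem v hv
  closed v hv u huv hu := by
    rcases eq_or_ne u r with rfl | hur
    · exact absurd hu (hrS v hv huv.symm)
    · exact hS.closed v hv u ⟨huv, ne_of_mem_of_not_mem hv hr, hur⟩ (hcc hur ▸ hu)

theorem insert_of_isolate (hS : IsKempeUnion (isolate G {r}) c a b S) (hr : r ∉ S)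
    (hcc : Set.EqOn c' c {r}ᶜ) (hcr : c' r = a ∨ c' r = b)
    (hrS : ∀ u, G.Adj r u → c' u = a ∨ c' u = b → u ∈ S) :
    IsKempeUnion G c' a b (insert r S) where
  color_mem := by
    rintro v (rfl | hv)
    · exact hcr
    · exact hcc (ne_of_mem_of_not_mem hv hr) ▸ hS.color_mem v hv
  closed := by
    rintro v (rfl | hv) u huv hu
    · exact Or.inr (hrS u huv hu)
    · rcases eq_or_ne u r with rfl | hur
      · exact Set.mem_insert u S
      · exact Or.inr (hS.closed v hv u ⟨huv, ne_of_mem_of_not_mem hv hr, hur⟩ (hcc hur ▸ hu))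

end IsKempeUnion

/-- The number of constraints at `v` when the vertices of `F` are precoloured by `α`: the
precoloured neighbours are counted once per colour, the other neighbours individually. -/
noncomputable def weight (G : SimpleGraph V) (F : Set V) (α : V → Fin k) (v : V) : ℕ :=
  (α '' (G.neighborSet v ∩ F)).ncard + (G.neighborSet v \ F).ncard

/-- Slack of a precolouring `α` of `F`: no other vertex has more than `k` constraints, and every
component of `G - F` contains a vertex with fewer than `k`. -/
structure Slack (G : SimpleGraph V) (F : Set V) (α : V → Fin k) : Prop where
  le : ∀ v ∉ F, weight G F α v ≤ k
  exists_lt : ∀ T : Set V, T.Nonempty → Disjoint T F →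
    (∀ v ∈ T, ∀ u, G.Adj v u → u ∉ F → u ∈ T) → ∃ r ∈ T, weight G F α r < k

theorem weight_congr (h : Set.EqOn α β F) (v : V) : weight G F α v = weight G F β v := by
  rw [weight, weight, (h.mono Set.inter_subset_right).image_eq]

theorem Slack.exists_weight_lt (h : Slack G F α) (hF : F ≠ Set.univ) :
    ∃ r ∉ F, weight G F α r < k :=
  h.exists_lt Fᶜ (Set.nonempty_compl.2 hF) disjoint_compl_left fun _ _ _ _ hu => hu

variable [Finite V]

theorem weight_isolate_add (hr : r ∉ F) {v : V} (hv : v ≠ r) :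
    weight (isolate G {r}) (insert r F) α v + (if G.Adj v r then 1 else 0) = weight G F α v := by
  have hin : (isolate G {r}).neighborSet v ∩ insert r F = G.neighborSet v ∩ F := by
    ext u
    rcases eq_or_ne u r with rfl | hu <;> simp [isolate, *]
  have hout : (isolate G {r}).neighborSet v \ insert r F = (G.neighborSet v \ F) \ {r} := by
    ext u
    rcases eq_or_ne u r with rfl | hu <;> simp [isolate, *]
  rw [weight, weight, hin, hout, add_assoc]
  congr 1
  split_ifs with h
  · exact Set.ncard_sdiff_singleton_add_one ⟨h, hr⟩
  · rw [Set.sdiff_singleton_eq_self fun hrv => h hrv.1, add_zero]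

theorem ncard_image_neighborSet_le_weight (v : V) :
    (c '' G.neighborSet v).ncard ≤ weight G F c v := by
  rw [← Set.inter_union_sdiff (G.neighborSet v) F, Set.image_union, weight]
  exact (Set.ncard_union_le _ _).trans (Nat.add_le_add_left Set.ncard_image_le _)

theorem ncard_image_neighborSet_lt_weight {v s t : V} (hs : G.Adj v s) (hsF : s ∉ F)
    (ht : G.Adj v t) (hst : s ≠ t) (hc : c s = c t) :
    (c '' G.neighborSet v).ncard < weight G F c v := by
  have himage : c '' G.neighborSet v ⊆
      c '' (G.neighborSet v ∩ F) ∪ c '' ((G.neighborSet v \ F) \ {s}) := by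
    rw [← Set.image_union]
    rintro _ ⟨u, hu, rfl⟩
    rcases eq_or_ne u s with rfl | hus
    · refine ⟨t, ?_, hc.symm⟩
      by_cases htF : t ∈ F <;> simp [ht, htF, hst.symm]
    · refine ⟨u, ?_, rfl⟩
      by_cases huF : u ∈ F <;> simp [huF, hus, show G.Adj v u from hu]
  refine (Set.ncard_le_ncard himage).trans_lt ((Set.ncard_union_le _ _).trans_lt ?_)
  refine Nat.add_lt_add_left ((Set.ncard_image_le (Set.toFinite _)).trans_lt ?_) _
  exact Set.ncard_sdiff_singleton_lt_of_mem ⟨hs, hsF⟩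

theorem exists_free_color (h : weight G F c r < k) : ∃ f, ∀ u, G.Adj r u → c u ≠ f := by
  obtain ⟨f, hf⟩ := exists_color_notMem ((ncard_image_neighborSet_le_weight r).trans_lt h)
  exact ⟨f, fun u hu hcu => hf ⟨u, hu, hcu⟩⟩

theorem exists_free_color_ne (h : weight G F c r < k) {s t : V} (hs : G.Adj r s) (hsF : s ∉ F)
    (ht : G.Adj r t) (hst : s ≠ t) (hc : c s = c t) :
    ∃ f ≠ c r, ∀ u, G.Adj r u → c u ≠ f := by
  have hlt := ncard_image_neighborSet_lt_weight hs hsF ht hst hc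
  obtain ⟨f, hf⟩ := exists_color_notMem (s := insert (c r) (c '' G.neighborSet r))
    ((Set.ncard_insert_le _ _).trans_lt (by lia))
  rw [Set.mem_insert_iff, not_or] at hf
  exact ⟨f, hf.1, fun u hu hcu => hf.2 ⟨u, hu, hcu⟩⟩

-- Only a vertex `r` joining a swapped to an unswapped chain obstructs the lift. Then two
-- neighbours of `r` share a colour, so `r` can first be moved to a third colour.
theorem KempeMove.exists_lift (h : KempeMove (isolate G {r}) (insert r F) c d) (hr : r ∉ F)
    (hc' : IsProperColoring G k c') (hw : weight G F c' r < k) (hcc : Set.EqOn c' c {r}ᶜ) :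
    ∃ d', KempeEquivFixing G F c' d' ∧ Set.EqOn d' d {r}ᶜ := by
  obtain ⟨a, b, S, hSF, hS, rfl⟩ := h
  obtain ⟨hrS, hSF⟩ := Set.disjoint_insert_right.1 hSF
  by_cases hleave : ∀ v ∈ S, G.Adj r v → ¬(c' r = a ∨ c' r = b)
  · refine ⟨_, ((hS.of_isolate hrS hcc hleave).kempeMove hSF).equivFixing, fun v hv => ?_⟩
    simp only [swapOn, hcc hv]
  push Not at hleave
  obtain ⟨s, hsS, hrs, hcr⟩ := hleave
  by_cases htake : ∀ u, G.Adj r u → c' u = a ∨ c' u = b → u ∈ S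
  · refine ⟨_, ((hS.insert_of_isolate hrS hcc hcr htake).kempeMove
      (Set.disjoint_insert_left.2 ⟨hr, hSF⟩)).equivFixing, fun v hv => ?_⟩
    simp only [swapOn, hcc hv, Set.mem_insert_iff, or_iff_right (show v ≠ r from hv)]
  push Not at htake
  obtain ⟨t, hrt, hct, htS⟩ := htake
  have hcs : c' s = a ∨ c' s = b :=
    hcc (ne_of_mem_of_not_mem hsS hrS) ▸ hS.color_mem s hsS
  have hst : c' s = c' t := by grind [hc' hrs, hc' hrt]
  obtain ⟨f, hfr, hf⟩ := exists_free_color_ne hw hrs (Set.disjoint_left.1 hSF hsS) hrt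
    (ne_of_mem_of_not_mem hsS htS) hst
  have hfab : ¬(f = a ∨ f = b) := by grind [hc' hrs, hf s hrs]
  have hcc' : Set.EqOn (Function.update c' r f) c {r}ᶜ := fun v hv => by
    rw [Function.update_of_ne hv, hcc hv]
  have hS' := hS.of_isolate (c' := Function.update c' r f) hrS hcc' fun _ _ _ => by simpa using hfab
  refine ⟨_, (KempeMove.update hc' hr hf).equivFixing.trans (hS'.kempeMove hSF).equivFixing,
    fun v hv => ?_⟩
  simp only [swapOn, hcc' hv]

theorem KempeEquivFixing.exists_lift (h : KempeEquivFixing (isolate G {r}) (insert r F) c d)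
    (hr : r ∉ F) (hc : IsProperColoring G k c) (hw : weight G F c r < k) :
    ∃ d', KempeEquivFixing G F c d' ∧ Set.EqOn d' d {r}ᶜ := by
  induction h with
  | refl => exact ⟨c, .refl c, Set.eqOn_refl c _⟩
  | tail _ h ih =>
    obtain ⟨e, hce, heq⟩ := ih
    obtain ⟨d', hed, hd⟩ :=
      h.exists_lift hr (hce.isProperColoring hc) (weight_congr hce.eqOn r ▸ hw) heq
    exact ⟨d', hce.trans hed, hd⟩

namespace Slack

theorem isolate (h : Slack G F α) (hr : r ∉ F) : Slack (isolate G {r}) (insert r F) α where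
  le v hv := by
    rw [Set.mem_insert_iff, not_or] at hv
    have := weight_isolate_add (G := G) (α := α) hr hv.1
    have := h.le v hv.2
    lia
  exists_lt T hT hTF hcl := by
    obtain ⟨hrT, hTF⟩ := Set.disjoint_insert_right.1 hTF
    have hweight {v : V} (hv : v ∈ T) :=
      weight_isolate_add (G := G) (α := α) hr (ne_of_mem_of_not_mem hv hrT)
    by_cases hadj : ∃ v ∈ T, G.Adj v r
    · obtain ⟨v, hv, hvr⟩ := hadj
      have := h.le v (Set.disjoint_left.1 hTF hv)
      have := hweight hv
      rw [if_pos hvr] at this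
      exact ⟨v, hv, by lia⟩
    · push Not at hadj
      obtain ⟨v, hv, hlt⟩ := h.exists_lt T hT hTF fun v hv u huv hu => by
        have hur : u ≠ r := fun hur => hadj v hv (hur ▸ huv)
        exact hcl v hv u ⟨huv, ne_of_mem_of_not_mem hv hrT, hur⟩ (by simp [hur, hu])
      exact ⟨v, hv, (Nat.le_add_right _ _).trans_lt (hweight hv ▸ hlt)⟩

theorem kempeEquivFixing (h : Slack G F α) (hα : IsProperColoring G k α)
    (hβ : IsProperColoring G k β) (hαβ : Set.EqOn β α F) : KempeEquivFixing G F α β := by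
  induction hn : Fᶜ.ncard using Nat.strong_induction_on generalizing G F β with
  | _ n ih =>
  by_cases hF : F = Set.univ
  · rw [show β = α from funext fun v => hαβ (hF ▸ Set.mem_univ v)]
  obtain ⟨r, hr, hw⟩ := h.exists_weight_lt hF
  have hlt : (insert r F)ᶜ.ncard < n := hn ▸ Set.ncard_lt_ncard
    ⟨Set.compl_subset_compl.2 (Set.subset_insert r F), fun hsub => hsub hr (Set.mem_insert r F)⟩
  have hagree : Set.EqOn (Function.update β r (α r)) α (insert r F) := by
    rintro v (rfl | hv)
    · simp
    · rw [Function.update_of_ne (ne_of_mem_of_not_mem hv hr), hαβ hv]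
  obtain ⟨c, hαc, hc⟩ := (ih _ hlt (h.isolate hr) (hα.anti isolate_le)
    (hβ.update_isolate _) hagree rfl).exists_lift hr hα hw
  have hcβ : Set.EqOn c β {r}ᶜ := fun v hv => by rw [hc hv, Function.update_of_ne hv]
  have hupdate : Function.update c r (β r) = β := funext fun v => by
    rcases eq_or_ne v r with rfl | hv
    · simp
    · rw [Function.update_of_ne hv, hcβ hv]
  refine hαc.trans (hupdate ▸ KempeMove.equivFixing ?_)
  exact KempeMove.update (hαc.isProperColoring hα) hr fun u hu => by
    rw [hcβ hu.ne']
    exact (hβ hu).symm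

theorem exists_isProperColoring (h : Slack G F α)
    (hα : ∀ u ∈ F, ∀ v ∈ F, G.Adj u v → α u ≠ α v) :
    ∃ β, IsProperColoring G k β ∧ Set.EqOn β α F := by
  induction hn : Fᶜ.ncard using Nat.strong_induction_on generalizing G F with
  | _ n ih =>
  by_cases hF : F = Set.univ
  · exact ⟨α, fun u v huv => hα u (hF ▸ Set.mem_univ u) v (hF ▸ Set.mem_univ v) huv,
      Set.eqOn_refl α F⟩
  obtain ⟨r, hr, hw⟩ := h.exists_weight_lt hF
  have hlt : (insert r F)ᶜ.ncard < n := hn ▸ Set.ncard_lt_ncard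
    ⟨Set.compl_subset_compl.2 (Set.subset_insert r F), fun hsub => hsub hr (Set.mem_insert r F)⟩
  obtain ⟨β, hβ, hβα⟩ := ih _ hlt (h.isolate hr) (fun u hu v hv huv =>
    hα u (Set.mem_of_mem_insert_of_ne hu huv.2.1) v
      (Set.mem_of_mem_insert_of_ne hv huv.2.2) huv.1) rfl
  have hβF : Set.EqOn β α F := hβα.mono (Set.subset_insert r F)
  obtain ⟨f, hf⟩ := exists_free_color (weight_congr hβF r ▸ hw)
  refine ⟨_, hβ.update hf, fun v hv => ?_⟩
  rw [Function.update_of_ne (ne_of_mem_of_not_mem hv hr), hβF hv]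

end Slack

end Slack

section CliqueCut

variable {G : SimpleGraph V} {k : ℕ} {F S T X P Q : Set V} {a b : Fin k} {c d e α β : V → Fin k}

theorem induce_preconnected_iff :
    (G.induce X).Preconnected ↔ ∀ T ⊆ X, T.Nonempty →
      (∀ v ∈ T, ∀ u ∈ X, G.Adj v u → u ∈ T) → T = X := by
  refine ⟨fun h T hTX ⟨t, ht⟩ hcl => hTX.antisymm fun v hv => ?_, fun h u v => ?_⟩
  · obtain ⟨p⟩ := h ⟨t, hTX ht⟩ ⟨v, hv⟩
    by_contra hvT
    obtain ⟨e, -, he, he'⟩ := p.exists_boundary_dart {x | x.1 ∈ T} ht hvT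
    exact he' (hcl _ he _ e.snd.2 e.adj)
  · have hcl : {x | ∃ hx, (G.induce X).Reachable u ⟨x, hx⟩} = X := by
      refine h _ (fun x hx => hx.1) ⟨u, u.2, .rfl⟩ ?_
      rintro x ⟨hx, hux⟩ y hy hxy
      have hadj : (G.induce X).Adj ⟨x, hx⟩ ⟨y, hy⟩ := hxy
      exact ⟨hy, hux.trans hadj.reachable⟩
    exact (hcl.ge v.2).2

theorem eq_univ_of_adj_closed (h : G.Preconnected) (hT : T.Nonempty)
    (hcl : ∀ v ∈ T, ∀ u, G.Adj v u → u ∈ T) : T = Set.univ := by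
  refine Set.eq_univ_of_forall fun v => ?_
  by_contra hv
  obtain ⟨t, ht⟩ := hT
  obtain ⟨p⟩ := h t v
  obtain ⟨e, -, he, he'⟩ := p.exists_boundary_dart T ht hv
  exact he' (hcl _ he _ e.adj)

theorem weight_le_ncard_neighborSet [Finite V] (G : SimpleGraph V) (F : Set V) (α : V → Fin k)
    (v : V) : weight G F α v ≤ (G.neighborSet v).ncard := by
  rw [weight, ← Set.ncard_inter_add_ncard_sdiff_eq_ncard (G.neighborSet v) F]
  exact Nat.add_le_add_right Set.ncard_image_le _

theorem weight_lt_ncard_neighborSet [Finite V] {v s t : V} (hs : G.Adj v s) (hsF : s ∈ F)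
    (ht : G.Adj v t) (htF : t ∈ F) (hst : s ≠ t) (hα : α s = α t) :
    weight G F α v < (G.neighborSet v).ncard := by
  rw [weight, ← Set.ncard_inter_add_ncard_sdiff_eq_ncard (G.neighborSet v) F]
  refine Nat.add_lt_add_right ((Set.ncard_image_le (Set.toFinite _)).lt_of_ne fun heq => hst ?_) _
  exact (Set.ncard_image_iff (Set.toFinite _)).1 heq ⟨hs, hsF⟩ ⟨ht, htF⟩ hα

theorem slack_isolate [Finite V] (hG : G.Preconnected)
    (hdeg : ∀ v, (G.neighborSet v).ncard ≤ k) (hF : F.Nonempty) (α : V → Fin k) :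
    Slack (isolate G F) F α where
  le v _ := (weight_le_ncard_neighborSet _ F α v).trans
    ((Set.ncard_le_ncard fun _ hu => hu.1).trans (hdeg v))
  exists_lt T hT hTF hcl := by
    by_contra! hfull
    obtain ⟨f, hf⟩ := hF
    refine Set.disjoint_right.1 hTF hf ?_
    refine (eq_univ_of_adj_closed hG hT fun v hv u huv => ?_) ▸ Set.mem_univ f
    have hvF := Set.disjoint_left.1 hTF hv
    by_cases huF : u ∈ F
    · have hlt : ((isolate G F).neighborSet v).ncard < (G.neighborSet v).ncard :=
        Set.ncard_lt_ncard ⟨fun _ hw => hw.1, fun hsub => (hsub huv).2.2 huF⟩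
      have := hfull v hv
      have := weight_le_ncard_neighborSet (isolate G F) F α v
      have := hdeg v
      lia
    · exact hcl v hv u ⟨huv, hvF, huF⟩ huF

/-- A clique separator: `P` and `Q` are separated in `G` by the clique formed by all other
vertices. -/
structure IsCliqueCut (G : SimpleGraph V) (P Q : Set V) : Prop where
  disjoint : Disjoint P Q
  nonempty_left : P.Nonempty
  nonempty_right : Q.Nonempty
  not_adj : ∀ u ∈ P, ∀ v ∈ Q, ¬ G.Adj u v
  isClique : G.IsClique (P ∪ Q)ᶜ

theorem exists_isCliqueCut {K : Set V} (hK : G.IsClique K) (h : ¬ (G.induce Kᶜ).Preconnected) :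
    ∃ P Q, IsCliqueCut G P Q := by
  rw [induce_preconnected_iff] at h
  push Not at h
  obtain ⟨P, hPK, hP, hclosed, hne⟩ := h
  refine ⟨P, Kᶜ \ P, Set.disjoint_sdiff_right, hP,
    Set.sdiff_nonempty.2 fun h => hne (hPK.antisymm h),
    fun u hu v hv huv => hv.2 (hclosed u hu v hv.1 huv), ?_⟩
  rwa [Set.union_sdiff_cancel hPK, compl_compl]

namespace IsCliqueCut

theorem symm (h : IsCliqueCut G P Q) : IsCliqueCut G Q P where
  disjoint := h.disjoint.symm
  nonempty_left := h.nonempty_right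
  nonempty_right := h.nonempty_left
  not_adj u hu v hv huv := h.not_adj v hv u hu huv.symm
  isClique := Set.union_comm P Q ▸ h.isClique

theorem isKempeUnion_of_subset (h : IsCliqueCut G P Q)
    (hS : IsKempeUnion (isolate G Q) d a b S) (hSP : S ⊆ P) (hcd : Set.EqOn c d Qᶜ) :
    IsKempeUnion G c a b S where
  color_mem v hv := hcd (Set.disjoint_left.1 h.disjoint (hSP hv)) ▸ hS.color_mem v hv
  closed v hv u huv hu := by
    have hvQ : v ∉ Q := Set.disjoint_left.1 h.disjoint (hSP hv)
    have huQ : u ∉ Q := fun huQ => h.not_adj v (hSP hv) u huQ huv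
    exact hS.closed v hv u ⟨huv, hvQ, huQ⟩ (hcd huQ ▸ hu)

-- The clique carries at most one vertex of each colour, so a chain meeting it contains all
-- of its vertices coloured `a` or `b`.
theorem isKempeUnion_union (h : IsCliqueCut G P Q) (hS : IsKempeUnion (isolate G Q) d a b S)
    (hSQ : Disjoint S Q) {w : V} (hwS : w ∈ S) (hwP : w ∉ P) (hcd : Set.EqOn c d Qᶜ) :
    {v | v ∉ P ∧ (c v = a ∨ c v = b)} ⊆ S ∪ {v | v ∈ Q ∧ (c v = a ∨ c v = b)} ∧
      IsKempeUnion G c a b (S ∪ {v | v ∈ Q ∧ (c v = a ∨ c v = b)}) := by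
  have hclosed : ∀ v ∈ S, ∀ u, G.Adj v u → c u = a ∨ c u = b → u ∉ Q → u ∈ S :=
    fun v hv u huv hu huQ =>
      hS.closed v hv u ⟨huv, Set.disjoint_left.1 hSQ hv, huQ⟩ (hcd huQ ▸ hu)
  have houtside : {v | v ∉ P ∧ (c v = a ∨ c v = b)} ⊆
      S ∪ {v | v ∈ Q ∧ (c v = a ∨ c v = b)} := by
    rintro v ⟨hvP, hv⟩
    by_cases hvQ : v ∈ Q
    · exact Or.inr ⟨hvQ, hv⟩
    rcases eq_or_ne v w with rfl | hvw
    · exact Or.inl hwS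
    · have hwK : w ∈ (P ∪ Q)ᶜ := by simp [hwP, Set.disjoint_left.1 hSQ hwS]
      exact Or.inl (hclosed w hwS v (h.isClique hwK (by simp [hvP, hvQ]) hvw.symm) hv hvQ)
  refine ⟨houtside, ?_, ?_⟩
  · rintro v (hv | hv)
    · exact hcd (Set.disjoint_left.1 hSQ hv) ▸ hS.color_mem v hv
    · exact hv.2
  · rintro v (hv | hv) u huv hu
    · by_cases huQ : u ∈ Q
      · exact Or.inr ⟨huQ, hu⟩
      · exact Or.inl (hclosed v hv u huv hu huQ)
    · exact houtside ⟨fun huP => h.not_adj u huP v hv.1 huv.symm, hu⟩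

theorem exists_lift_move (h : IsCliqueCut G P Q) (hde : KempeMove (isolate G Q) Q d e)
    (hcd : Set.EqOn c d Qᶜ) :
    ∃ (c' : V → Fin k) (σ : Equiv.Perm (Fin k)),
      KempeMove G ∅ c c' ∧ Set.EqOn c' e Qᶜ ∧ Set.EqOn c' (σ ∘ c) Pᶜ := by
  obtain ⟨a, b, S, hSQ, hS, rfl⟩ := hde
  by_cases hSP : S ⊆ P
  · refine ⟨_, 1, (h.isKempeUnion_of_subset hS hSP hcd).kempeMove (by simp), fun v hv => ?_,
      fun v hv => swapOn_of_notMem fun hvS => hv (hSP hvS)⟩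
    simp only [swapOn, hcd hv]
  obtain ⟨w, hwS, hwP⟩ := Set.not_subset.1 hSP
  obtain ⟨houtside, hunion⟩ := h.isKempeUnion_union hS hSQ hwS hwP hcd
  refine ⟨_, Equiv.swap a b, hunion.kempeMove (by simp), fun v hv => ?_, fun v hv => ?_⟩
  · simp [swapOn, hcd hv, show v ∉ Q from hv]
  · by_cases hcv : c v = a ∨ c v = b
    · exact swapOn_of_mem (houtside ⟨hv, hcv⟩)
    · obtain ⟨ha, hb⟩ := not_or.1 hcv
      rw [swapOn_of_ne ha hb, Function.comp_apply, Equiv.swap_apply_of_ne_of_ne ha hb]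

theorem exists_lift (h : IsCliqueCut G P Q) (hcd : KempeEquivFixing (isolate G Q) Q c d) :
    ∃ (c' : V → Fin k) (σ : Equiv.Perm (Fin k)),
      KempeEquivFixing G ∅ c c' ∧ Set.EqOn c' d Qᶜ ∧ Set.EqOn c' (σ ∘ c) Pᶜ := by
  induction hcd with
  | refl => exact ⟨c, 1, .refl c, Set.eqOn_refl c _, Set.eqOn_refl c _⟩
  | tail _ hmove ih =>
    obtain ⟨c₁, σ, hc, hQ, hP⟩ := ih
    obtain ⟨c₂, τ, hc', hQ', hP'⟩ := h.exists_lift_move hmove hQ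
    refine ⟨c₂, τ * σ, hc.trans hc'.equivFixing, hQ', fun v hv => ?_⟩
    rw [hP' hv, Function.comp_apply, hP hv]
    rfl

theorem kempeMove_piecewise_swap (h : IsCliqueCut G P Q)
    (hd : ∀ v ∈ (P ∪ Q)ᶜ, d v ≠ a ∧ d v ≠ b) :
    KempeMove G ∅ d (P.piecewise (Equiv.swap a b ∘ d) d) := by
  refine ⟨a, b, {v | v ∈ P ∧ (d v = a ∨ d v = b)}, by simp, ⟨fun v hv => hv.2, ?_⟩, ?_⟩
  · rintro v ⟨hv, -⟩ u huv hu
    by_contra huP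
    have huK : u ∈ (P ∪ Q)ᶜ := by
      rintro (huP' | huQ)
      · exact huP ⟨huP', hu⟩
      · exact h.not_adj v hv u huQ huv
    exact not_or.2 (hd u huK) hu
  · funext v
    by_cases hv : v ∈ P
    · by_cases hvab : d v = a ∨ d v = b
      · simp [swapOn, hv, hvab]
      · obtain ⟨ha, hb⟩ := not_or.1 hvab
        simp [swapOn_of_ne ha hb, hv, Equiv.swap_apply_of_ne_of_ne ha hb]
    · simp [swapOn, hv]

theorem kempeEquivFixing_piecewise (h : IsCliqueCut G P Q) (σ : Equiv.Perm (Fin k))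
    (c : V → Fin k) (hσ : ∀ v ∈ (P ∪ Q)ᶜ, σ (c v) = c v) :
    KempeEquivFixing G ∅ c (P.piecewise (σ ∘ c) c) := by
  induction hn : σ.support.card using Nat.strong_induction_on generalizing σ with
  | _ n ih =>
  by_cases hσ1 : σ = 1
  · rw [hσ1, Equiv.Perm.coe_one, Function.id_comp, Set.piecewise_same]
  obtain ⟨x, hx⟩ : ∃ x, σ x ≠ x := by
    by_contra! hid
    exact hσ1 (Equiv.ext hid)
  set τ := Equiv.swap x (σ x) * σ with hτ
  have hfix : ∀ v ∈ (P ∪ Q)ᶜ, c v ≠ x ∧ c v ≠ σ x := fun v hv =>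
    ⟨fun hcv => hx (hcv ▸ hσ v hv), fun hcv => hx (hcv ▸ σ.injective (hcv ▸ hσ v hv))⟩
  have hτc : ∀ v ∈ (P ∪ Q)ᶜ, τ (c v) = c v := fun v hv => by
    rw [hτ, Equiv.Perm.mul_apply, hσ v hv, Equiv.swap_apply_of_ne_of_ne (hfix v hv).1 (hfix v hv).2]
  have hswap : P.piecewise (Equiv.swap x (σ x) ∘ P.piecewise (τ ∘ c) c) (P.piecewise (τ ∘ c) c) =
      P.piecewise (σ ∘ c) c := by
    funext v
    by_cases hv : v ∈ P <;> simp [hv, hτ]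
  refine (ih _ (hn ▸ Equiv.Perm.card_support_swap_mul hx) τ hτc rfl).trans
    (hswap ▸ (h.kempeMove_piecewise_swap fun v hv => ?_).equivFixing)
  rw [Set.piecewise_eq_of_notMem _ _ _ fun hvP => hv (Or.inl hvP)]
  exact hfix v hv

variable [Finite V]

theorem exists_equiv_eqOn_compl (h : IsCliqueCut G P Q) (hG : G.Preconnected)
    (hdeg : ∀ v, (G.neighborSet v).ncard ≤ k) (hα : IsProperColoring G k α)
    (hβ : IsProperColoring G k β) :
    ∃ (α' : V → Fin k) (σ : Equiv.Perm (Fin k)),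
      KempeEquivFixing G ∅ α α' ∧ Set.EqOn α' β Qᶜ ∧ Set.EqOn α' (σ ∘ α) Pᶜ := by
  have hproper : IsProperColoring (isolate G Q) k (Q.piecewise α β) := fun u v huv => by
    simpa [huv.2.1, huv.2.2] using hβ huv.1
  obtain ⟨α', σ, hα', hQ, hP⟩ := h.exists_lift
    ((slack_isolate hG hdeg h.nonempty_right α).kempeEquivFixing (hα.anti isolate_le) hproper
      (Set.piecewise_eqOn Q α β))
  exact ⟨α', σ, hα', hQ.trans (Set.piecewise_eqOn_compl Q α β), hP⟩

theorem kempeEquivFixing (h : IsCliqueCut G P Q) (hG : G.Preconnected)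
    (hdeg : ∀ v, (G.neighborSet v).ncard ≤ k) (hα : IsProperColoring G k α)
    (hβ : IsProperColoring G k β) : KempeEquivFixing G ∅ α β := by
  obtain ⟨α₁, -, hα₁, hQ₁, -⟩ := h.exists_equiv_eqOn_compl hG hdeg hα hβ
  obtain ⟨α₂, σ, hα₂, hP₂, hQ₂⟩ :=
    h.symm.exists_equiv_eqOn_compl hG hdeg (hα₁.isProperColoring hα) hβ
  have hσ : ∀ v ∈ Qᶜ, α₂ v = σ (β v) := fun v hv => by
    rw [hQ₂ hv, Function.comp_apply, hQ₁ hv]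
  have hα₂β : α₂ = P.piecewise (σ ∘ β) β := funext fun v => by
    by_cases hv : v ∈ P
    · rw [Set.piecewise_eq_of_mem _ _ _ hv, hσ v (Set.disjoint_left.1 h.disjoint hv)]
      rfl
    · rw [Set.piecewise_eq_of_notMem _ _ _ hv, hP₂ hv]
  refine (hα₁.trans hα₂).trans (hα₂β ▸ (h.kempeEquivFixing_piecewise σ β fun v hv => ?_).symm)
  rw [Set.mem_compl_iff, Set.mem_union, not_or] at hv
  rw [← hσ v hv.2, hP₂ hv.1]

end IsCliqueCut

end CliqueCut

section Fragments

variable {G : SimpleGraph V} {D R X : Set V} {s x y : V}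

theorem ncard_pair_le (x y : V) : ({x, y} : Set V).ncard ≤ 2 :=
  (Set.ncard_insert_le x {y}).trans (by rw [Set.ncard_singleton])

/-- The vertices outside `D` that have a neighbour in `D`. -/
def vertexBoundary (G : SimpleGraph V) (D : Set V) : Set V :=
  {u | u ∉ D ∧ ∃ v ∈ D, G.Adj v u}

/-- A fragment: a nonempty set of vertices separated from at least one further vertex by a
boundary of at most two vertices. -/
structure IsFragment (G : SimpleGraph V) (D : Set V) : Prop where
  nonempty : D.Nonempty
  ncard_boundary_le : (vertexBoundary G D).ncard ≤ 2
  ne_univ : D ∪ vertexBoundary G D ≠ Set.univ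

/-- A union of components of `G - {s, y}`. -/
structure IsSide (G : SimpleGraph V) (s y : V) (R : Set V) : Prop where
  nonempty : R.Nonempty
  notMem_left : s ∉ R
  notMem_right : y ∉ R
  boundary_subset : vertexBoundary G R ⊆ {s, y}

theorem vertexBoundary_subset_compl : vertexBoundary G D ⊆ Dᶜ :=
  fun _ hu => hu.1

theorem mem_union_vertexBoundary {u v : V} (hv : v ∈ D) (huv : G.Adj v u) :
    u ∈ D ∪ vertexBoundary G D :=
  or_iff_not_imp_left.2 fun hu => ⟨hu, v, hv, huv⟩

theorem eq_compl_of_vertexBoundary_subset (hG : (G.induce Xᶜ).Preconnected) (hD : D.Nonempty)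
    (hDX : Disjoint D X) (hb : vertexBoundary G D ⊆ X) : D = Xᶜ :=
  induce_preconnected_iff.1 hG D (Set.subset_compl_iff_disjoint_right.2 hDX) hD
    fun _ hv _ hu huv => (mem_union_vertexBoundary hv huv).resolve_right fun h => hu (hb h)

theorem exists_isSide (h : ¬(G.induce {s, y}ᶜ).Preconnected) :
    ∃ P Q, IsSide G s y P ∧ IsSide G s y Q ∧ Disjoint P Q ∧ P ∪ Q = {s, y}ᶜ := by
  rw [induce_preconnected_iff] at h
  push Not at h
  obtain ⟨P, hPX, hP, hcl, hne⟩ := h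
  refine ⟨P, {s, y}ᶜ \ P, ⟨hP, fun hs => hPX hs (by simp), fun hy => hPX hy (by simp), ?_⟩,
    ⟨?_, by simp, by simp, ?_⟩, Set.disjoint_sdiff_right, Set.union_sdiff_cancel hPX⟩
  · rintro u ⟨huP, v, hv, huv⟩
    by_contra hu
    exact huP (hcl v hv u hu huv)
  · exact Set.sdiff_nonempty.2 fun hsub => hne (hPX.antisymm hsub)
  · rintro u ⟨hu, v, ⟨hv, hvP⟩, huv⟩
    by_contra hus
    exact hu ⟨hus, fun huP => hvP (hcl u huP v hv huv.symm)⟩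

variable [Finite V]

theorem ncard_vertexBoundary_inter_add_union_le (G : SimpleGraph V) (D R : Set V) :
    (vertexBoundary G (D ∩ R)).ncard + (vertexBoundary G (D ∪ R)).ncard ≤
      (vertexBoundary G D).ncard + (vertexBoundary G R).ncard := by
  rw [← Set.ncard_union_add_ncard_inter,
    ← Set.ncard_union_add_ncard_inter (vertexBoundary G D)]
  refine Nat.add_le_add (Set.ncard_le_ncard ?_) (Set.ncard_le_ncard ?_)
  · rintro u (⟨hu, v, hv, huv⟩ | ⟨hu, v, hv | hv, huv⟩)
    · by_cases huD : u ∈ D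
      · exact Or.inr ⟨fun huR => hu ⟨huD, huR⟩, v, hv.2, huv⟩
      · exact Or.inl ⟨huD, v, hv.1, huv⟩
    · exact Or.inl ⟨fun huD => hu (Or.inl huD), v, hv, huv⟩
    · exact Or.inr ⟨fun huR => hu (Or.inr huR), v, hv, huv⟩
  · rintro u ⟨⟨-, v, hv, huv⟩, hu', -⟩
    exact ⟨⟨fun huD => hu' (Or.inl huD), v, hv.1, huv⟩, fun huR => hu' (Or.inr huR), v, hv.2, huv⟩

theorem compl_subset_vertexBoundary (hG : G.Preconnected)
    (hG1 : ∀ x, (G.induce {x}ᶜ).Preconnected) (hD : D.Nonempty)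
    (hb : (vertexBoundary G D).ncard ≤ 1) : Dᶜ ⊆ vertexBoundary G D := by
  rcases (Set.ncard_le_one_iff_eq (Set.toFinite _)).1 hb with hempty | ⟨x, hx⟩
  · rw [eq_univ_of_adj_closed hG hD fun v hv u huv =>
      (mem_union_vertexBoundary hv huv).resolve_right (by simp [hempty])]
    simp
  · have hxD : x ∉ D := vertexBoundary_subset_compl (hx ▸ Set.mem_singleton x)
    rw [hx, eq_compl_of_vertexBoundary_subset (hG1 x) hD (by simpa using hxD) hx.subset,
      compl_compl]

namespace IsSide

theorem ncard_boundary_le (hR : IsSide G s y R) : (vertexBoundary G R).ncard ≤ 2 :=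
  (Set.ncard_le_ncard hR.boundary_subset).trans (ncard_pair_le s y)

theorem isFragment (hR : IsSide G s y R) {Q : Set V} (hQ : IsSide G s y Q) (hRQ : Disjoint R Q) :
    IsFragment G R where
  nonempty := hR.nonempty
  ncard_boundary_le := hR.ncard_boundary_le
  ne_univ huniv := by
    obtain ⟨q, hq⟩ := hQ.nonempty
    rcases huniv.ge (Set.mem_univ q) with hqR | hqb
    · exact Set.disjoint_right.1 hRQ hq hqR
    · rcases hR.boundary_subset hqb with rfl | rfl
      exacts [hQ.notMem_left hq, hQ.notMem_right hq]

theorem one_lt_ncard (hR : IsSide G s y R) (hdeg : ∀ v, 3 ≤ (G.neighborSet v).ncard) :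
    1 < R.ncard := by
  by_contra! hle
  obtain ⟨p, hp⟩ := hR.nonempty
  have hsub : G.neighborSet p ⊆ {s, y} := fun u hu => by
    rcases mem_union_vertexBoundary hp hu with huR | hub
    · exact absurd (((Set.ncard_le_one (Set.toFinite _)).1 hle) p hp u huR) (G.ne_of_adj hu)
    · exact hR.boundary_subset hub
  have := (hdeg p).trans ((Set.ncard_le_ncard hsub).trans (ncard_pair_le s y))
  lia

theorem one_lt_ncard_inter_vertexBoundary (hR : IsSide G s y R) (hG : G.Preconnected)
    (hG1 : ∀ x, (G.induce {x}ᶜ).Preconnected) (hdeg : ∀ v, 3 ≤ (G.neighborSet v).ncard)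
    (hs : s ∈ D) (hy : y ∈ D) (hRD : Disjoint R D) : 1 < (R ∩ vertexBoundary G D).ncard := by
  by_contra! hle
  have hboundary : vertexBoundary G (R \ vertexBoundary G D) ⊆ R ∩ vertexBoundary G D := by
    rintro u ⟨hu, v, ⟨hv, hvb⟩, huv⟩
    have hvD : ∀ w ∈ D, ¬ G.Adj v w := fun w hw hvw =>
      hvb ⟨Set.disjoint_left.1 hRD hv, w, hw, hvw.symm⟩
    have huR : u ∈ R := (mem_union_vertexBoundary hv huv).resolve_right fun hub => by
      rcases hR.boundary_subset hub with rfl | rfl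
      exacts [hvD _ hs huv, hvD _ hy huv]
    exact ⟨huR, by_contra fun hub => hu ⟨huR, hub⟩⟩
  have hnonempty : (R \ vertexBoundary G D).Nonempty := by
    rw [← Set.ncard_pos]
    have := Set.ncard_inter_add_ncard_sdiff_eq_ncard R (vertexBoundary G D)
    have := hR.one_lt_ncard hdeg
    lia
  have hcompl := compl_subset_vertexBoundary hG hG1 hnonempty
    ((Set.ncard_le_ncard hboundary).trans hle)
  exact hR.notMem_left (hboundary (hcompl fun h => hR.notMem_left h.1)).1

end IsSide

namespace IsFragment

-- Uncrossing: `D ∩ R` is too small to be a fragment, so by submodularity the boundary of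
-- `D ∪ R` has at most one vertex.
theorem ncard_compl_union_le_one (hD : Minimal (IsFragment G) D) (hG : G.Preconnected)
    (hG1 : ∀ x, (G.induce {x}ᶜ).Preconnected) (hs : s ∈ D) (hR : IsSide G s y R)
    (hDR : (D ∩ R).Nonempty) : (D ∪ R)ᶜ.ncard ≤ 1 := by
  have hsub : D ∩ R ∪ vertexBoundary G (D ∩ R) ⊆ D ∪ vertexBoundary G D := by
    rintro u (hu | ⟨-, v, hv, huv⟩)
    · exact Or.inl hu.1
    · exact mem_union_vertexBoundary hv.1 huv
  have hinter : 2 < (vertexBoundary G (D ∩ R)).ncard := by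
    by_contra! hle
    have hfrag : IsFragment G (D ∩ R) :=
      ⟨hDR, hle, fun huniv => hD.prop.ne_univ (Set.univ_subset_iff.1 (huniv ▸ hsub))⟩
    exact hR.notMem_left (hD.le_of_le hfrag Set.inter_subset_left hs).2
  have hunion : (vertexBoundary G (D ∪ R)).ncard ≤ 1 := by
    have := ncard_vertexBoundary_inter_add_union_le G D R
    have := hD.prop.ncard_boundary_le
    have := hR.ncard_boundary_le
    lia
  exact (Set.ncard_le_ncard (compl_subset_vertexBoundary hG hG1 ⟨s, Or.inl hs⟩ hunion)).trans
    hunion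

theorem false_of_inter_nonempty_of_inter_nonempty (hD : Minimal (IsFragment G) D)
    (hG : G.Preconnected) (hG1 : ∀ x, (G.induce {x}ᶜ).Preconnected) (hs : s ∈ D) {P Q : Set V}
    (hP : IsSide G s y P) (hQ : IsSide G s y Q) (hPQ : Disjoint P Q) (hDP : (D ∩ P).Nonempty)
    (hDQ : (D ∩ Q).Nonempty) : False := by
  have hcompl : Dᶜ.ncard ≤ 2 := by
    have hsub : Dᶜ ⊆ (D ∪ P)ᶜ ∪ (D ∪ Q)ᶜ := fun u hu => by
      by_cases huP : u ∈ P
      · exact Or.inr (not_or.2 ⟨hu, Set.disjoint_left.1 hPQ huP⟩)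
      · exact Or.inl (not_or.2 ⟨hu, huP⟩)
    have := (Set.ncard_le_ncard hsub).trans (Set.ncard_union_le _ _)
    have := ncard_compl_union_le_one hD hG hG1 hs hP hDP
    have := ncard_compl_union_le_one hD hG hG1 hs hQ hDQ
    lia
  obtain ⟨z, hz⟩ := (Set.ne_univ_iff_exists_notMem _).1 hD.prop.ne_univ
  obtain ⟨hzD, hzb⟩ := not_or.1 hz
  have hlt : (vertexBoundary G D).ncard < Dᶜ.ncard :=
    Set.ncard_lt_ncard ⟨vertexBoundary_subset_compl, fun hsub => hzb (hsub hzD)⟩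
  exact hzb (compl_subset_vertexBoundary hG hG1 ⟨s, hs⟩ (by lia) hzD)

theorem false_of_disjoint_of_disjoint (hD : IsFragment G D) (hG : G.Preconnected)
    (hG1 : ∀ x, (G.induce {x}ᶜ).Preconnected) (hdeg : ∀ v, 3 ≤ (G.neighborSet v).ncard)
    (hs : s ∈ D) {P Q : Set V} (hP : IsSide G s y P) (hQ : IsSide G s y Q) (hPQ : Disjoint P Q)
    (hcover : P ∪ Q = {s, y}ᶜ) (hDP : Disjoint P D) (hDQ : Disjoint Q D) : False := by
  have hDsub : D ⊆ {s, y} := by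
    rw [← compl_compl ({s, y} : Set V), ← hcover, Set.subset_compl_iff_disjoint_left]
    exact hDP.union_left hDQ
  by_cases hy : y ∈ D
  · have := hP.one_lt_ncard_inter_vertexBoundary hG hG1 hdeg hs hy hDP
    have := hQ.one_lt_ncard_inter_vertexBoundary hG hG1 hdeg hs hy hDQ
    have hle := hD.ncard_boundary_le
    rw [← Set.ncard_inter_add_ncard_sdiff_eq_ncard _ P, Set.inter_comm] at hle
    have : (Q ∩ vertexBoundary G D).ncard ≤ (vertexBoundary G D \ P).ncard :=
      Set.ncard_le_ncard fun u hu => ⟨hu.2, Set.disjoint_right.1 hPQ hu.1⟩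
    lia
  · have hsub : G.neighborSet s ⊆ vertexBoundary G D := fun u hu => by
      refine (mem_union_vertexBoundary hs hu).resolve_left fun huD => ?_
      rcases hDsub huD with rfl | rfl
      exacts [G.ne_of_adj hu rfl, hy huD]
    have := (hdeg s).trans ((Set.ncard_le_ncard hsub).trans hD.ncard_boundary_le)
    lia

theorem inter_nonempty (hD : Minimal (IsFragment G) D) (hG : G.Preconnected)
    (hG1 : ∀ x, (G.induce {x}ᶜ).Preconnected) (hdeg : ∀ v, 3 ≤ (G.neighborSet v).ncard)
    (hs : s ∈ D) {P Q : Set V} (hP : IsSide G s y P) (hQ : IsSide G s y Q) (hPQ : Disjoint P Q)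
    (hDP : (D ∩ P).Nonempty) : (D ∩ Q).Nonempty := by
  by_contra hDQ
  have hsub : Q ⊆ (D ∪ P)ᶜ := fun q hq =>
    not_or.2 ⟨fun hqD => hDQ ⟨q, hqD, hq⟩, Set.disjoint_right.1 hPQ hq⟩
  have := (Set.ncard_le_ncard hsub).trans (ncard_compl_union_le_one hD hG hG1 hs hP hDP)
  have := hQ.one_lt_ncard hdeg
  lia

end IsFragment

theorem exists_preconnected_induce_pair_compl [Nonempty V] (hG : G.Preconnected)
    (hG1 : ∀ x, (G.induce {x}ᶜ).Preconnected) (hdeg : ∀ v, 3 ≤ (G.neighborSet v).ncard) :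
    ∃ s, ∀ y, (G.induce {s, y}ᶜ).Preconnected := by
  by_contra! hsep
  obtain ⟨y, hy⟩ := hsep (Classical.arbitrary V)
  obtain ⟨P, Q, hP, hQ, hPQ, -⟩ := exists_isSide hy
  obtain ⟨D, hD⟩ := exists_minimal_of_wellFoundedLT (IsFragment G) ⟨P, hP.isFragment hQ hPQ⟩
  obtain ⟨s, hs⟩ := hD.prop.nonempty
  obtain ⟨y, hy⟩ := hsep s
  obtain ⟨P, Q, hP, hQ, hPQ, hcover⟩ := exists_isSide hy
  by_cases hDP : (D ∩ P).Nonempty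
  · exact IsFragment.false_of_inter_nonempty_of_inter_nonempty hD hG hG1 hs hP hQ hPQ hDP
      (IsFragment.inter_nonempty hD hG hG1 hdeg hs hP hQ hPQ hDP)
  by_cases hDQ : (D ∩ Q).Nonempty
  · exact hDP (IsFragment.inter_nonempty hD hG hG1 hdeg hs hQ hP hPQ.symm hDQ)
  rw [Set.not_nonempty_iff_eq_empty, ← Set.disjoint_iff_inter_eq_empty] at hDP hDQ
  exact hD.prop.false_of_disjoint_of_disjoint hG hG1 hdeg hs hP hQ hPQ hcover hDP.symm hDQ.symm

end Fragments

section Brooks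

variable {G : SimpleGraph V} {k d : ℕ} {I T X : Set V} {s x y : V} {α : V → Fin k}

theorem colorable_of_isProperColoring (hα : IsProperColoring G k α) : G.Colorable k :=
  ⟨Coloring.mk α fun h => hα h⟩

theorem colorable_of_induce_insert_of_induce_compl (hx : x ∉ T)
    (hcl : ∀ v ∈ T, ∀ u, G.Adj v u → u ∈ insert x T)
    (h₁ : (G.induce (insert x T)).Colorable k) (h₂ : (G.induce Tᶜ).Colorable k) :
    G.Colorable k := by
  obtain ⟨c₁⟩ := h₁
  obtain ⟨c₂⟩ := h₂
  let x₁ : ↥(insert x T) := ⟨x, Set.mem_insert x T⟩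
  let x₂ : ↥Tᶜ := ⟨x, hx⟩
  let σ := Equiv.swap (c₁ x₁) (c₂ x₂)
  have key : ∀ u (hu : u ∈ T) w (hw : w ∉ T), G.Adj u w →
      c₁ ⟨u, Or.inr hu⟩ ≠ σ (c₂ ⟨w, hw⟩) := fun u hu w hw huw => by
    obtain rfl : w = x := (hcl u hu w huw).resolve_right hw
    rw [show σ (c₂ ⟨w, hw⟩) = c₁ x₁ from Equiv.swap_apply_right _ _]
    exact c₁.valid (v := ⟨u, Or.inr hu⟩) (w := x₁) huw
  refine ⟨Coloring.mk
    (fun v => if hv : v ∈ T then c₁ ⟨v, Or.inr hv⟩ else σ (c₂ ⟨v, hv⟩)) fun {u w} huw => ?_⟩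
  by_cases hu : u ∈ T <;> by_cases hw : w ∈ T <;> simp only [hu, hw, dif_pos, dif_neg,
    not_false_eq_true]
  · exact c₁.valid (v := ⟨u, Or.inr hu⟩) (w := ⟨w, Or.inr hw⟩) huw
  · exact key u hu w hw huw
  · exact (key w hw u hu huw.symm).symm
  · exact fun h => c₂.valid (v := ⟨u, hu⟩) (w := ⟨w, hw⟩) huw (σ.injective h)

variable [Finite V]

theorem exists_adj_adj_of_not_adj (hG : G.Preconnected)
    (hdeg : ∀ v, (G.neighborSet v).ncard = k) (hxy : ∃ x y, x ≠ y ∧ ¬ G.Adj x y) (s : V) :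
    ∃ y x, y ≠ s ∧ ¬ G.Adj s y ∧ G.Adj s x ∧ G.Adj x y := by
  by_contra! hno
  have huniv : insert s (G.neighborSet s) = Set.univ :=
    eq_univ_of_adj_closed hG ⟨s, Set.mem_insert s _⟩ fun v hv u huv => by
      rcases hv with rfl | hv
      · exact Or.inr huv
      · by_contra hu
        obtain ⟨hus, hsu⟩ := not_or.1 hu
        exact hno u v hus hsu hv huv
  obtain ⟨x, y, hne, hadj⟩ := hxy
  have hs := Set.ncard_insert_of_notMem (a := s) (s := G.neighborSet s) (by simp)
  have hx := Set.ncard_insert_of_notMem (a := x) (s := G.neighborSet x) (by simp)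
  have hlt := Set.ncard_lt_ncard (s := insert x (G.neighborSet x)) (t := Set.univ)
    (Set.ssubset_univ_iff.2 fun h =>
      (h.ge (Set.mem_univ y)).elim (fun h => hne h.symm) hadj)
  rw [← huniv, hs, hx, hdeg, hdeg] at hlt
  exact lt_irrefl _ hlt

theorem slack_pair (hdeg : ∀ v, (G.neighborSet v).ncard ≤ k)
    (hsep : (G.induce {s, y}ᶜ).Preconnected) (hys : y ≠ s) (hsx : G.Adj s x) (hxy : G.Adj x y)
    (hα : α s = α y) : Slack G {s, y} α where
  le v _ := (weight_le_ncard_neighborSet G _ α v).trans (hdeg v)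
  exists_lt T hT hTF hcl := by
    have hTX : T = {s, y}ᶜ := induce_preconnected_iff.1 hsep T
      (Set.subset_compl_iff_disjoint_right.2 hTF) hT fun v hv u hu huv => hcl v hv u huv hu
    exact ⟨x, hTX ▸ by simp [hsx.ne', hxy.ne],
      (weight_lt_ncard_neighborSet hsx.symm (.inl rfl) hxy (.inr rfl) hys.symm
        hα).trans_le (hdeg x)⟩

theorem colorable_of_ncard_neighborSet_lt (hG : G.Preconnected)
    (hdeg : ∀ v, (G.neighborSet v).ncard ≤ d) (hlt : (G.neighborSet x).ncard < d) :
    G.Colorable d := by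
  have hslack : Slack G ∅ fun _ => (⟨0, by lia⟩ : Fin d) :=
    { le v _ := (weight_le_ncard_neighborSet G _ _ v).trans (hdeg v)
      exists_lt T hT _ hcl := ⟨x,
        eq_univ_of_adj_closed hG hT (fun v hv u huv => hcl v hv u huv (Set.notMem_empty u)) ▸
          Set.mem_univ x, (weight_le_ncard_neighborSet G _ _ x).trans_lt hlt⟩ }
  obtain ⟨c, hc, -⟩ := hslack.exists_isProperColoring (by simp)
  exact colorable_of_isProperColoring hc

theorem colorable_of_preconnected_induce_pair_compl (hd : 0 < d) (hG : G.Preconnected)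
    (hdeg : ∀ v, (G.neighborSet v).ncard = d) (hxy : ∃ x y, x ≠ y ∧ ¬ G.Adj x y)
    (hsep : ∀ y, (G.induce {s, y}ᶜ).Preconnected) : G.Colorable d := by
  obtain ⟨y, x, hys, hsy, hsx, hxy⟩ := exists_adj_adj_of_not_adj hG hdeg hxy s
  obtain ⟨c, hc, -⟩ := (slack_pair (α := fun _ => (⟨0, hd⟩ : Fin d)) (fun v => (hdeg v).le)
    (hsep y) hys hsx hxy rfl).exists_isProperColoring (by
      rintro u (rfl | rfl) v (rfl | rfl) huv
      exacts [absurd huv (G.irrefl), absurd huv hsy, absurd huv.symm hsy, absurd huv (G.irrefl)])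
  exact colorable_of_isProperColoring hc

theorem exists_ne_not_adj_of_cliqueFree [Nonempty V] (hdeg : ∀ v, (G.neighborSet v).ncard = d)
    (hcl : G.CliqueFree (d + 1)) : ∃ x y, x ≠ y ∧ ¬ G.Adj x y := by
  by_contra! hadj
  let v := Classical.arbitrary V
  refine hcl (Set.toFinite (insert v (G.neighborSet v))).toFinset ⟨fun x _ y _ h => hadj x y h, ?_⟩
  rw [← Set.ncard_eq_toFinset_card, Set.ncard_insert_of_notMem (by simp), hdeg]

theorem ncard_neighborSet_induce_le (G : SimpleGraph V) (X : Set V) (v : X) :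
    ((G.induce X).neighborSet v).ncard ≤ (G.neighborSet v).ncard := by
  rw [← Set.ncard_image_of_injective _ Subtype.val_injective]
  exact Set.ncard_le_ncard (by rintro _ ⟨u, hu, rfl⟩; exact hu)

theorem brooks (hd : 3 ≤ d) (hdeg : ∀ v, (G.neighborSet v).ncard ≤ d)
    (hcl : G.CliqueFree (d + 1)) : G.Colorable d := by
  induction hn : Nat.card V using Nat.strong_induction_on generalizing V with
  | _ n ih =>
  have hsub : ∀ X : Set V, X ≠ Set.univ → (G.induce X).Colorable d := fun X hX =>
    ih (Nat.card X) (hn ▸ Nat.card_coe_set_eq X ▸ Set.ncard_univ V ▸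
      Set.ncard_lt_ncard (Set.ssubset_univ_iff.2 hX))
      (fun v => (ncard_neighborSet_induce_le G X v).trans (hdeg v))
      (hcl.comap ⟨(Embedding.induce X).toCopy⟩) rfl
  rcases isEmpty_or_nonempty V with hV | hV
  · exact .of_isEmpty d
  by_cases hG : G.Preconnected
  swap
  · refine colorable_iff_forall_connectedComponent.2 fun C => hsub _ fun hC => hG fun u v => ?_
    exact ConnectedComponent.exact ((hC.ge (Set.mem_univ u)).trans (hC.ge (Set.mem_univ v)).symm)
  by_cases hlow : ∃ v, (G.neighborSet v).ncard < d
  · obtain ⟨v, hv⟩ := hlow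
    exact colorable_of_ncard_neighborSet_lt hG hdeg hv
  push Not at hlow
  have hreg : ∀ v, (G.neighborSet v).ncard = d := fun v => (hdeg v).antisymm (hlow v)
  by_cases hG1 : ∀ x, (G.induce {x}ᶜ).Preconnected
  · obtain ⟨s, hs⟩ := exists_preconnected_induce_pair_compl hG hG1 fun v => hd.trans (hlow v)
    exact colorable_of_preconnected_induce_pair_compl (by lia) hG hreg
      (exists_ne_not_adj_of_cliqueFree hreg hcl) hs
  push Not at hG1
  obtain ⟨x, hx⟩ := hG1
  rw [induce_preconnected_iff] at hx
  push Not at hx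
  obtain ⟨T, hTx, ⟨t, ht⟩, hT, hne⟩ := hx
  refine colorable_of_induce_insert_of_induce_compl (x := x) (T := T) (fun h => hTx h rfl)
    (fun v hv u huv => or_iff_not_imp_left.2 fun hux => hT v hv u hux huv) (hsub _ fun h => hne ?_)
    (hsub _ fun h => (h.ge (Set.mem_univ t)) ht)
  exact hTx.antisymm fun v hv => (h.ge (Set.mem_univ v)).resolve_left hv

theorem exists_maximal_isIndepSet (hI : G.IsIndepSet I) :
    ∃ J, I ⊆ J ∧ G.IsIndepSet J ∧ ∀ v ∉ J, ∃ u ∈ J, G.Adj v u := by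
  obtain ⟨J, hIJ, hJ⟩ := Set.Finite.exists_le_maximal (Set.toFinite {J | G.IsIndepSet J}) hI
  refine ⟨J, hIJ, hJ.prop, fun v hv => ?_⟩
  by_contra! hno
  have hins : G.IsIndepSet (insert v J) :=
    Set.pairwise_insert.2 ⟨hJ.prop, fun u hu _ => ⟨hno u hu, fun h => hno u hu h.symm⟩⟩
  exact hv (hJ.le_of_ge hins (Set.subset_insert v J) (Set.mem_insert v J))

-- Brooks' theorem with one colour fewer applies outside a maximal independent set containing `I`.
theorem exists_isProperColoring_const_on (hk : 4 ≤ k) (hdeg : ∀ v, (G.neighborSet v).ncard ≤ k)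
    (hcl : G.CliqueFree k) (hI : G.IsIndepSet I) :
    ∃ (c : V → Fin k) (e : Fin k), IsProperColoring G k c ∧ ∀ v ∈ I, c v = e := by
  obtain ⟨J, hIJ, hJ, hmax⟩ := exists_maximal_isIndepSet hI
  obtain ⟨m, rfl⟩ : ∃ m, k = m + 1 := ⟨k - 1, by lia⟩
  have hdegJ : ∀ v, ((isolate G J).neighborSet v).ncard ≤ m := fun v => by
    by_cases hv : v ∈ J
    · rw [show (isolate G J).neighborSet v = ∅ from
        Set.eq_empty_of_forall_notMem fun u hu => hu.2.1 hv, Set.ncard_empty]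
      exact Nat.zero_le m
    · obtain ⟨u, hu, hvu⟩ := hmax v hv
      exact Nat.le_of_lt_succ ((Set.ncard_lt_ncard
        ⟨fun w hw => hw.1, fun h => (h hvu).2.2 hu⟩).trans_le (hdeg v))
  obtain ⟨c⟩ := brooks (by lia) hdegJ (hcl.anti isolate_le)
  refine ⟨fun v => if v ∈ J then Fin.last m else (c v).castSucc, Fin.last m, fun u v huv => ?_,
    fun v hv => if_pos (hIJ hv)⟩
  by_cases hu : u ∈ J <;> by_cases hv : v ∈ J <;> simp only [hu, hv, if_true, if_false]
  · exact absurd huv (hJ hu hv huv.ne)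
  · exact (Fin.castSucc_lt_last _).ne'
  · exact (Fin.castSucc_lt_last _).ne
  · exact fun h => c.valid (⟨huv, hu, hv⟩ : (isolate G J).Adj u v) (Fin.castSucc_injective _ h)

end Brooks

section Cliques

/-- `Q` is a clique with `k` vertices, each `q ∈ Q` having `u q` as its only neighbour
outside `Q`; this is what a `k`-clique of a connected non-complete `k`-regular graph looks like. -/
structure CliqueExits (G : SimpleGraph V) (k : ℕ) (Q : Set V) (u : V → V) : Prop where
  ncard_eq : Q.ncard = k
  adj_iff : ∀ q ∈ Q, ∀ w, G.Adj q w ↔ (w ∈ Q ∧ w ≠ q) ∨ w = u q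
  exit_notMem : ∀ q ∈ Q, u q ∉ Q

variable {G : SimpleGraph V} {k : ℕ} {Q S T : Set V} {u : V → V} {a b : Fin k}
  {c d α β : V → Fin k} {i j l m q v : V}

theorem exists_cliqueExits [Finite V] (hk : 0 < k) (hdeg : ∀ v, (G.neighborSet v).ncard = k)
    (hcard : Q.ncard = k) (hQ : G.IsClique Q) : ∃ u, CliqueExits G k Q u := by
  have hexit : ∀ q ∈ Q, ∃ w, G.neighborSet q \ Q = {w} := fun q hq => by
    have hinter : G.neighborSet q ∩ Q = Q \ {q} := by
      ext w
      exact ⟨fun h => ⟨h.2, h.1.ne'⟩, fun h => ⟨hQ hq h.1 (Ne.symm h.2), h.1⟩⟩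
    have hsum := Set.ncard_inter_add_ncard_sdiff_eq_ncard (G.neighborSet q) Q
    rw [hinter, Set.ncard_sdiff_singleton_of_mem hq, hcard, hdeg] at hsum
    exact Set.ncard_eq_one.1 (by lia)
  choose! u hu using hexit
  have hmem : ∀ q ∈ Q, ∀ w, G.Adj q w ∧ w ∉ Q ↔ w = u q := fun q hq w =>
    Set.ext_iff.1 (hu q hq) w
  refine ⟨u, hcard, fun q hq w => ⟨fun hw => ?_, ?_⟩, fun q hq => ((hmem q hq _).2 rfl).2⟩
  · by_cases hwQ : w ∈ Q
    · exact Or.inl ⟨hwQ, hw.ne'⟩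
    · exact Or.inr ((hmem q hq w).1 ⟨hw, hwQ⟩)
  · rintro (⟨hwQ, hwq⟩ | hw)
    · exact hQ hq hwQ hwq.symm
    · exact ((hmem q hq w).2 hw).1

namespace CliqueExits

theorem isClique (h : CliqueExits G k Q u) : G.IsClique Q :=
  fun _ hq _ hw hne => (h.adj_iff _ hq _).2 (Or.inl ⟨hw, hne.symm⟩)

theorem adj_exit (h : CliqueExits G k Q u) (hq : q ∈ Q) : G.Adj q (u q) :=
  (h.adj_iff q hq _).2 (Or.inr rfl)

theorem eq_exit (h : CliqueExits G k Q u) (hq : q ∈ Q) (hv : v ∉ Q) (hqv : G.Adj q v) :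
    v = u q :=
  ((h.adj_iff q hq v).1 hqv).resolve_left fun hvQ => hv hvQ.1

theorem injOn (h : CliqueExits G k Q u) (hc : IsProperColoring G k c) : Set.InjOn c Q :=
  fun _ hq _ hw heq => by_contra fun hne => hc (h.isClique hq hw hne) heq

theorem exists_color_eq (h : CliqueExits G k Q u) (hc : IsProperColoring G k c) (x : Fin k) :
    ∃ q ∈ Q, c q = x := by
  have huniv : c '' Q = Set.univ := Set.eq_of_subset_of_ncard_le (Set.subset_univ _)
    (by rw [(h.injOn hc).ncard_image, h.ncard_eq, Set.ncard_univ, Nat.card_fin])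
  exact huniv.ge (Set.mem_univ x)

theorem exists_mem_notMem (h : CliqueExits G k Q u) {X : Finset V} (hX : X.card < k) :
    ∃ m ∈ Q, m ∉ X :=
  Set.exists_mem_notMem_of_ncard_lt_ncard (s := (X : Set V))
    (by rwa [Set.ncard_coe_finset, h.ncard_eq]) X.finite_toSet

theorem exists_exit_color_ne (h : CliqueExits G k Q u) (hc : IsProperColoring G k c)
    (x : Fin k) : ∃ q ∈ Q, c (u q) ≠ x := by
  obtain ⟨q, hq, rfl⟩ := h.exists_color_eq hc x
  exact ⟨q, hq, (hc (h.adj_exit hq)).symm⟩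

theorem kempeMove_swapOn_pair (h : CliqueExits G k Q u) (hc : IsProperColoring G k c)
    (hi : i ∈ Q) (hj : j ∈ Q) (hij : c (u i) ≠ c j) (hji : c (u j) ≠ c i) :
    KempeMove G Qᶜ c (swapOn c (c i) (c j) {i, j}) := by
  have hQ : ∀ w ∈ Q, c w = c i ∨ c w = c j → w ∈ ({i, j} : Set V) := fun w hw hcw =>
    hcw.imp (h.injOn hc hw hi) (h.injOn hc hw hj)
  refine IsKempeUnion.kempeMove ⟨?_, ?_⟩ ?_
  · rintro v (rfl | rfl) <;> simp
  · rintro v hv w hvw hw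
    by_cases hwQ : w ∈ Q
    · exact hQ w hwQ hw
    rcases hv with rfl | rfl
    · exact absurd hw (not_or.2 ⟨(hc hvw).symm, h.eq_exit hi hwQ hvw ▸ hij⟩)
    · exact absurd hw (not_or.2 ⟨h.eq_exit hj hwQ hvw ▸ hji, (hc hvw).symm⟩)
  · rw [Set.disjoint_compl_right_iff_subset]
    rintro v (rfl | rfl) <;> assumption

theorem exists_swap (h : CliqueExits G k Q u) (hc : IsProperColoring G k c)
    (hi : i ∈ Q) (hj : j ∈ Q) (hij : c (u i) ≠ c j) (hji : c (u j) ≠ c i) :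
    ∃ d, KempeEquivFixing G Qᶜ c d ∧ d i = c j ∧ d j = c i ∧ ∀ v, v ≠ i → v ≠ j → d v = c v :=
  ⟨_, (h.kempeMove_swapOn_pair hc hi hj hij hji).equivFixing, by simp [swapOn], by simp [swapOn],
    fun v hvi hvj => swapOn_of_notMem (by simp [hvi, hvj])⟩

theorem exit_color_eq (h : CliqueExits G k Q u) (hd : KempeEquivFixing G Qᶜ c d) (hq : q ∈ Q) :
    d (u q) = c (u q) :=
  hd.eqOn (h.exit_notMem q hq)

theorem exists_equiv_color_eq_of_mem (h : CliqueExits G k Q u) (hc : IsProperColoring G k c)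
    (hi : i ∈ Q) (hl : l ∈ Q) (hm : m ∈ Q) (hli : l ≠ i) (hmi' : m ≠ i) (hml : m ≠ l)
    (hil : c (u i) ≠ c l) (him : c (u i) ≠ c m) (hmi : c (u m) ≠ c i) :
    ∃ d, KempeEquivFixing G Qᶜ c d ∧ d i = c l := by
  by_cases hui : c (u l) = c i
  · obtain ⟨d, hd, hdi, -, hdv⟩ := h.exists_swap hc hi hm him hmi
    have hdl : d l = c l := hdv l hli hml.symm
    obtain ⟨e, he, hei, -⟩ := h.exists_swap (hd.isProperColoring hc) hi hl
      (by rwa [h.exit_color_eq hd hi, hdl])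
      (by rw [h.exit_color_eq hd hl, hui, hdi]; exact (h.injOn hc).ne hi hm hmi'.symm)
    exact ⟨e, hd.trans he, hei.trans hdl⟩
  · obtain ⟨d, hd, hdi, -⟩ := h.exists_swap hc hi hl hil hui
    exact ⟨d, hd, hdi⟩

theorem color_mem_pair (h : CliqueExits G k Q u) (hc : IsProperColoring G k c) (hi : i ∈ Q)
    (hj : j ∈ Q) (hq : q ∈ Q) (hcq : c q = c i ∨ c q = c j) : q = i ∨ q = j :=
  hcq.imp (h.injOn hc hq hi) (h.injOn hc hq hj)

theorem isKempeUnion_of_exit_notMem (h : CliqueExits G k Q u) (hc : IsProperColoring G k c)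
    (hS : IsKempeUnion (isolate G Q) c (c i) (c j) S) (hSQ : Disjoint S Q) (hi : i ∈ Q)
    (hj : j ∈ Q) (hiS : u i ∉ S) (hjS : u j ∉ S) : IsKempeUnion G c (c i) (c j) S where
  color_mem := hS.color_mem
  closed v hv w hvw hw := by
    have hvQ := Set.disjoint_left.1 hSQ hv
    by_cases hwQ : w ∈ Q
    · have hexit := h.eq_exit hwQ hvQ hvw.symm
      rcases h.color_mem_pair hc hi hj hwQ hw with rfl | rfl
      · exact absurd (hexit ▸ hv) hiS
      · exact absurd (hexit ▸ hv) hjS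
    · exact hS.closed v hv w ⟨hvw, hvQ, hwQ⟩ hw

theorem isKempeUnion_union_pair (h : CliqueExits G k Q u) (hc : IsProperColoring G k c)
    (hS : IsKempeUnion (isolate G Q) c (c i) (c j) S) (hSQ : Disjoint S Q) (hi : i ∈ Q)
    (hj : j ∈ Q) (hiS : c (u i) = c j → u i ∈ S) (hjS : c (u j) = c i → u j ∈ S) :
    IsKempeUnion G c (c i) (c j) (S ∪ {i, j}) where
  color_mem := by
    rintro v (hv | rfl | rfl)
    exacts [hS.color_mem v hv, .inl rfl, .inr rfl]
  closed v hv w hvw hw := by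
    by_cases hwQ : w ∈ Q
    · exact Or.inr (h.color_mem_pair hc hi hj hwQ hw)
    left
    rcases hv with hv | rfl | rfl
    · exact hS.closed v hv w ⟨hvw, Set.disjoint_left.1 hSQ hv, hwQ⟩ hw
    · exact h.eq_exit hi hwQ hvw ▸ hiS (h.eq_exit hi hwQ hvw ▸ hw.resolve_left (hc hvw).symm)
    · exact h.eq_exit hj hwQ hvw ▸ hjS (h.eq_exit hj hwQ hvw ▸ hw.resolve_right (hc hvw).symm)

theorem exists_lift_of_exit_mem_iff (h : CliqueExits G k Q u) (hc : IsProperColoring G k c)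
    (hS : IsKempeUnion (isolate G Q) c (c i) (c j) S) (hSQ : Disjoint S Q) (hi : i ∈ Q)
    (hj : j ∈ Q) (hiff : c (u i) = c j → c (u j) = c i → (u i ∈ S ↔ u j ∈ S)) :
    ∃ c', KempeEquivFixing G ∅ c c' ∧ Set.EqOn c' (swapOn c (c i) (c j) S) Qᶜ := by
  by_cases hno : u i ∉ S ∧ u j ∉ S
  · exact ⟨_, ((h.isKempeUnion_of_exit_notMem hc hS hSQ hi hj hno.1 hno.2).kempeMove
      (Set.disjoint_empty S)).equivFixing, Set.eqOn_refl _ _⟩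
  have hiS : c (u i) = c j → u i ∈ S := fun hij => by
    by_contra hiS
    have hjS : u j ∈ S := by tauto
    have hji := (hS.color_mem _ hjS).resolve_right (hc (h.adj_exit hj)).symm
    exact hiS ((hiff hij hji).2 hjS)
  have hjS : c (u j) = c i → u j ∈ S := fun hji => by
    by_contra hjS
    have hiS : u i ∈ S := by tauto
    have hij := (hS.color_mem _ hiS).resolve_left (hc (h.adj_exit hi)).symm
    exact hjS ((hiff hij hji).1 hiS)
  refine ⟨_, ((h.isKempeUnion_union_pair hc hS hSQ hi hj hiS hjS).kempeMove
    (Set.disjoint_empty _)).equivFixing, fun v hv => ?_⟩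
  have hvij : v ∉ ({i, j} : Set V) := fun hvij => hv (Set.pair_subset hi hj hvij)
  simp only [swapOn, Set.mem_union, hvij, or_false]

theorem exists_lift_of_equiv (h : CliqueExits G k Q u) (hc : IsProperColoring G k c)
    (hd : KempeEquivFixing G Qᶜ c d) (hS : IsKempeUnion (isolate G Q) c a b S)
    (hSQ : Disjoint S Q) (hi : i ∈ Q) (hj : j ∈ Q) (hia : d i = a) (hjb : d j = b)
    (hiff : c (u i) = b → c (u j) = a → (u i ∈ S ↔ u j ∈ S)) :
    ∃ c', KempeEquivFixing G ∅ c c' ∧ Set.EqOn c' (swapOn c a b S) Qᶜ := by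
  have hSd : IsKempeUnion (isolate G Q) d a b S :=
    ⟨fun v hv => hd.eqOn (Set.disjoint_left.1 hSQ hv) ▸ hS.color_mem v hv,
      fun v hv w hvw hw => hS.closed v hv w hvw (hd.eqOn hvw.2.2 ▸ hw)⟩
  subst hia hjb
  rw [← h.exit_color_eq hd hi, ← h.exit_color_eq hd hj] at hiff
  obtain ⟨c', hdc', hc'⟩ :=
    h.exists_lift_of_exit_mem_iff (hd.isProperColoring hc) hSd hSQ hi hj hiff
  refine ⟨c', (hd.mono (Set.empty_subset _)).trans hdc', fun v hv => (hc' hv).trans ?_⟩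
  simp only [swapOn, hd.eqOn hv]

-- Here the chain leaving `i` meets `S` and the one leaving `j` does not. An exit `u m` not coloured
-- `a` after the change allows a preliminary recolouring of `Q` that moves `a` or `b` to `m`.
theorem exists_lift_of_exit_mem_of_notMem (h : CliqueExits G k Q u) (hc : IsProperColoring G k c)
    (hS : IsKempeUnion (isolate G Q) c (c i) (c j) S) (hSQ : Disjoint S Q)
    (hi : i ∈ Q) (hj : j ∈ Q) (hij : c (u i) = c j) (hji : c (u j) = c i) (hiS : u i ∈ S)
    (hjS : u j ∉ S) (hm : m ∈ Q) (hma : swapOn c (c i) (c j) S (u m) ≠ c i) :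
    ∃ c', KempeEquivFixing G ∅ c c' ∧ Set.EqOn c' (swapOn c (c i) (c j) S) Qᶜ := by
  have hmi : m ≠ i := by
    rintro rfl
    simp [swapOn, hiS, hij] at hma
  have hmj : m ≠ j := by
    rintro rfl
    simp [swapOn, hjS, hji] at hma
  have hne_ij : i ≠ j := by
    rintro rfl
    exact hjS hiS
  by_cases hmS : u m ∈ S
  · have hm_exit : c (u m) = c i := (hS.color_mem _ hmS).resolve_right fun e => by
      simp [swapOn, hmS, e] at hma
    obtain ⟨d, hd, -, hdm, hdv⟩ := h.exists_swap hc hj hm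
      (hji ▸ (h.injOn hc).ne hi hm hmi.symm) (hm_exit ▸ (h.injOn hc).ne hi hj hne_ij)
    exact h.exists_lift_of_equiv hc hd hS hSQ hi hm (hdv i hne_ij hmi.symm) hdm
      fun _ _ => iff_of_true hiS hmS
  · have hm_exit : c (u m) ≠ c i := fun e => hma ((swapOn_of_notMem hmS).trans e)
    obtain ⟨d, hd, -, hdm, hdv⟩ := h.exists_swap hc hi hm
      (hij ▸ (h.injOn hc).ne hj hm hmj.symm) hm_exit
    exact h.exists_lift_of_equiv hc hd hS hSQ hm hj hdm (hdv j hne_ij.symm hmj.symm)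
      fun _ _ => iff_of_false hmS hjS

theorem exists_lift (h : CliqueExits G k Q u) (hc : IsProperColoring G k c)
    (hS : IsKempeUnion (isolate G Q) c a b S) (hSQ : Disjoint S Q)
    (hexit : ∀ x, ∃ m ∈ Q, swapOn c a b S (u m) ≠ x) :
    ∃ c', KempeEquivFixing G ∅ c c' ∧ Set.EqOn c' (swapOn c a b S) Qᶜ := by
  obtain ⟨i, hi, rfl⟩ := h.exists_color_eq hc a
  obtain ⟨j, hj, rfl⟩ := h.exists_color_eq hc b
  by_cases hiff : c (u i) = c j → c (u j) = c i → (u i ∈ S ↔ u j ∈ S)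
  · exact h.exists_lift_of_exit_mem_iff hc hS hSQ hi hj hiff
  push Not at hiff
  obtain ⟨hij, hji, ⟨hiS, hjS⟩ | ⟨hiS, hjS⟩⟩ := hiff
  · obtain ⟨m, hm, hma⟩ := hexit (c i)
    exact h.exists_lift_of_exit_mem_of_notMem hc hS hSQ hi hj hij hji hiS hjS hm hma
  · rw [swapOn_comm] at hexit ⊢
    obtain ⟨m, hm, hmb⟩ := hexit (c j)
    exact h.exists_lift_of_exit_mem_of_notMem hc hS.swap_colors hSQ hj hi hji hij hjS hiS hm hmb

theorem isProperColoring_isolate_sup_edge (h : CliqueExits G k Q u) (hc : IsProperColoring G k c)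
    (hi : i ∈ Q) (hj : j ∈ Q) (hij : c (u i) ≠ c (u j)) (hdc : Set.EqOn d c Qᶜ) :
    IsProperColoring (isolate G Q ⊔ edge (u i) (u j)) k d := by
  rintro v w (⟨hvw, hv, hw⟩ | hvw)
  · rw [hdc hv, hdc hw]
    exact hc hvw
  · have hi' := hdc (h.exit_notMem i hi)
    have hj' := hdc (h.exit_notMem j hj)
    obtain ⟨⟨rfl, rfl⟩ | ⟨rfl, rfl⟩, -⟩ := (edge_adj _ _ _ _).1 hvw
    · rwa [hi', hj']
    · rw [hi', hj']
      exact hij.symm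

theorem exists_lift_kempeEquivFixing (h : CliqueExits G k Q u) (hc : IsProperColoring G k c)
    (hi : i ∈ Q) (hj : j ∈ Q) (hij : c (u i) ≠ c (u j))
    (hcd : KempeEquivFixing (isolate G Q ⊔ edge (u i) (u j)) Q c d) :
    ∃ d', KempeEquivFixing G ∅ c d' ∧ Set.EqOn d' d Qᶜ := by
  induction hcd with
  | refl => exact ⟨c, .refl c, Set.eqOn_refl _ _⟩
  | @tail d e hcd hde ih =>
    obtain ⟨d', hcd', hd'⟩ := ih
    have he : IsProperColoring _ k e := hde.isProperColoring
      (KempeEquivFixing.isProperColoring hcd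
        (h.isProperColoring_isolate_sup_edge hc hi hj hij (Set.eqOn_refl _ _)))
    obtain ⟨a, b, S, hSQ, hS, rfl⟩ := hde
    have hS' : IsKempeUnion (isolate G Q) d' a b S :=
      ⟨fun v hv => hd' (Set.disjoint_left.1 hSQ hv) ▸ hS.color_mem v hv,
        fun v hv w hvw hw => hS.closed v hv w (Or.inl hvw) (hd' hvw.2.2 ▸ hw)⟩
    have hswap : Set.EqOn (swapOn d' a b S) (swapOn d a b S) Qᶜ := fun v hv => by
      simp only [swapOn, hd' hv]
    obtain ⟨e', hd'e', he'⟩ := h.exists_lift (hcd'.isProperColoring hc) hS' hSQ fun x => by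
      by_contra! hconst
      have hne : u i ≠ u j := fun heq => hij (heq ▸ rfl)
      refine he (Or.inr ((edge_adj _ _ _ _).2 ⟨Or.inl ⟨rfl, rfl⟩, hne⟩)) ?_
      rw [← hswap (h.exit_notMem i hi), ← hswap (h.exit_notMem j hj), hconst i hi, hconst j hj]
    exact ⟨e', hcd'.trans hd'e', he'.trans hswap⟩

theorem exists_equiv_color_eq_exit (h : CliqueExits G k Q u) (hk : 4 ≤ k)
    (hc : IsProperColoring G k c) (hi : i ∈ Q) (hj : j ∈ Q) (hij : c (u i) ≠ c (u j)) :
    ∃ d, KempeEquivFixing G Qᶜ c d ∧ d i = c (u j) := by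
  have hne {q w : V} := (h.injOn hc).ne (x := q) (y := w)
  have hne_ij : i ≠ j := fun heq => hij (heq ▸ rfl)
  obtain ⟨l, hl, hlj⟩ := h.exists_color_eq hc (c (u j))
  rcases eq_or_ne l i with rfl | hli
  · exact ⟨c, .refl c, hlj⟩
  have hne_jl : j ≠ l := by
    rintro rfl
    exact hc (h.adj_exit hj) hlj
  rw [← hlj] at hij ⊢
  by_cases hji : c (u i) = c j
  swap
  · exact h.exists_equiv_color_eq_of_mem hc hi hl hj hli hne_ij.symm hne_jl hij
      hji (hlj ▸ hne hl hi hli)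
  obtain ⟨m, hm, hmX⟩ := h.exists_mem_notMem (X := {i, j, l}) (Finset.card_le_three.trans_lt hk)
  obtain ⟨hmi, hmj, hml⟩ : m ≠ i ∧ m ≠ j ∧ m ≠ l := by simpa using hmX
  have him : c (u i) ≠ c m := hji ▸ hne hj hm hmj.symm
  by_cases hmi' : c (u m) = c i
  swap
  · exact h.exists_equiv_color_eq_of_mem hc hi hl hm hli hmi hml hij him hmi'
  -- First exchange `j` and `m`; then `j` can play the role of `m`.
  obtain ⟨d, hd, hdj, -, hdv⟩ := h.exists_swap hc hj hm (hlj ▸ hne hl hm hml.symm)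
    (hmi' ▸ hne hi hj hne_ij)
  have hdi : d i = c i := hdv i hne_ij hmi.symm
  have hdl : d l = c l := hdv l hne_jl.symm hml.symm
  obtain ⟨e, he, hei⟩ := h.exists_equiv_color_eq_of_mem (hd.isProperColoring hc) hi hl hj hli
    hne_ij.symm hne_jl (by rwa [h.exit_color_eq hd hi, hdl]) (by rwa [h.exit_color_eq hd hi, hdj])
    (by rw [h.exit_color_eq hd hj, hdi, ← hlj]; exact hne hl hi hli)
  exact ⟨e, hd.trans he, hei.trans hdl⟩

variable [Finite V]

theorem slack_compl_sdiff (h : CliqueExits G k Q u) (hdeg : ∀ v, (G.neighborSet v).ncard ≤ k)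
    (hi : i ∈ Q) (hj : j ∈ Q) (hij : i ≠ j) (hα : α i = α (u j)) :
    Slack G (Q \ {i})ᶜ α where
  le v _ := (weight_le_ncard_neighborSet G _ α v).trans (hdeg v)
  exists_lt T hT hTF hcl := by
    have hTQ : T ⊆ Q \ {i} := by simpa using Set.subset_compl_iff_disjoint_right.2 hTF
    obtain ⟨t, ht⟩ := hT
    have hjT : j ∈ T := by
      rcases eq_or_ne t j with rfl | htj
      · exact ht
      · exact hcl t ht j (h.isClique (hTQ ht).1 hj htj) (by simp [hj, hij.symm])
    exact ⟨j, hjT, (weight_lt_ncard_neighborSet (h.isClique hj hi hij.symm) (by simp)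
      (h.adj_exit hj) (by simp [h.exit_notMem j hj])
      (fun heq => h.exit_notMem j hj (heq ▸ hi)) hα).trans_le (hdeg j)⟩

-- If `β` gives `i` the colour of `u j`, first recolour `α` so that it does the same; freezing `i`
-- then leaves a colour to spare at `j`.
theorem kempeEquivFixing_of_eqOn (h : CliqueExits G k Q u) (hk : 4 ≤ k)
    (hdeg : ∀ v, (G.neighborSet v).ncard ≤ k) (hα : IsProperColoring G k α)
    (hβ : IsProperColoring G k β) (hαβ : Set.EqOn β α Qᶜ) : KempeEquivFixing G Qᶜ α β := by
  obtain ⟨j, hj, -⟩ := h.exists_mem_notMem (X := ∅) (by simp; lia)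
  obtain ⟨i, hi, hij⟩ := h.exists_color_eq hβ (α (u j))
  have hexit : ∀ q ∈ Q, β (u q) = α (u q) := fun q hq => hαβ (h.exit_notMem q hq)
  have hne : i ≠ j := by
    rintro rfl
    exact hβ (h.adj_exit hi) (hij.trans (hexit i hi).symm)
  obtain ⟨d, hd, hdi⟩ := h.exists_equiv_color_eq_exit hk hα hi hj
    (hexit i hi ▸ hij ▸ (hβ (h.adj_exit hi)).symm)
  have hslack := h.slack_compl_sdiff hdeg hi hj hne (hdi.trans (h.exit_color_eq hd hj).symm)
  refine hd.trans ((hslack.kempeEquivFixing (hd.isProperColoring hα) hβ fun v hv => ?_).mono ?_)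
  · by_cases hvQ : v ∈ Q
    · obtain rfl : v = i := by simpa [hvQ] using hv
      rw [hij, hdi]
    · rw [hαβ hvQ, hd.eqOn hvQ]
  · exact Set.compl_subset_compl.2 Set.sdiff_subset

theorem ncard_neighborSet_isolate_sup_edge_le (h : CliqueExits G k Q u) (hi : i ∈ Q) (hj : j ∈ Q)
    (hv : v ∉ Q) : ((isolate G Q ⊔ edge (u i) (u j)).neighborSet v).ncard ≤
      (G.neighborSet v \ (Q \ {i, j})).ncard := by
  let f : V → V := fun w => if w = i then u j else if w = j then u i else w
  suffices hsub : (isolate G Q ⊔ edge (u i) (u j)).neighborSet v ⊆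
      f '' (G.neighborSet v \ (Q \ {i, j})) from
    (Set.ncard_le_ncard hsub).trans (Set.ncard_image_le (Set.toFinite _))
  rintro w (⟨hvw, -, hw⟩ | hvw)
  · exact ⟨w, ⟨hvw, fun hwQ => hw hwQ.1⟩, by
      simp only [f, if_neg (ne_of_mem_of_not_mem hi hw).symm,
        if_neg (ne_of_mem_of_not_mem hj hw).symm]⟩
  · obtain ⟨⟨rfl, rfl⟩ | ⟨rfl, rfl⟩, hne⟩ := (edge_adj _ _ _ _).1 hvw
    · exact ⟨i, ⟨(h.adj_exit hi).symm, by simp⟩, if_pos rfl⟩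
    · refine ⟨j, ⟨(h.adj_exit hj).symm, by simp⟩, ?_⟩
      have hji : j ≠ i := fun heq => hne (heq ▸ rfl)
      simp only [f, if_neg hji, if_pos]

theorem slack_isolate_sup_edge (h : CliqueExits G k Q u) (hk : 4 ≤ k)
    (hdeg : ∀ v, (G.neighborSet v).ncard ≤ k)
    (hcut : ∀ i j, G.Adj i j → (G.induce {i, j}ᶜ).Preconnected) (hi : i ∈ Q) (hj : j ∈ Q)
    (hij : i ≠ j) (α : V → Fin k) : Slack (isolate G Q ⊔ edge (u i) (u j)) Q α where
  le v hv := (weight_le_ncard_neighborSet _ Q α v).trans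
    ((h.ncard_neighborSet_isolate_sup_edge_le hi hj hv).trans
      ((Set.ncard_le_ncard Set.sdiff_subset).trans (hdeg v)))
  exists_lt T hT hTQ hcl := by
    have hTQ' {v : V} : v ∈ T → v ∉ Q := fun hv => Set.disjoint_left.1 hTQ hv
    obtain ⟨m, hm, hmX⟩ := h.exists_mem_notMem (X := {i, j}) (Finset.card_le_two.trans_lt (by lia))
    by_contra! hfull
    suffices hT' : T = {i, j}ᶜ from
      Set.disjoint_left.1 hTQ (hT' ▸ by simpa using hmX : m ∈ T) hm
    refine induce_preconnected_iff.1 (hcut i j (h.isClique hi hj hij)) T ?_ hT ?_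
    · rintro v hv (rfl | rfl)
      exacts [hTQ' hv hi, hTQ' hv hj]
    intro v hv w hw hvw
    by_cases hwQ : w ∈ Q
    · have hlt : (G.neighborSet v \ (Q \ {i, j})).ncard < (G.neighborSet v).ncard :=
        Set.ncard_lt_ncard ⟨Set.sdiff_subset, fun hsub => (hsub hvw).2 ⟨hwQ, hw⟩⟩
      have := hfull v hv
      have := weight_le_ncard_neighborSet (isolate G Q ⊔ edge (u i) (u j)) Q α v
      have := h.ncard_neighborSet_isolate_sup_edge_le hi hj (hTQ' hv)
      have := hdeg v
      lia
    · exact hcl v hv w (Or.inl ⟨hvw, hTQ' hv, hwQ⟩) hwQ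

theorem kempeEquivFixing_of_exit_ne (h : CliqueExits G k Q u) (hk : 4 ≤ k)
    (hdeg : ∀ v, (G.neighborSet v).ncard ≤ k)
    (hcut : ∀ i j, G.Adj i j → (G.induce {i, j}ᶜ).Preconnected) (hi : i ∈ Q) (hj : j ∈ Q)
    (hα : IsProperColoring G k α) (hβ : IsProperColoring G k β)
    (hαij : α (u i) ≠ α (u j)) (hβij : β (u i) ≠ β (u j)) : KempeEquivFixing G ∅ α β := by
  have hij : i ≠ j := fun heq => hαij (heq ▸ rfl)
  have hmix : KempeEquivFixing (isolate G Q ⊔ edge (u i) (u j)) Q α (Q.piecewise α β) :=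
    (h.slack_isolate_sup_edge hk hdeg hcut hi hj hij α).kempeEquivFixing
      (h.isProperColoring_isolate_sup_edge hα hi hj hαij (Set.eqOn_refl _ _))
      (h.isProperColoring_isolate_sup_edge hβ hi hj hβij (Q.piecewise_eqOn_compl α β))
      (Q.piecewise_eqOn α β)
  obtain ⟨γ, hαγ, hγ⟩ := h.exists_lift_kempeEquivFixing hα hi hj hαij hmix
  exact hαγ.trans ((h.kempeEquivFixing_of_eqOn hk hdeg (hαγ.isProperColoring hα) hβ
    (hγ.trans (Q.piecewise_eqOn_compl α β)).symm).mono (Set.empty_subset _))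

theorem kempeEquivFixing (h : CliqueExits G k Q u) (hk : 4 ≤ k)
    (hdeg : ∀ v, (G.neighborSet v).ncard ≤ k)
    (hcut : ∀ i j, G.Adj i j → (G.induce {i, j}ᶜ).Preconnected)
    (hα : IsProperColoring G k α) (hβ : IsProperColoring G k β) : KempeEquivFixing G ∅ α β := by
  obtain ⟨l, hl, -⟩ := h.exists_mem_notMem (X := ∅) (by simp; lia)
  obtain ⟨j, hj, hβj⟩ := h.exists_exit_color_ne hβ (β (u l))
  by_cases hαj : α (u j) = α (u l)
  swap
  · exact h.kempeEquivFixing_of_exit_ne hk hdeg hcut hj hl hα hβ hαj hβj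
  obtain ⟨m, hm, hαm⟩ := h.exists_exit_color_ne hα (α (u l))
  by_cases hβm : β (u m) = β (u l)
  · exact h.kempeEquivFixing_of_exit_ne hk hdeg hcut hm hj hα hβ (hαj ▸ hαm) (hβm ▸ hβj.symm)
  · exact h.kempeEquivFixing_of_exit_ne hk hdeg hcut hm hl hα hβ hαm hβm

end CliqueExits

end Cliques

section LockedVertices

variable {G : SimpleGraph V} {k : ℕ} {c : V → Fin k} {v p q : V}

/-- The vertex `v` is locked in the colouring `c` if each colour other than its own occurs on its
neighbourhood, that is, if `v` cannot be recoloured on its own. -/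
def IsLocked (G : SimpleGraph V) (c : V → Fin k) (v : V) : Prop :=
  ∀ e, e ≠ c v → ∃ u, G.Adj v u ∧ c u = e

theorem exists_color_of_not_isLocked (h : ¬ IsLocked G c v) :
    ∃ e, e ≠ c v ∧ ∀ u, G.Adj v u → c u ≠ e := by
  simpa [IsLocked] using h

theorem IsLocked.of_update {e : Fin k} (h : IsLocked G (Function.update c p e) v) (hvp : v ≠ p)
    (hadj : ¬ G.Adj v p) : IsLocked G c v := by
  intro f hf
  obtain ⟨u, hu, huf⟩ := h f (by rwa [Function.update_of_ne hvp])
  have hup : u ≠ p := by rintro rfl; exact hadj hu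
  exact ⟨u, hu, by rwa [Function.update_of_ne hup] at huf⟩

variable [Finite V]

-- `k - 1` colours occur on at most `k` neighbours, so only one of them is repeated, and only
-- once.
theorem IsLocked.injOn (h : IsLocked G c v) (hdeg : (G.neighborSet v).ncard ≤ k)
    (hp : G.Adj v p) (hq : G.Adj v q) (hne : p ≠ q) (he : c p = c q) :
    Set.InjOn c (G.neighborSet v \ {p}) := by
  refine (Set.ncard_image_iff (Set.toFinite _)).1 (le_antisymm (Set.ncard_image_le) ?_)
  have himage : {c v}ᶜ ⊆ c '' (G.neighborSet v \ {p}) := by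
    intro e hev
    obtain ⟨u, hu, rfl⟩ := h e hev
    rcases eq_or_ne u p with rfl | hup
    · exact ⟨q, ⟨hq, hne.symm⟩, he.symm⟩
    · exact ⟨u, ⟨hu, hup⟩, rfl⟩
  have hcolors := Set.ncard_le_ncard himage
  rw [Set.ncard_compl, Nat.card_eq_fintype_card, Fintype.card_fin, Set.ncard_singleton] at hcolors
  have := Set.ncard_sdiff_singleton_add_one (s := G.neighborSet v) hp
  lia

theorem IsLocked.subsingleton_color (h : IsLocked G c v) (hdeg : (G.neighborSet v).ncard ≤ k)
    (hp : G.Adj v p) (hq : G.Adj v q) (hne : p ≠ q) (he : c p = c q) {e : Fin k} (hep : e ≠ c p) :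
    {u | G.Adj v u ∧ c u = e}.Subsingleton := by
  rintro r ⟨hr, rfl⟩ t ⟨ht, htr⟩
  exact h.injOn hdeg hp hq hne he ⟨hr, fun h => hep (congrArg c h)⟩
    ⟨ht, fun h => hep (htr.symm.trans (congrArg c h))⟩ htr.symm

theorem not_isLocked_of_three_eq {r : V} (hdeg : (G.neighborSet v).ncard ≤ k) (hp : G.Adj v p)
    (hq : G.Adj v q) (hr : G.Adj v r) (hpq : p ≠ q) (hpr : p ≠ r) (hqr : q ≠ r)
    (hcpq : c p = c q) (hcqr : c q = c r) : ¬ IsLocked G c v := fun h =>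
  hqr (h.injOn hdeg hp hq hpq hcpq ⟨hq, hpq.symm⟩ ⟨hr, hpr.symm⟩ hcqr)

end LockedVertices

section BlockedSplit

variable {G : SimpleGraph V} {k : ℕ} {s : V} {A B : Set V} {c d : V → Fin k} {a b : V}

/-- The vertices at distance exactly two from `s`. -/
def secondNeighborSet (G : SimpleGraph V) (s : V) : Set V :=
  {v | v ≠ s ∧ ¬ G.Adj s v ∧ ∃ x, G.Adj s x ∧ G.Adj x v}

/-- The configuration excluded in the main part of the argument: in a `k`-regular graph the second
neighbourhood of `s` is covered by two completely joined sets `A` and `B`, and no colouring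
Kempe equivalent to `c` gives a vertex of `B` the colour of `s`. -/
structure BlockedSplit (G : SimpleGraph V) (s : V) (A B : Set V) (c : V → Fin k) : Prop where
  isProperColoring : IsProperColoring G k c
  ncard_neighborSet : ∀ v, (G.neighborSet v).ncard = k
  union_eq : A ∪ B = secondNeighborSet G s
  adj : ∀ a ∈ A, ∀ b ∈ B, G.Adj a b
  color_ne : ∀ d, KempeEquivFixing G ∅ c d → ∀ b ∈ B, d b ≠ d s

/-- The reason why exchanging the colours of `s` and of its neighbours coloured `c b` fails to give
`b` the colour of `s`. -/
structure IsWitness (G : SimpleGraph V) (s : V) (c : V → Fin k) (b a : V) : Prop where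
  color_eq : c a = c s
  isLocked : IsLocked G c a
  exists_adj : ∃ x, G.Adj s x ∧ G.Adj a x ∧ c x = c b

theorem isKempeUnion_insert_center (hc : IsProperColoring G k c) {e : Fin k}
    (h : ∀ u ∈ secondNeighborSet G s, ∀ x, G.Adj s x → G.Adj x u → c x = e → c u ≠ c s) :
    IsKempeUnion G c (c s) e (insert s {x | G.Adj s x ∧ c x = e}) where
  color_mem := by
    rintro v (rfl | hv)
    · exact .inl rfl
    · exact .inr hv.2
  closed := by
    rintro v (rfl | hv) u hvu (hu | hu)
    · exact absurd hu.symm (hc hvu)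
    · exact .inr ⟨hvu, hu⟩
    · refine or_iff_not_imp_left.2 fun hus => ?_
      have hsu : ¬ G.Adj s u := fun hsu => hc hsu hu.symm
      exact absurd hu (h u ⟨hus, hsu, v, hv.1, hvu⟩ v hv.1 hvu hv.2)
    · exact absurd (hv.2.trans hu.symm) (hc hvu)

namespace BlockedSplit

theorem mem_left (H : BlockedSplit G s A B c) (ha : a ∈ A) : a ∈ secondNeighborSet G s :=
  H.union_eq ▸ .inl ha

theorem mem_right (H : BlockedSplit G s A B c) (hb : b ∈ B) : b ∈ secondNeighborSet G s :=
  H.union_eq ▸ .inr hb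

theorem of_kempeMove (H : BlockedSplit G s A B c) (h : KempeMove G ∅ c d) :
    BlockedSplit G s A B d where
  isProperColoring := h.isProperColoring H.isProperColoring
  ncard_neighborSet := H.ncard_neighborSet
  union_eq := H.union_eq
  adj := H.adj
  color_ne d' h' := H.color_ne d' (h.equivFixing.trans h')

theorem update (H : BlockedSplit G s A B c) {v : V} {e : Fin k}
    (h : ∀ u, G.Adj v u → c u ≠ e) : BlockedSplit G s A B (Function.update c v e) :=
  H.of_kempeMove (KempeMove.update H.isProperColoring (Set.notMem_empty v) h)

theorem swapOn (H : BlockedSplit G s A B c) {e f : Fin k} {S : Set V}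
    (hS : IsKempeUnion G c e f S) : BlockedSplit G s A B (swapOn c e f S) :=
  H.of_kempeMove (hS.kempeMove (Set.disjoint_empty S))

theorem color_right_ne (H : BlockedSplit G s A B c) (hb : b ∈ B) : c b ≠ c s :=
  H.color_ne c (.refl c) b hb

theorem exists_left_of_color_eq (H : BlockedSplit G s A B c) (hb : b ∈ B) :
    ∃ a ∈ A, c a = c s ∧ ∃ x, G.Adj s x ∧ G.Adj a x ∧ c x = c b := by
  by_contra! hno
  have hS := isKempeUnion_insert_center (s := s) (e := c b) H.isProperColoring
    fun u hu x hsx hxu hxb hus => by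
      rcases (H.union_eq.symm ▸ hu : u ∈ A ∪ B) with huA | huB
      · exact hno u huA hus x hsx hxu.symm hxb
      · exact H.color_right_ne huB hus
  have hbS : b ∉ insert s {x | G.Adj s x ∧ c x = c b} := by
    rintro (hbs | hbs)
    · exact (H.mem_right hb).1 hbs
    · exact (H.mem_right hb).2.1 hbs.1
  refine (H.swapOn hS).color_right_ne hb ?_
  rw [swapOn_of_notMem hbS, swapOn_of_mem (Set.mem_insert _ _), Equiv.swap_apply_left]

theorem isWitness_of_update (H : BlockedSplit G s A B c) (ha : a ∈ A) (hb : b ∈ B)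
    (has : c a = c s) {e : Fin k} (he : e ≠ c a) {a' : V}
    (h : IsWitness G s (Function.update c a e) b a') : IsWitness G s c b a' := by
  obtain ⟨hcolor, hlocked, x, hsx, hax, hxb⟩ := h
  rw [Function.update_of_ne (H.mem_left ha).1.symm] at hcolor
  have hne : a' ≠ a := by
    rintro rfl
    rw [Function.update_self] at hcolor
    exact he (hcolor.trans has.symm)
  rw [Function.update_of_ne hne] at hcolor
  have hadj : ¬ G.Adj a' a := fun h => H.isProperColoring h (hcolor.trans has.symm)
  have hxa : x ≠ a := by rintro rfl; exact hadj hax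
  rw [Function.update_of_ne hxa, Function.update_of_ne (H.adj a ha b hb).ne.symm] at hxb
  exact ⟨hcolor, hlocked.of_update hne hadj, x, hsx, hax, hxb⟩

variable [Finite V]

-- Vertices of `A` with the colour of `s` that are not locked can be recoloured away.
theorem exists_isWitness (H : BlockedSplit G s A B c) (hb : b ∈ B) :
    ∃ a ∈ A, IsWitness G s c b a := by
  induction hn : {a ∈ A | c a = c s}.ncard using Nat.strong_induction_on generalizing c with
  | _ n ih =>
  subst hn
  by_cases hlocked : ∀ a ∈ A, c a = c s → IsLocked G c a
  · obtain ⟨a, ha, has, hx⟩ := H.exists_left_of_color_eq hb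
    exact ⟨a, ha, has, hlocked a ha has, hx⟩
  · push Not at hlocked
    obtain ⟨a, ha, has, hla⟩ := hlocked
    obtain ⟨e, he, hfree⟩ := exists_color_of_not_isLocked hla
    have hs : Function.update c a e s = c s := Function.update_of_ne (H.mem_left ha).1.symm _ _
    have hlt : {v ∈ A | Function.update c a e v = Function.update c a e s}.ncard <
        {v ∈ A | c v = c s}.ncard := by
      refine Set.ncard_lt_ncard (Set.ssubset_iff_of_subset ?_ |>.2 ⟨a, ⟨ha, has⟩, ?_⟩)
      · rintro v ⟨hv, hvs⟩
        rcases eq_or_ne v a with rfl | hva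
        · exact ⟨hv, has⟩
        · exact ⟨hv, by rwa [hs, Function.update_of_ne hva] at hvs⟩
      · rintro ⟨-, h⟩
        rw [hs, Function.update_self] at h
        exact he (h.trans has.symm)
    obtain ⟨a', ha', hw⟩ := ih _ hlt (H.update hfree) rfl
    exact ⟨a', ha', H.isWitness_of_update ha hb has he hw⟩

theorem injOn_of_isWitness (H : BlockedSplit G s A B c) (ha : a ∈ A) (hb : b ∈ B)
    (hw : IsWitness G s c b a) : Set.InjOn c (G.neighborSet a \ {b}) := by
  obtain ⟨-, hlocked, x, hsx, hax, hxb⟩ := hw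
  have hbx : b ≠ x := by rintro rfl; exact (H.mem_right hb).2.1 hsx
  exact hlocked.injOn (H.ncard_neighborSet a).le (H.adj a ha b hb) hax hbx hxb.symm

theorem injOn_right (H : BlockedSplit G s A B c) : Set.InjOn c B := by
  intro b hb b' hb' hbb
  obtain ⟨a, ha, -, hlocked, x, hsx, hax, hxb⟩ := H.exists_isWitness hb
  by_contra hne
  have hne_of_mem {y : V} (hy : y ∈ B) : x ≠ y := by rintro rfl; exact (H.mem_right hy).2.1 hsx
  exact not_isLocked_of_three_eq (H.ncard_neighborSet a).le hax (H.adj a ha b hb)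
    (H.adj a ha b' hb') (hne_of_mem hb) (hne_of_mem hb') hne hxb hbb hlocked

theorem isWitness_unique (H : BlockedSplit G s A B c) (ha : a ∈ A) {b' : V} (hb : b ∈ B)
    (hb' : b' ∈ B) (hw : IsWitness G s c b a) (hw' : IsWitness G s c b' a) : b = b' := by
  obtain ⟨-, -, x, hsx, hax, hxb⟩ := hw'
  have hne_of_mem {y : V} (hy : y ∈ B) : x ≠ y := by rintro rfl; exact (H.mem_right hy).2.1 hsx
  by_contra hne
  exact hne_of_mem hb' (H.injOn_of_isWitness ha hb hw ⟨hax, hne_of_mem hb⟩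
    ⟨H.adj a ha b' hb', Ne.symm hne⟩ hxb)

theorem exists_injOn_isWitness (H : BlockedSplit G s A B c) :
    ∃ w : V → V, Set.MapsTo w B A ∧ Set.InjOn w B ∧ ∀ b ∈ B, IsWitness G s c b (w b) := by
  choose! w hwA hw using fun b (hb : b ∈ B) => H.exists_isWitness hb
  exact ⟨w, hwA, fun b hb b' hb' h =>
    H.isWitness_unique (hwA b hb) hb hb' (hw b hb) (h ▸ hw b' hb'), hw⟩

theorem ncard_right_le (H : BlockedSplit G s A B c) : B.ncard ≤ A.ncard := by
  obtain ⟨w, hwA, hinj, -⟩ := H.exists_injOn_isWitness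
  exact Set.ncard_le_ncard_of_injOn w hwA hinj

theorem exists_isWitness_right (H : BlockedSplit G s A B c) (hAB : A.ncard ≤ B.ncard)
    (ha : a ∈ A) : ∃ b ∈ B, IsWitness G s c b a := by
  obtain ⟨w, hwA, hinj, hw⟩ := H.exists_injOn_isWitness
  have himage : w '' B = A :=
    Set.eq_of_subset_of_ncard_le hwA.image_subset (hAB.trans_eq hinj.ncard_image.symm)
  obtain ⟨b, hb, rfl⟩ := himage.symm ▸ ha
  exact ⟨b, hb, hw b hb⟩

theorem color_left_eq (H : BlockedSplit G s A B c) (hAB : A.ncard ≤ B.ncard) (ha : a ∈ A) :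
    c a = c s :=
  have ⟨_, _, hw⟩ := H.exists_isWitness_right hAB ha
  hw.color_eq

theorem isLocked_left (H : BlockedSplit G s A B c) (hAB : A.ncard ≤ B.ncard) (ha : a ∈ A) :
    IsLocked G c a :=
  have ⟨_, _, hw⟩ := H.exists_isWitness_right hAB ha
  hw.isLocked

theorem isLocked_center (H : BlockedSplit G s A B c) (hAB : A.ncard ≤ B.ncard)
    (hA : A.Nonempty) : IsLocked G c s := by
  by_contra h
  obtain ⟨e, he, hfree⟩ := exists_color_of_not_isLocked h
  obtain ⟨a, ha⟩ := hA
  have hcolor := (H.update hfree).color_left_eq hAB ha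
  rw [Function.update_self, Function.update_of_ne (H.mem_left ha).1, H.color_left_eq hAB ha]
    at hcolor
  exact he hcolor.symm

theorem isLocked_of_adj_left (H : BlockedSplit G s A B c) (hAB : A.ncard ≤ B.ncard)
    (ha : a ∈ A) (hb : b ∈ B) (hw : IsWitness G s c b a) {z : V} (haz : G.Adj a z)
    (hzb : c z ≠ c b) : IsLocked G c z := by
  by_contra h
  obtain ⟨e, he, hfree⟩ := exists_color_of_not_isLocked h
  obtain ⟨u, hau, huz⟩ := (H.update hfree).isLocked_left hAB ha (c z) (by
    rw [Function.update_of_ne haz.ne]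
    exact (H.isProperColoring haz).symm)
  have hne : u ≠ z := by
    rintro rfl
    rw [Function.update_self] at huz
    exact he huz
  rw [Function.update_of_ne hne] at huz
  have hub : u ≠ b := fun hub => hzb (huz.symm.trans (congrArg c hub))
  exact hne (H.injOn_of_isWitness ha hb hw ⟨hau, hub⟩ ⟨haz, fun h => hzb (congrArg c h)⟩ huz)

theorem isLocked_right (H : BlockedSplit G s A B c) (hAB : A.ncard ≤ B.ncard)
    (hB : 1 < B.ncard) (hb : b ∈ B) : IsLocked G c b := by
  obtain ⟨b', hb', hne⟩ := Set.exists_ne_of_one_lt_ncard hB b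
  obtain ⟨a, ha, hw⟩ := H.exists_isWitness hb'
  exact H.isLocked_of_adj_left hAB ha hb' hw (H.adj a ha b hb)
    fun h => hne (H.injOn_right hb' hb h.symm)

theorem ncard_left_le_two (H : BlockedSplit G s A B c) (hAB : A.ncard ≤ B.ncard) :
    A.ncard ≤ 2 := by
  by_contra! h
  obtain ⟨x, y, z, hx, hy, hz, hxy, hxz, hyz⟩ := (Set.two_lt_ncard_iff (Set.toFinite A)).1 h
  obtain ⟨b, hb⟩ : B.Nonempty := Set.nonempty_of_ncard_ne_zero (by lia)
  have hcolor {a : V} (ha : a ∈ A) : c a = c s := H.color_left_eq hAB ha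
  exact not_isLocked_of_three_eq (H.ncard_neighborSet b).le (H.adj x hx b hb).symm
    (H.adj y hy b hb).symm (H.adj z hz b hb).symm hxy hxz hyz ((hcolor hx).trans (hcolor hy).symm)
    ((hcolor hy).trans (hcolor hz).symm) (H.isLocked_right hAB (by lia) hb)

end BlockedSplit

end BlockedSplit

section SinglePair

variable {G : SimpleGraph V} {k : ℕ} {s a b : V} {c : V → Fin k}

theorem ncard_neighborSet_sdiff_eq_one [Finite V] (hdeg : ∀ v, (G.neighborSet v).ncard = k)
    (hV : ∀ v, v = s ∨ G.Adj s v ∨ v = a ∨ v = b) (hsa : ¬ G.Adj s a) (hsb : ¬ G.Adj s b)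
    (hab : G.Adj a b) : (G.neighborSet s \ G.neighborSet a).ncard = 1 := by
  have hsdiff : G.neighborSet a \ G.neighborSet s = {b} := by
    refine Set.eq_singleton_iff_unique_mem.2 ⟨⟨hab, hsb⟩, fun u ⟨hau, hsu⟩ => ?_⟩
    rcases hV u with rfl | h | rfl | h
    · exact absurd hau.symm hsa
    · exact absurd h hsu
    · exact absurd hau (G.loopless.irrefl _)
    · exact h
  have h₁ := Set.ncard_inter_add_ncard_sdiff_eq_ncard (G.neighborSet a) (G.neighborSet s)
  have h₂ := Set.ncard_inter_add_ncard_sdiff_eq_ncard (G.neighborSet s) (G.neighborSet a)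
  rw [hsdiff, Set.ncard_singleton, hdeg, Set.inter_comm] at h₁
  rw [hdeg] at h₂
  lia

namespace BlockedSplit

theorem eq_or_adj_or_eq (H : BlockedSplit G s {a} {b} c)
    (hcon : (G.induce {a, b}ᶜ).Preconnected) (v : V) : v = s ∨ G.Adj s v ∨ v = a ∨ v = b := by
  have ha := H.mem_left rfl
  have hb := H.mem_right rfl
  have hball : insert s (G.neighborSet s) = {a, b}ᶜ := by
    refine induce_preconnected_iff.1 hcon _ ?_ (Set.insert_nonempty _ _) ?_
    · rintro v (rfl | hv) (rfl | rfl)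
      exacts [ha.1 rfl, hb.1 rfl, ha.2.1 hv, hb.2.1 hv]
    · rintro v (rfl | hv) u hu hvu
      · exact .inr hvu
      · refine or_iff_not_imp_left.2 fun hus => not_not.1 fun hsu => hu ?_
        have hu₂ : u ∈ secondNeighborSet G s := ⟨hus, hsu, v, hv, hvu⟩
        rwa [← H.union_eq] at hu₂
  by_cases hv : v ∈ insert s (G.neighborSet s)
  · exact hv.imp_right .inl
  · rw [hball, Set.notMem_compl_iff] at hv
    exact .inr (.inr hv)

theorem false_of_singleton [Finite V] (hk : 4 ≤ k) (H : BlockedSplit G s {a} {b} c)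
    (hcon : (G.induce {a, b}ᶜ).Preconnected) : False := by
  have hAB : ({a} : Set V).ncard ≤ ({b} : Set V).ncard := by simp
  have hV := H.eq_or_adj_or_eq hcon
  have hsa := (H.mem_left rfl).2.1
  have hsb := (H.mem_right rfl).2.1
  have hab : G.Adj a b := H.adj a rfl b rfl
  have hV' (v : V) : v = s ∨ G.Adj s v ∨ v = b ∨ v = a :=
    (hV v).imp_right (Or.imp_right Or.symm)
  have hs_sdiff_a := ncard_neighborSet_sdiff_eq_one H.ncard_neighborSet hV hsa hsb hab
  have hs_sdiff_b := ncard_neighborSet_sdiff_eq_one H.ncard_neighborSet hV' hsb hsa hab.symm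
  have hw : IsWitness G s c b a := by
    obtain ⟨_, rfl, hw⟩ := H.exists_isWitness (b := b) rfl
    exact hw
  obtain ⟨x, hsx, hax, hxb⟩ := hw.exists_adj
  have hxb_ne : x ≠ b := by rintro rfl; exact hsb hsx
  have hbx : ¬ G.Adj b x := fun h => H.isProperColoring h hxb.symm
  have hbu {u : V} (hsu : G.Adj s u) (hux : u ≠ x) : G.Adj b u := by
    by_contra hbu
    exact hux (Set.ncard_le_one (Set.toFinite _) |>.1 hs_sdiff_b.le u ⟨hsu, hbu⟩ x ⟨hsx, hbx⟩)
  have hnot_adj {z : V} (hsz : G.Adj s z) (haz : G.Adj a z) (hzx : z ≠ x) : ¬ G.Adj z x := by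
    intro hadj
    have hbz := hbu hsz hzx
    have hlocked := H.isLocked_of_adj_left hAB rfl rfl hw haz (H.isProperColoring hbz).symm
    exact hxb_ne (hlocked.subsingleton_color (H.ncard_neighborSet z).le hsz.symm haz.symm
      (H.mem_left rfl).1.symm hw.color_eq.symm (H.color_right_ne rfl) ⟨hadj, hxb⟩ ⟨hbz.symm, rfl⟩)
  have hsub : G.neighborSet x ⊆ {s, a} ∪ G.neighborSet s \ G.neighborSet a := by
    intro u hxu
    rcases hV u with rfl | hsu | rfl | rfl
    · exact .inl (.inl rfl)
    · exact .inr ⟨hsu, fun hau => hnot_adj hsu hau hxu.ne.symm hxu.symm⟩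
    · exact .inl (.inr rfl)
    · exact absurd hxu.symm hbx
  have hcard := (Set.ncard_le_ncard hsub).trans (Set.ncard_union_le _ _)
  have hpair := ncard_pair_le s a
  rw [H.ncard_neighborSet] at hcard
  lia

end BlockedSplit

end SinglePair

section KempeChainLeaves

variable {G : SimpleGraph V} {k : ℕ} {a b : Fin k} {r q q' : V} {c : V → Fin k}

theorem exists_three_le_ncard_neighborSet [Finite V] (hG : G.Connected) (hrq : r ≠ q)
    (hrq' : r ≠ q') (hqq' : q ≠ q') (hleaf : ∀ v ∈ ({r, q, q'} : Finset V),
    (G.neighborSet v).ncard ≤ 1) : ∃ v, 3 ≤ (G.neighborSet v).ncard := by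
  have := Fintype.ofFinite V
  have hdegree (v : V) : (G.neighborSet v).ncard = G.degree v := by
    rw [Set.ncard_eq_toFinset_card', ← card_neighborFinset_eq_degree]
    rfl
  simp only [hdegree] at hleaf ⊢
  by_contra! hno
  have hedges := hG.card_vert_le_card_edgeSet_add_one
  rw [Nat.card_eq_fintype_card, Nat.card_eq_fintype_card, ← edgeFinset_card] at hedges
  have hle : ∑ v, (G.degree v + if v ∈ ({r, q, q'} : Finset V) then 1 else 0) ≤ ∑ _v : V, 2 := by
    refine Finset.sum_le_sum fun v _ => ?_
    split_ifs with hv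
    · exact Nat.add_le_add_right (hleaf v hv) 1
    · exact Nat.le_of_lt_succ (hno v)
  simp only [Finset.sum_add_distrib, Finset.sum_ite_mem, Finset.univ_inter, Finset.sum_const,
    Finset.card_univ, smul_eq_mul, G.sum_degrees_eq_twice_card_edges,
    Finset.card_eq_three.2 ⟨r, q, q', hrq, hrq', hqq', rfl⟩] at hle
  lia

theorem induce_kempeChain_connected (r : V) : (G.induce (kempeChain G c a b r)).Connected := by
  rw [connected_iff_exists_forall_reachable]
  refine ⟨⟨r, self_mem_kempeChain r⟩, fun v => ?_⟩
  have hsub : kempeChain G c a b r ⊆ {v | ∃ hv : v ∈ kempeChain G c a b r,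
      (G.induce (kempeChain G c a b r)).Reachable ⟨r, self_mem_kempeChain r⟩ ⟨v, hv⟩} := by
    refine kempeChain_subset ⟨self_mem_kempeChain r, .rfl⟩ ?_
    rintro v ⟨hv, hrv⟩ u hvu hu
    have hadj : (G.induce (kempeChain G c a b r)).Adj ⟨v, hv⟩
        ⟨u, mem_kempeChain_of_adj hv hvu hu⟩ := hvu
    exact ⟨_, hrv.trans hadj.reachable⟩
  exact (hsub v.2).2

/-- The Kempe chain of `r` for the colours `a` and `b` contains three distinct vertices `r`, `q` and
`q'` of degree at most one in the chain. -/
structure HasThreeLeaves (G : SimpleGraph V) (c : V → Fin k) (a b : Fin k) (r q q' : V) :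
    Prop where
  color : c r = a ∨ c r = b
  left_mem : q ∈ kempeChain G c a b r
  right_mem : q' ∈ kempeChain G c a b r
  ne_left : r ≠ q
  ne_right : r ≠ q'
  left_ne_right : q ≠ q'
  subsingleton : ∀ v ∈ ({r, q, q'} : Set V), {u | G.Adj v u ∧ (c u = a ∨ c u = b)}.Subsingleton

theorem IsProperColoring.subsingleton_pair (hc : IsProperColoring G k c)
    (h : {u | G.Adj r u ∧ c u = b}.Subsingleton) :
    {u | G.Adj r u ∧ (c u = c r ∨ c u = b)}.Subsingleton :=
  h.anti fun _ hu => ⟨hu.1, hu.2.resolve_left (hc hu.1).symm⟩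

variable [Finite V]

-- Such a chain is not a path, so it has a vertex with three neighbours of one colour, and this
-- vertex is not locked.
theorem HasThreeLeaves.exists_free_color (h : HasThreeLeaves G c a b r q q')
    (hdeg : ∀ v, (G.neighborSet v).ncard ≤ k) (hc : IsProperColoring G k c) :
    ∃ v ∉ ({r, q, q'} : Set V), (c v = a ∨ c v = b) ∧
      ∃ e, e ≠ a ∧ e ≠ b ∧ ∀ u, G.Adj v u → c u ≠ e := by
  have hcolor {v : V} (hv : v ∈ kempeChain G c a b r) : c v = a ∨ c v = b :=
    (isKempeUnion_kempeChain h.color).color_mem v hv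
  have hdegree (v : kempeChain G c a b r) (hv : v.1 ∈ ({r, q, q'} : Set V)) :
      ((G.induce (kempeChain G c a b r)).neighborSet v).ncard ≤ 1 :=
    (Set.ncard_le_one (Set.toFinite _)).2 fun x hx y hy =>
      Subtype.ext (h.subsingleton v hv ⟨hx, hcolor x.2⟩ ⟨hy, hcolor y.2⟩)
  obtain ⟨v, hv⟩ := exists_three_le_ncard_neighborSet (induce_kempeChain_connected r)
    (r := ⟨r, self_mem_kempeChain r⟩) (q := ⟨q, h.left_mem⟩) (q' := ⟨q', h.right_mem⟩)
    (by simpa using h.ne_left) (by simpa using h.ne_right) (by simpa using h.left_ne_right)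
    fun v hv => hdegree v (by simpa [Subtype.ext_iff] using hv)
  obtain ⟨x, y, z, hx, hy, hz, hxy, hxz, hyz⟩ := (Set.two_lt_ncard_iff (Set.toFinite _)).1 hv
  have hsame {u w : kempeChain G c a b r} (hu : G.Adj v u) (hw : G.Adj v w) : c u = c w := by
    have hvu := hc hu
    have hvw := hc hw
    rcases hcolor v.2 with h | h <;> rcases hcolor u.2 with h' | h' <;>
      rcases hcolor w.2 with h'' | h'' <;> simp_all
  have hlocked : ¬ IsLocked G c v := not_isLocked_of_three_eq (hdeg v) hx hy hz
    (Subtype.coe_ne_coe.2 hxy) (Subtype.coe_ne_coe.2 hxz) (Subtype.coe_ne_coe.2 hyz)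
    (hsame hx hy) (hsame hy hz)
  obtain ⟨e, hev, he⟩ := exists_color_of_not_isLocked hlocked
  refine ⟨v, fun hv' => absurd (hdegree v hv') (by lia), hcolor v.2, e, ?_, ?_, he⟩
  all_goals
    rintro rfl
    have hvx : c v ≠ c x := hc hx
    have hex := he x hx
    rcases hcolor v.2 with h | h <;> rcases hcolor x.2 with h' | h' <;> simp_all

theorem ncard_setOf_update_lt {v : V} (hv : c v = a ∨ c v = b) {e : Fin k} (hea : e ≠ a)
    (heb : e ≠ b) : {u | Function.update c v e u = a ∨ Function.update c v e u = b}.ncard <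
      {u | c u = a ∨ c u = b}.ncard := by
  refine Set.ncard_lt_ncard ((Set.ssubset_iff_of_subset fun u hu => ?_).2 ⟨v, hv, ?_⟩)
  · rcases eq_or_ne u v with rfl | huv
    · exact hv
    · simpa [huv] using hu
  · simp [hea, heb]

-- Recolouring can only be repeated until the two colour classes are exhausted.
theorem not_of_hasThreeLeaves {Q : (V → Fin k) → Prop} (hdeg : ∀ v, (G.neighborSet v).ncard ≤ k)
    (hQ : ∀ c, Q c → IsProperColoring G k c ∧ HasThreeLeaves G c a b r q q')
    (hupdate : ∀ c, Q c → ∀ v ∉ ({r, q, q'} : Set V), (c v = a ∨ c v = b) → ∀ e, e ≠ a → e ≠ b →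
      (∀ u, G.Adj v u → c u ≠ e) → Q (Function.update c v e)) : ¬ Q c := by
  intro hc
  induction hn : {u | c u = a ∨ c u = b}.ncard using Nat.strong_induction_on generalizing c with
  | _ n ih =>
  subst hn
  obtain ⟨v, hv, hvc, e, hea, heb, he⟩ := (hQ c hc).2.exists_free_color hdeg (hQ c hc).1
  exact ih _ (ncard_setOf_update_lt hvc hea heb) (hupdate c hc v hv hvc e hea heb he) rfl

end KempeChainLeaves

section TwoPairs

variable {G : SimpleGraph V} {k : ℕ} {s a b x u v : V} {A B : Set V} {c : V → Fin k} {e f : Fin k}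

theorem subsingleton_color_update (h : {u | G.Adj x u ∧ c u = e}.Subsingleton) (hf : f ≠ e) :
    {u | G.Adj x u ∧ Function.update c v f u = e}.Subsingleton := by
  refine h.anti fun u ⟨hxu, hu⟩ => ⟨hxu, ?_⟩
  rcases eq_or_ne u v with rfl | huv
  · exact absurd ((Function.update_self ..).symm.trans hu) hf
  · rwa [Function.update_of_ne huv] at hu

namespace BlockedSplit

variable [Finite V]

theorem mem_kempeChain_left (H : BlockedSplit G s A B c) (hAB : A.ncard ≤ B.ncard) (ha : a ∈ A)
    (he : e ≠ c s) : a ∈ kempeChain G c (c s) e s := by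
  by_contra h
  have hS := isKempeUnion_kempeChain (G := G) (c := c) (b := e) (r := s) (.inl rfl)
  have hcolor := (H.swapOn hS).color_left_eq hAB ha
  rw [swapOn_of_notMem h, swapOn_of_mem (self_mem_kempeChain s), Equiv.swap_apply_left,
    H.color_left_eq hAB ha] at hcolor
  exact he hcolor.symm

theorem subsingleton_color_left (H : BlockedSplit G s A B c) (hAB : A.ncard ≤ B.ncard)
    (ha : a ∈ A) (he : ∀ b ∈ B, c b ≠ e) : {u | G.Adj a u ∧ c u = e}.Subsingleton := by
  obtain ⟨b, hb, hw⟩ := H.exists_isWitness_right hAB ha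
  have hne {u : V} (hu : c u = e) : u ≠ b := fun h => he b hb (h ▸ hu)
  rintro u ⟨hau, hu⟩ w ⟨haw, hw'⟩
  exact H.injOn_of_isWitness ha hb hw ⟨hau, hne hu⟩ ⟨haw, hne hw'⟩ (hu.trans hw'.symm)

theorem hasThreeLeaves_center (H : BlockedSplit G s A B c) (hAB : A.ncard ≤ B.ncard) {a' : V}
    (ha : a ∈ A) (ha' : a' ∈ A) (hne : a ≠ a') (hes : e ≠ c s) (heB : ∀ b ∈ B, c b ≠ e)
    (h : {x | G.Adj s x ∧ c x = e}.Subsingleton) : HasThreeLeaves G c (c s) e s a a' where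
  color := .inl rfl
  left_mem := H.mem_kempeChain_left hAB ha hes
  right_mem := H.mem_kempeChain_left hAB ha' hes
  ne_left := (H.mem_left ha).1.symm
  ne_right := (H.mem_left ha').1.symm
  left_ne_right := hne
  subsingleton := by
    have hleft {v : V} (hv : v ∈ A) : {u | G.Adj v u ∧ (c u = c s ∨ c u = e)}.Subsingleton :=
      H.color_left_eq hAB hv ▸
        H.isProperColoring.subsingleton_pair (H.subsingleton_color_left hAB hv heB)
    rintro v (rfl | rfl | rfl)
    exacts [H.isProperColoring.subsingleton_pair h, hleft ha, hleft ha']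

theorem nontrivial_color_center (H : BlockedSplit G s A B c) (hAB : A.ncard ≤ B.ncard)
    (hA : A.ncard = 2) (hes : e ≠ c s) (heB : ∀ b ∈ B, c b ≠ e) :
    {x | G.Adj s x ∧ c x = e}.Nontrivial := by
  rw [← Set.not_subsingleton_iff]
  intro h
  obtain ⟨a, a', hne, rfl⟩ := Set.ncard_eq_two.1 hA
  refine not_of_hasThreeLeaves (r := s) (q := a) (q' := a') (a := c s) (b := e)
    (Q := fun d => BlockedSplit G s {a, a'} B d ∧ d s = c s ∧ (∀ b ∈ B, d b ≠ e) ∧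
      {x | G.Adj s x ∧ d x = e}.Subsingleton) (fun v => (H.ncard_neighborSet v).le)
    (fun d ⟨Hd, hds, hdB, hd⟩ => ⟨Hd.isProperColoring, hds ▸
      Hd.hasThreeLeaves_center hAB (.inl rfl) (.inr rfl) hne (hds ▸ hes) hdB hd⟩)
    ?_ ⟨H, rfl, heB, h⟩
  rintro d ⟨Hd, hds, hdB, hd⟩ v hv hvc f - hfe hfree
  refine ⟨Hd.update hfree, ?_, fun b hb => ?_, subsingleton_color_update hd hfe⟩
  · rwa [Function.update_of_ne (ne_of_mem_of_not_mem (Set.mem_insert s _) hv)]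
  · have hbv : b ≠ v := by
      rintro rfl
      exact hvc.elim (fun h => Hd.color_right_ne hb (h.trans hds.symm)) (hdB b hb)
    rw [Function.update_of_ne hbv]
    exact hdB b hb

theorem ncard_colors_le (H : BlockedSplit G s A B c) (hA : A.ncard = 2) :
    (insert (c s) (c '' B)).ncard ≤ 3 := by
  have := Set.ncard_insert_le (c s) (c '' B)
  have := Set.ncard_image_le (f := c) (Set.toFinite B)
  have := H.ncard_right_le
  lia

theorem subsingleton_color_center_of_nontrivial (H : BlockedSplit G s A B c)
    (hAB : A.ncard ≤ B.ncard) (hA : A.ncard = 2) (he : {x | G.Adj s x ∧ c x = e}.Nontrivial)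
    (hfe : f ≠ e) : {x | G.Adj s x ∧ c x = f}.Subsingleton := by
  obtain ⟨x, ⟨hx, rfl⟩, y, ⟨hy, hyx⟩, hxy⟩ := he
  have hlocked := H.isLocked_center hAB (Set.nonempty_of_ncard_ne_zero (by lia))
  exact hlocked.subsingleton_color (H.ncard_neighborSet s).le hx hy hxy hyx.symm hfe

theorem degree_le_four (H : BlockedSplit G s A B c) (hAB : A.ncard ≤ B.ncard)
    (hA : A.ncard = 2) : k ≤ 4 := by
  by_contra! hk
  have hcard := H.ncard_colors_le hA
  obtain ⟨e, he⟩ := exists_color_notMem (hcard.trans_lt (by lia : 3 < k))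
  obtain ⟨f, hf⟩ := exists_color_notMem
    ((Set.ncard_insert_le e _).trans_lt (by lia : (insert (c s) (c '' B)).ncard + 1 < k))
  have hnontrivial {g : Fin k} (hg : g ∉ insert (c s) (c '' B)) :
      {x | G.Adj s x ∧ c x = g}.Nontrivial :=
    H.nontrivial_color_center hAB hA (fun h => hg (.inl h)) fun b hb h => hg (.inr ⟨b, hb, h⟩)
  exact Set.not_subsingleton_iff.2 (hnontrivial fun h => hf (.inr h))
    (H.subsingleton_color_center_of_nontrivial hAB hA (hnontrivial he) fun h => hf (.inl h))

theorem exists_nontrivial_color_center (H : BlockedSplit G s A B c) (hk : 4 ≤ k)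
    (hAB : A.ncard ≤ B.ncard) (hA : A.ncard = 2) :
    ∃ e, (∀ b ∈ B, c b ≠ e) ∧ {x | G.Adj s x ∧ c x = e}.Nontrivial := by
  obtain ⟨e, he⟩ := exists_color_notMem ((H.ncard_colors_le hA).trans_lt (by lia : 3 < k))
  have heB : ∀ b ∈ B, c b ≠ e := fun b hb h => he (.inr ⟨b, hb, h⟩)
  exact ⟨e, heB, H.nontrivial_color_center hAB hA (fun h => he (.inl h)) heB⟩

theorem subsingleton_color_center (H : BlockedSplit G s A B c) (hk : 4 ≤ k)
    (hAB : A.ncard ≤ B.ncard) (hA : A.ncard = 2) (hb : b ∈ B) :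
    {x | G.Adj s x ∧ c x = c b}.Subsingleton := by
  obtain ⟨e, heB, he⟩ := H.exists_nontrivial_color_center hk hAB hA
  exact H.subsingleton_color_center_of_nontrivial hAB hA he (heB b hb)

theorem isLocked_of_adj_center (H : BlockedSplit G s A B c) (hk : 4 ≤ k)
    (hAB : A.ncard ≤ B.ncard) (hA : A.ncard = 2) (hsx : G.Adj s x) : IsLocked G c x := by
  by_contra h
  obtain ⟨e, he, hfree⟩ := exists_color_of_not_isLocked h
  have H' := H.update hfree
  have hA' : A.Nonempty := Set.nonempty_of_ncard_ne_zero (by lia)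
  have hcx : c x ≠ Function.update c x e s := by
    rw [Function.update_of_ne hsx.ne]
    exact (H.isProperColoring hsx).symm
  have hback {u : V} (hu : Function.update c x e u = c x) : u ≠ x ∧ c u = c x := by
    have hux : u ≠ x := by
      rintro rfl
      rw [Function.update_self] at hu
      exact he hu
    exact ⟨hux, by rwa [Function.update_of_ne hux] at hu⟩
  by_cases hb : ∃ b ∈ B, c b = c x
  · obtain ⟨b, hb, hbx⟩ := hb
    obtain ⟨u, hsu, hu⟩ := H'.isLocked_center hAB hA' (c x) hcx
    exact (hback hu).1 (H.subsingleton_color_center hk hAB hA hb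
      ⟨hsu, (hback hu).2.trans hbx.symm⟩ ⟨hsx, hbx.symm⟩)
  · push Not at hb
    obtain ⟨u, ⟨hsu, hu⟩, w, ⟨hsw, hw⟩, huw⟩ := H'.nontrivial_color_center hAB hA hcx
      fun b hbB => by
        have hbx : b ≠ x := by rintro rfl; exact (H.mem_right hbB).2.1 hsx
        rw [Function.update_of_ne hbx]
        exact hb b hbB
    exact not_isLocked_of_three_eq (H.ncard_neighborSet s).le hsx hsu hsw (hback hu).1.symm
      (hback hw).1.symm huw (hback hu).2.symm ((hback hu).2.trans (hback hw).2.symm)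
      (H.isLocked_center hAB hA')

theorem subsingleton_color_right (H : BlockedSplit G s A B c) (hAB : A.ncard ≤ B.ncard)
    (hA : A.ncard = 2) (hb : b ∈ B) (he : e ≠ c s) :
    {u | G.Adj b u ∧ c u = e}.Subsingleton := by
  obtain ⟨a, a', hne, hAeq⟩ := Set.ncard_eq_two.1 hA
  have ha : a ∈ A := hAeq ▸ .inl rfl
  have ha' : a' ∈ A := hAeq ▸ .inr rfl
  have hcolor := H.color_left_eq hAB ha
  exact (H.isLocked_right hAB (by lia) hb).subsingleton_color (H.ncard_neighborSet b).le
    (H.adj a ha b hb).symm (H.adj a' ha' b hb).symm hne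
    (hcolor.trans (H.color_left_eq hAB ha').symm) (hcolor ▸ he)

theorem subsingleton_color_inter (H : BlockedSplit G s A B c) (hk : 4 ≤ k)
    (hAB : A.ncard ≤ B.ncard) (hA : A.ncard = 2) (ha : a ∈ A) (hsx : G.Adj s x)
    (hax : G.Adj a x) (he : e ≠ c s) : {u | G.Adj x u ∧ c u = e}.Subsingleton :=
  (H.isLocked_of_adj_center hk hAB hA hsx).subsingleton_color (H.ncard_neighborSet x).le hsx.symm
    hax.symm (H.mem_left ha).1.symm (H.color_left_eq hAB ha).symm he

theorem not_adj_right (H : BlockedSplit G s A B c) (hk : 4 ≤ k) (hAB : A.ncard ≤ B.ncard)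
    (hA : A.ncard = 2) (ha : a ∈ A) (hb : b ∈ B) (hsx : G.Adj s x) (hax : G.Adj a x)
    (hxb : c x = c b) {b' : V} (hb' : b' ∈ B) : ¬ G.Adj x b' := by
  intro hxb'
  have hc := H.isProperColoring
  have hne : b ≠ b' := by rintro rfl; exact hc hxb' hxb
  have hS : IsKempeUnion G c (c b) (c b') {x, b'} := by
    refine ⟨?_, ?_⟩
    · rintro v (rfl | rfl)
      exacts [.inl hxb, .inr rfl]
    · rintro v (rfl | rfl) u hvu (hu | hu)
      · exact absurd (hxb.trans hu.symm) (hc hvu)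
      · exact .inr (H.subsingleton_color_inter hk hAB hA ha hsx hax (H.color_right_ne hb')
          ⟨hvu, hu⟩ ⟨hxb', rfl⟩)
      · exact .inl (H.subsingleton_color_right hAB hA hb' (H.color_right_ne hb)
          ⟨hvu, hu⟩ ⟨hxb'.symm, hxb⟩)
      · exact absurd hu.symm (hc hvu)
  have hbS : b ∉ ({x, b'} : Set V) := by
    rintro (rfl | rfl)
    exacts [(H.mem_right hb).2.1 hsx, hne rfl]
  refine hne ((H.swapOn hS).injOn_right hb hb' ?_)
  rw [swapOn_of_notMem hbS, swapOn_of_mem (.inr rfl), Equiv.swap_apply_right]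

-- After exchanging the colours along the chain of `b`, `a` still needs a witness at `x`.
theorem mem_kempeChain_inter (H : BlockedSplit G s A B c) (hAB : A.ncard ≤ B.ncard) (ha : a ∈ A)
    (hb : b ∈ B) (hinter : G.neighborSet s ∩ G.neighborSet a = {x}) (hxb : c x = c b)
    (he : ∀ b ∈ B, c b ≠ e) : x ∈ kempeChain G c (c b) e b := by
  by_contra hx
  have hS := isKempeUnion_kempeChain (G := G) (c := c) (b := e) (r := b) (.inl rfl)
  obtain ⟨b', hb', -, -, y, hsy, hay, hyb'⟩ :=
    (H.swapOn hS).exists_isWitness_right hAB ha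
  obtain rfl : y = x := hinter.subset ⟨hsy, hay⟩
  rw [swapOn_of_notMem hx, hxb] at hyb'
  by_cases hb'S : b' ∈ kempeChain G c (c b) e b
  · obtain rfl : b' = b :=
      H.injOn_right hb' hb ((hS.color_mem b' hb'S).resolve_right (he b' hb'))
    rw [swapOn_of_mem hb'S, Equiv.swap_apply_left] at hyb'
    exact he b' hb' hyb'
  · rw [swapOn_of_notMem hb'S] at hyb'
    exact hb'S (H.injOn_right hb hb' hyb' ▸ self_mem_kempeChain b)

theorem mem_kempeChain_center (H : BlockedSplit G s A B c) (hk : 4 ≤ k)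
    (hAB : A.ncard ≤ B.ncard) (hA : A.ncard = 2) (ha : a ∈ A) (hb : b ∈ B)
    (hinter : G.neighborSet s ∩ G.neighborSet a = {x}) (hxb : c x = c b) (hsu : G.Adj s u)
    (hu : ∀ b ∈ B, c b ≠ c u) : u ∈ kempeChain G c (c b) (c u) b := by
  by_contra huS
  have hsx : x ∈ G.neighborSet s ∩ G.neighborSet a := hinter ▸ rfl
  have hx := H.mem_kempeChain_inter hAB ha hb hinter hxb hu
  have hS := isKempeUnion_kempeChain (G := G) (c := c) (b := c u) (r := b) (.inl rfl)
  have hub := swapOn_of_mem (c := c) (a := c b) (b := c u)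
    (self_mem_kempeChain (G := G) (c := c) (a := c b) (b := c u) b)
  rw [Equiv.swap_apply_left] at hub
  have hux := (H.swapOn hS).subsingleton_color_center hk hAB hA hb
    ⟨hsu, by rw [swapOn_of_notMem huS, hub]⟩
    ⟨hsx.1, by rw [swapOn_of_mem hx, hub, hxb, Equiv.swap_apply_left]⟩
  exact huS (hux ▸ hx)

theorem hasThreeLeaves_right (H : BlockedSplit G s A B c) (hk : 4 ≤ k) (hAB : A.ncard ≤ B.ncard)
    (hA : A.ncard = 2) (ha : a ∈ A) (hb : b ∈ B)
    (hinter : G.neighborSet s ∩ G.neighborSet a = {x}) (hxb : c x = c b) (hsu : G.Adj s u)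
    (hu : ∀ b ∈ B, c b ≠ c u) (h : {p | G.Adj u p ∧ c p = c b}.Subsingleton) :
    HasThreeLeaves G c (c b) (c u) b x u := by
  have hc := H.isProperColoring
  have hsx : x ∈ G.neighborSet s ∩ G.neighborSet a := hinter ▸ rfl
  have hus : c u ≠ c s := (hc hsu).symm
  refine ⟨.inl rfl, H.mem_kempeChain_inter hAB ha hb hinter hxb hu,
    H.mem_kempeChain_center hk hAB hA ha hb hinter hxb hsu hu, ?_, ?_, ?_, ?_⟩
  · rintro rfl; exact (H.mem_right hb).2.1 hsx.1
  · rintro rfl; exact (H.mem_right hb).2.1 hsu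
  · rintro rfl; exact hu b hb hxb.symm
  · rintro v (rfl | rfl | rfl)
    · exact hc.subsingleton_pair (H.subsingleton_color_right hAB hA hb hus)
    · exact hxb ▸ hc.subsingleton_pair (H.subsingleton_color_inter hk hAB hA ha hsx.1 hsx.2 hus)
    · simpa only [or_comm] using hc.subsingleton_pair h

theorem not_subsingleton_color (H : BlockedSplit G s A B c) (hk : 4 ≤ k)
    (hAB : A.ncard ≤ B.ncard) (hA : A.ncard = 2) (ha : a ∈ A) (hb : b ∈ B)
    (hinter : G.neighborSet s ∩ G.neighborSet a = {x}) (hxb : c x = c b) (hsu : G.Adj s u)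
    (hu : ∀ b ∈ B, c b ≠ c u) : ¬ {p | G.Adj u p ∧ c p = c b}.Subsingleton := by
  intro h
  refine not_of_hasThreeLeaves (r := b) (q := x) (q' := u) (a := c b) (b := c u)
    (Q := fun d => BlockedSplit G s A B d ∧ d b = c b ∧ d x = c b ∧ d u = c u ∧
      (∀ b ∈ B, d b ≠ c u) ∧ {p | G.Adj u p ∧ d p = c b}.Subsingleton)
    (fun v => (H.ncard_neighborSet v).le)
    (fun d ⟨Hd, hdb, hdx, hdu, hdB, hd⟩ => ⟨Hd.isProperColoring, ?_⟩)
    ?_ ⟨H, rfl, hxb, rfl, hu, h⟩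
  · rw [← hdb, ← hdu] at *
    exact Hd.hasThreeLeaves_right hk hAB hA ha hb hinter hdx hsu hdB hd
  rintro d ⟨Hd, hdb, hdx, hdu, hdB, hd⟩ v hv hvc f hfb - hfree
  have hupdate {w : V} (hw : w ∈ ({b, x, u} : Set V)) : Function.update d v f w = d w :=
    Function.update_of_ne (ne_of_mem_of_not_mem hw hv) _ _
  refine ⟨Hd.update hfree, ?_, ?_, ?_, fun b' hb' => ?_, subsingleton_color_update hd hfb⟩
  · rwa [hupdate (.inl rfl)]
  · rwa [hupdate (.inr (.inl rfl))]
  · rwa [hupdate (.inr (.inr rfl))]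
  · have hb'v : b' ≠ v := by
      rintro rfl
      exact hvc.elim (fun h => hv (.inl (Hd.injOn_right hb' hb (h.trans hdb.symm)))) (hdB b' hb')
    rw [Function.update_of_ne hb'v]
    exact hdB b' hb'

theorem not_subsingleton_color_of_isWitness (H : BlockedSplit G s A B c) (hk : 4 ≤ k)
    (hAB : A.ncard ≤ B.ncard) (hA : A.ncard = 2) (ha : a ∈ A) (hb : b ∈ B)
    (hw : IsWitness G s c b a) (hcard : (G.neighborSet s ∩ G.neighborSet a).ncard ≤ 1)
    (hsu : G.Adj s u) (hu : ∀ b ∈ B, c b ≠ c u) : ¬ {p | G.Adj u p ∧ c p = c b}.Subsingleton := by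
  obtain ⟨x, hsx, hax, hxb⟩ := hw.exists_adj
  have hinter : G.neighborSet s ∩ G.neighborSet a = {x} :=
    Set.eq_singleton_iff_unique_mem.2 ⟨⟨hsx, hax⟩,
      fun y hy => (Set.ncard_le_one (Set.toFinite _)).1 hcard y hy x ⟨hsx, hax⟩⟩
  exact H.not_subsingleton_color hk hAB hA ha hb hinter hxb hsu hu

theorem two_le_ncard_inter (H : BlockedSplit G s A B c) (hk : 4 ≤ k) (hAB : A.ncard ≤ B.ncard)
    (hA : A.ncard = 2) (ha : a ∈ A) : 2 ≤ (G.neighborSet s ∩ G.neighborSet a).ncard := by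
  by_contra! hcard
  obtain ⟨b, hb, hw⟩ := H.exists_isWitness_right hAB ha
  obtain ⟨b', hb', hbb⟩ := Set.exists_ne_of_one_lt_ncard (by lia : 1 < B.ncard) b
  obtain ⟨a', ha', hw'⟩ := H.exists_isWitness hb'
  have hrepeat {u : V} (hsu : G.Adj s u) (hu : ∀ b ∈ B, c b ≠ c u) :
      ¬ {p | G.Adj u p ∧ c p = c b}.Subsingleton :=
    H.not_subsingleton_color_of_isWitness hk hAB hA ha hb hw (by lia) hsu hu
  rcases le_or_gt (G.neighborSet s ∩ G.neighborSet a').ncard 1 with hcard' | hcard'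
  · obtain ⟨e, heB, u, ⟨hsu, rfl⟩, -⟩ := H.exists_nontrivial_color_center hk hAB hA
    obtain ⟨p, ⟨hup, hp⟩, q, ⟨huq, hq⟩, hpq⟩ := Set.not_subsingleton_iff.1 (hrepeat hsu heB)
    refine H.not_subsingleton_color_of_isWitness hk hAB hA ha' hb' hw' hcard' hsu heB ?_
    exact (H.isLocked_of_adj_center hk hAB hA hsu).subsingleton_color (H.ncard_neighborSet u).le
      hup huq hpq (hp.trans hq.symm) (hp ▸ fun h => hbb (H.injOn_right hb' hb h))
  · obtain ⟨x, hsx, hax, hxb⟩ := hw'.exists_adj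
    obtain ⟨y, ⟨hsy, hay⟩, hyx⟩ := Set.exists_ne_of_one_lt_ncard hcard' x
    have hinj := H.injOn_of_isWitness ha' hb' hw'
    have hne {z v : V} (hsz : G.Adj s z) (hv : v ∈ B) : z ≠ v := by
      rintro rfl
      exact (H.mem_right hv).2.1 hsz
    refine hrepeat hsy (fun v hv hvy => ?_) (H.subsingleton_color_inter hk hAB hA ha' hsy hay
      (H.color_right_ne hb))
    rcases eq_or_ne v b' with rfl | hvb
    · exact hyx (hinj ⟨hay, hne hsy hv⟩ ⟨hax, hne hsx hv⟩ (hvy.symm.trans hxb.symm))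
    · exact hne hsy hv (hinj ⟨hay, hne hsy hb'⟩ ⟨H.adj a' ha' v hv, hvb⟩ hvy.symm)

theorem disjoint_neighborSet_inter (H : BlockedSplit G s A B c) (hk : 4 ≤ k)
    (hAB : A.ncard ≤ B.ncard) (hA : A.ncard = 2) {a' : V} (ha : a ∈ A) (ha' : a' ∈ A)
    (hne : a ≠ a') :
    Disjoint (G.neighborSet s ∩ G.neighborSet a) (G.neighborSet s ∩ G.neighborSet a') := by
  rw [Set.disjoint_left]
  rintro z ⟨hsz, haz⟩ ⟨-, haz'⟩
  have hcolor := H.color_left_eq hAB ha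
  exact not_isLocked_of_three_eq (H.ncard_neighborSet z).le hsz.symm haz.symm haz'.symm
    (H.mem_left ha).1.symm (H.mem_left ha').1.symm hne hcolor.symm
    (hcolor.trans (H.color_left_eq hAB ha').symm) (H.isLocked_of_adj_center hk hAB hA hsz)

-- Four neighbours of `s` are adjacent to `B`, and a witness yields one more which is not.
theorem false_of_swap {d : V → Fin k} (H : BlockedSplit G s A B c) (H' : BlockedSplit G s B A d)
    (hk : 4 ≤ k) (hA : A.ncard = 2) : False := by
  have hAB := H'.ncard_right_le
  have hBA := H.ncard_right_le
  have hB : B.ncard = 2 := by lia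
  obtain ⟨b, b', hne, hBeq⟩ := Set.ncard_eq_two.1 hB
  have hb : b ∈ B := hBeq ▸ .inl rfl
  have hb' : b' ∈ B := hBeq ▸ .inr rfl
  obtain ⟨a, ha, hw⟩ := H.exists_isWitness hb
  obtain ⟨x, hsx, hax, hxb⟩ := hw.exists_adj
  have hsub : G.neighborSet s ∩ G.neighborSet b ∪ G.neighborSet s ∩ G.neighborSet b' ⊆
      G.neighborSet s \ {x} := by
    have hnot {v : V} (hv : v ∈ B) : ¬ G.Adj x v :=
      H.not_adj_right hk hAB hA ha hb hsx hax hxb hv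
    rintro v (⟨hsv, hv⟩ | ⟨hsv, hv⟩)
    exacts [⟨hsv, by rintro rfl; exact hnot hb hv.symm⟩,
      ⟨hsv, by rintro rfl; exact hnot hb' hv.symm⟩]
  have hcard := Set.ncard_le_ncard hsub
  rw [Set.ncard_union_eq (H'.disjoint_neighborSet_inter hk hBA hB hb hb' hne),
    Set.ncard_sdiff_singleton_of_mem (s := G.neighborSet s) hsx, H.ncard_neighborSet] at hcard
  have := H'.two_le_ncard_inter hk hBA hB hb
  have := H'.two_le_ncard_inter hk hBA hB hb'
  have := H.degree_le_four hAB hA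
  lia

end BlockedSplit

end TwoPairs

section RegularGraphs

variable [Finite V] {G : SimpleGraph V} {k : ℕ} {s y : V} {A B : Set V} {c d : V → Fin k}

theorem BlockedSplit.right_eq_empty (hk : 4 ≤ k) (H : BlockedSplit G s A B c)
    (H' : BlockedSplit G s B A d) (hcut : ∀ i j, G.Adj i j → (G.induce {i, j}ᶜ).Preconnected) :
    B = ∅ := by
  have hBA := H.ncard_right_le
  have hAB := H'.ncard_right_le
  by_contra! hB
  have hpos := hB.ncard_pos
  rcases lt_or_ge A.ncard 2 with hA | hA
  · obtain ⟨a, rfl⟩ := Set.ncard_eq_one.1 (by lia : A.ncard = 1)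
    obtain ⟨b, rfl⟩ := Set.ncard_eq_one.1 (by lia : B.ncard = 1)
    exact H.false_of_singleton hk (hcut a b (H.adj a rfl b rfl))
  · exact H.false_of_swap H' hk (le_antisymm (H.ncard_left_le_two hAB) hA)

theorem kempeEquivFixing_of_color_eq (hdeg : ∀ v, (G.neighborSet v).ncard ≤ k)
    (hsep : (G.induce {s, y}ᶜ).Preconnected) (hy : y ∈ secondNeighborSet G s)
    (hc : IsProperColoring G k c) (hd : IsProperColoring G k d) (hcy : c y = c s)
    (hdy : d y = d s) : KempeEquivFixing G ∅ c d := by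
  obtain ⟨hys, -, x, hsx, hxy⟩ := hy
  have hperm := KempeEquivFixing.perm_comp G (Equiv.swap (d s) (c s)) d
  have hslack := slack_pair hdeg hsep hys hsx hxy hcy.symm
  refine (hslack.kempeEquivFixing hc (hperm.isProperColoring hd) ?_).unfrozen.trans hperm.symm
  rintro v (rfl | rfl)
  · simp
  · simp [hcy, hdy]

/-- The vertices at distance two from `s` which get the colour of `s` in some colouring
Kempe equivalent to `c`. -/
def matchableSet (G : SimpleGraph V) (s : V) (c : V → Fin k) : Set V :=
  {y ∈ secondNeighborSet G s | ∃ d, KempeEquivFixing G ∅ c d ∧ d y = d s}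

theorem kempeEquivFixing_of_mem_matchableSet (hdeg : ∀ v, (G.neighborSet v).ncard ≤ k)
    (hsep : ∀ y, (G.induce {s, y}ᶜ).Preconnected) (hc : IsProperColoring G k c)
    (hd : IsProperColoring G k d) (hyc : y ∈ matchableSet G s c) (hyd : y ∈ matchableSet G s d) :
    KempeEquivFixing G ∅ c d := by
  obtain ⟨hy, c', hcc', hc'⟩ := hyc
  obtain ⟨-, d', hdd', hd'⟩ := hyd
  exact hcc'.trans ((kempeEquivFixing_of_color_eq hdeg (hsep y) hy (hcc'.isProperColoring hc)
    (hdd'.isProperColoring hd) hc' hd').trans hdd'.symm)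

theorem blockedSplit_matchableSet (hk : 4 ≤ k) (hdeg : ∀ v, (G.neighborSet v).ncard = k)
    (hsep : ∀ y, (G.induce {s, y}ᶜ).Preconnected) (hcl : G.CliqueFree k)
    (hc : IsProperColoring G k c) :
    BlockedSplit G s (matchableSet G s c) (secondNeighborSet G s \ matchableSet G s c) c where
  isProperColoring := hc
  ncard_neighborSet := hdeg
  union_eq := Set.union_sdiff_cancel (Set.sep_subset _ _)
  color_ne d hd b hb hbs := hb.2 ⟨hb.1, d, hd, hbs⟩
  adj := by
    intro a ha b hb
    by_contra hab
    have hI : G.IsIndepSet {s, a, b} := by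
      simp only [SimpleGraph.IsIndepSet, Set.Pairwise, Set.mem_insert_iff, Set.mem_singleton_iff]
      have hsa := ha.1.2.1
      have hsb := hb.1.2.1
      rintro u (rfl | rfl | rfl) w (rfl | rfl | rfl) - <;> simp_all [G.adj_comm]
    obtain ⟨d, e, hd, hde⟩ := exists_isProperColoring_const_on hk (fun v => (hdeg v).le) hcl hI
    have hds := hde s (by simp)
    have had : a ∈ matchableSet G s d := ⟨ha.1, d, .refl d, (hde a (by simp)).trans hds.symm⟩
    have hcd := kempeEquivFixing_of_mem_matchableSet (fun v => (hdeg v).le) hsep hc hd ha had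
    exact hb.2 ⟨hb.1, d, hcd, (hde b (by simp)).trans hds.symm⟩

theorem exists_mem_matchableSet (hk : 4 ≤ k) (hdeg : ∀ v, (G.neighborSet v).ncard ≤ k)
    (hcl : G.CliqueFree k) (hy : y ∈ secondNeighborSet G s) :
    ∃ d : V → Fin k, IsProperColoring G k d ∧ y ∈ matchableSet G s d := by
  have hI : G.IsIndepSet {s, y} := by
    rintro u (rfl | rfl) w (rfl | rfl) - huw
    exacts [huw.ne rfl, hy.2.1 huw, hy.2.1 huw.symm, huw.ne rfl]
  obtain ⟨d, e, hd, hde⟩ := exists_isProperColoring_const_on hk hdeg hcl hI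
  exact ⟨d, hd, hy, d, .refl d, (hde y (by simp)).trans (hde s (by simp)).symm⟩

-- The matchable sets of inequivalent colourings are disjoint, and each is at least as large as its
-- complement in the second neighbourhood, so they are complementary.
theorem secondNeighborSet_subset_matchableSet (hk : 4 ≤ k)
    (hdeg : ∀ v, (G.neighborSet v).ncard = k) (hsep : ∀ y, (G.induce {s, y}ᶜ).Preconnected)
    (hcut : ∀ i j, G.Adj i j → (G.induce {i, j}ᶜ).Preconnected) (hcl : G.CliqueFree k)
    (hc : IsProperColoring G k c) : secondNeighborSet G s ⊆ matchableSet G s c := by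
  intro b hb
  by_contra hbc
  obtain ⟨d, hd, hbd⟩ := exists_mem_matchableSet hk (fun v => (hdeg v).le) hcl hb
  have Hc := blockedSplit_matchableSet hk hdeg hsep hcl hc
  have Hd := blockedSplit_matchableSet hk hdeg hsep hcl hd
  have hsub : matchableSet G s d ⊆ secondNeighborSet G s \ matchableSet G s c := by
    refine fun y hyd => ⟨hyd.1, fun hyc => hbc ?_⟩
    obtain ⟨hb, d', hdd', hd'⟩ := hbd
    exact ⟨hb, d', (kempeEquivFixing_of_mem_matchableSet (fun v => (hdeg v).le) hsep hc hd hyc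
      hyd).trans hdd', hd'⟩
  have hcsub : matchableSet G s c ⊆ secondNeighborSet G s := Set.sep_subset _ _
  have heq : matchableSet G s d = secondNeighborSet G s \ matchableSet G s c := by
    refine Set.eq_of_subset_of_ncard_le hsub ?_
    have hcard := Set.ncard_sdiff_add_ncard_of_subset hcsub
    have hcard' := Set.ncard_sdiff_add_ncard_of_subset (hsub.trans Set.sdiff_subset)
    have := Hc.ncard_right_le
    have := Hd.ncard_right_le
    lia
  rw [heq, Set.sdiff_sdiff_cancel_left hcsub] at Hd
  exact Set.notMem_empty b (Hc.right_eq_empty hk Hd hcut ▸ ⟨hb, hbc⟩)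

theorem kempeEquivFixing_of_cliqueFree [Nonempty V] (hk : 4 ≤ k)
    (hdeg : ∀ v, (G.neighborSet v).ncard = k) (hG : G.Preconnected)
    (hcut₁ : ∀ x, (G.induce {x}ᶜ).Preconnected)
    (hcut₂ : ∀ i j, G.Adj i j → (G.induce {i, j}ᶜ).Preconnected)
    (hxy : ∃ x y, x ≠ y ∧ ¬ G.Adj x y) (hcl : G.CliqueFree k) (hc : IsProperColoring G k c)
    (hd : IsProperColoring G k d) : KempeEquivFixing G ∅ c d := by
  obtain ⟨s, hs⟩ := exists_preconnected_induce_pair_compl hG hcut₁ fun v => by rw [hdeg]; lia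
  obtain ⟨y, x, hys, hsy, hsx, hxy⟩ := exists_adj_adj_of_not_adj hG hdeg hxy s
  have hy : y ∈ secondNeighborSet G s := ⟨hys, hsy, x, hsx, hxy⟩
  have hmatch {c : V → Fin k} (hc : IsProperColoring G k c) : y ∈ matchableSet G s c :=
    secondNeighborSet_subset_matchableSet hk hdeg hs hcut₂ hcl hc hy
  exact kempeEquivFixing_of_mem_matchableSet (fun v => (hdeg v).le) hs hc hd (hmatch hc) (hmatch hd)

theorem kempeEquivFixing_of_ncard_neighborSet_eq (hk : 4 ≤ k)
    (hdeg : ∀ v, (G.neighborSet v).ncard = k) (hG : G.Connected)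
    (hxy : ∃ x y, x ≠ y ∧ ¬ G.Adj x y) (hc : IsProperColoring G k c)
    (hd : IsProperColoring G k d) : KempeEquivFixing G ∅ c d := by
  have := hG.nonempty
  have hle (v : V) : (G.neighborSet v).ncard ≤ k := (hdeg v).le
  by_cases hcut : ∃ P Q, IsCliqueCut G P Q
  · obtain ⟨P, Q, hPQ⟩ := hcut
    exact hPQ.kempeEquivFixing hG.preconnected hle hc hd
  have hclique {K : Set V} (hK : G.IsClique K) : (G.induce Kᶜ).Preconnected :=
    not_not.1 fun h => hcut (exists_isCliqueCut hK h)
  have hpair (i j : V) (hij : G.Adj i j) : (G.induce {i, j}ᶜ).Preconnected :=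
    hclique (isClique_pair.2 fun _ => hij)
  by_cases hcl : G.CliqueFree k
  · exact kempeEquivFixing_of_cliqueFree hk hdeg hG.preconnected
      (fun x => hclique (isClique_singleton x)) hpair hxy hcl hc hd
  · obtain ⟨Q, hQ⟩ : ∃ Q, G.IsNClique k Q := by simpa [CliqueFree] using hcl
    have hcard : (Q : Set V).ncard = k := by rw [Set.ncard_coe_finset, hQ.card_eq]
    obtain ⟨u, hu⟩ := exists_cliqueExits (by lia) hdeg hcard hQ.isClique
    exact hu.kempeEquivFixing hk hle hpair hc hd

end RegularGraphs

/-- For every integer `k ≥ 4`, if `G` is a connected non-complete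
`k`-regular graph, then the set of `k`-colourings of `G` is a Kempe class. -/
theorem stmt0 {V : Type*} [Fintype V] (k : ℕ) (hk : 4 ≤ k) (G : SimpleGraph V)
    [DecidableRel G.Adj] (hreg : G.IsRegularOfDegree k) (hconn : G.Connected)
    (hnc : G ≠ ⊤) : KempeClass G k := by
  intro c c' hc hc'
  have hdeg (v : V) : (G.neighborSet v).ncard = k := by
    rw [← hreg v, Set.ncard_eq_toFinset_card', ← card_neighborFinset_eq_degree]
    rfl
  have hxy : ∃ x y, x ≠ y ∧ ¬ G.Adj x y := by
    by_contra! h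
    exact hnc (top_le_iff.1 fun x y hxy => h x y hxy)
  exact (kempeEquivFixing_of_ncard_neighborSet_eq hk hdeg hconn hxy hc hc').kempeEquiv
end

section
/- Let k be a positive integer and let G1, G2 be graphs whose intersection G1 ∩ G2 is a complete graph. If the set of proper k-colourings of G1 is a Kempe class and the set of proper k-colourings of G2 is a Kempe class, then the set of proper k-colourings of G1 ∪ G2 is a Kempe class. -/
open SimpleGraph
open scoped Classical

variable {V : Type*}

/-!
A Kempe chain of `G` meets each side `V1`, `V2` of the clique separation in a Kempe chain of that
side, because the clique `V1 ∩ V2` meets any Kempe chain of a side in all or none of its vertices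
bearing the two colours. So Kempe changes of `G[V1]` lift to Kempe changes of `G`, and the target
colouring can be reached on `V1`. Afterwards `V1` is kept fixed: a Kempe change of `G[V2]` whose
chain meets the clique is replaced by swapping the two colours on the vertices of `V2 \ V1` outside
the chain, which has the same effect on `V2` up to a permutation of the colours. The permutation
accumulated in this way fixes the colours of the clique, and is undone at the end by finitely many
Kempe changes outside `V1`.
-/

section ClosedWithin

variable {G : SimpleGraph V} {B S T : Set V}

/-- The vertex set of the connected component of `v` in `G[B]`; it is a Kempe chain when `B` is the
set of vertices bearing one of two colours. It is empty if `v ∉ B`. -/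
def inducedComponent (G : SimpleGraph V) (B : Set V) (v : V) : Set V :=
  {w | ∃ (hv : v ∈ B) (hw : w ∈ B), (G.induce B).Reachable ⟨v, hv⟩ ⟨w, hw⟩}

/-- No edge of `G[B]` leaves `S`, i.e. `S ∩ B` is a union of components of `G[B]`. The set `S` need
not be contained in `B`. -/
def IsClosedWithin (G : SimpleGraph V) (B S : Set V) : Prop :=
  ∀ ⦃x y : V⦄, G.Adj x y → x ∈ B → y ∈ B → x ∈ S → y ∈ S

theorem IsClosedWithin.sdiff (hS : IsClosedWithin G B S) (hT : IsClosedWithin G B T) :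
    IsClosedWithin G B (S \ T) := fun _ _ hxy hx hy hxS =>
  ⟨hS hxy hx hy hxS.1, fun hyT => hxS.2 (hT hxy.symm hy hx hyT)⟩

theorem IsClosedWithin.preimage_val (hS : IsClosedWithin G B S) (A : Set V) :
    IsClosedWithin (G.induce A) (Subtype.val ⁻¹' B) (Subtype.val ⁻¹' S) :=
  fun _ _ hxy hx hy hxS => hS hxy hx hy hxS

theorem isClosedWithin_inducedComponent (G : SimpleGraph V) (B : Set V) (v : V) :
    IsClosedWithin G B (inducedComponent G B v) := by
  rintro x y hxy hx hy ⟨hv, _, hvx⟩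
  have hxy' : (G.induce B).Adj ⟨x, hx⟩ ⟨y, hy⟩ := hxy
  exact ⟨hv, hy, hvx.trans hxy'.reachable⟩

theorem mem_inducedComponent_self {v : V} (hv : v ∈ B) : v ∈ inducedComponent G B v :=
  ⟨hv, hv, .refl _⟩

theorem IsClosedWithin.inducedComponent_subset (hS : IsClosedWithin G B S) {v : V} (hv : v ∈ S) :
    inducedComponent G B v ⊆ S := by
  rintro w ⟨hvB, hwB, hvw⟩
  suffices mem_of_reachable : ∀ x : B, (G.induce B).Reachable ⟨v, hvB⟩ x → x.1 ∈ S from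
    mem_of_reachable ⟨w, hwB⟩ hvw
  intro x hvx
  rw [reachable_iff_reflTransGen] at hvx
  induction hvx with
  | refl => exact hv
  | @tail y z _ hyz ih => exact hS hyz y.2 z.2 ih

end ClosedWithin

section CliqueSeparation

variable {G : SimpleGraph V} {V1 V2 B : Set V}

/-- `G` is the union of `G[V1]` and `G[V2]`, and the intersection `G[V1 ∩ V2]` of these two graphs
is complete. -/
structure IsCliqueSeparation (G : SimpleGraph V) (V1 V2 : Set V) : Prop where
  union_eq_univ : V1 ∪ V2 = Set.univ
  mem_of_adj : ∀ x y : V, G.Adj x y → (x ∈ V1 ∧ y ∈ V1) ∨ (x ∈ V2 ∧ y ∈ V2)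
  isClique : G.IsClique (V1 ∩ V2)

namespace IsCliqueSeparation

theorem symm (h : IsCliqueSeparation G V1 V2) : IsCliqueSeparation G V2 V1 where
  union_eq_univ := Set.union_comm V1 V2 ▸ h.union_eq_univ
  mem_of_adj x y hxy := (h.mem_of_adj x y hxy).symm
  isClique := Set.inter_comm V1 V2 ▸ h.isClique

theorem mem_right_of_adj (h : IsCliqueSeparation G V1 V2) {x y : V} (hxy : G.Adj x y)
    (hx : x ∉ V1) : y ∈ V2 :=
  ((h.mem_of_adj x y hxy).resolve_left fun hV1 => hx hV1.1).2

theorem inter_inter_subset_of_isClosedWithin (h : IsCliqueSeparation G V1 V2) {S : Set V}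
    (hS : IsClosedWithin G B S) {z : V} (hz : z ∈ V1 ∩ V2 ∩ B) (hzS : z ∈ S) :
    V1 ∩ V2 ∩ B ⊆ S := by
  intro y hy
  rcases eq_or_ne z y with rfl | hzy
  · exact hzS
  · exact hS (h.isClique hz.1 hy.1 hzy) hz.2 hy.2 hzS

theorem exists_isClosedWithin_preimage_val_eq (h : IsCliqueSeparation G V1 V2) {K : Set V1}
    (hK : IsClosedWithin (G.induce V1) (Subtype.val ⁻¹' B) K) :
    ∃ S, IsClosedWithin G B S ∧ Subtype.val ⁻¹' S = K := by
  by_cases hmeet : ∃ z ∈ K, z.1 ∈ V2 ∩ B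
  · obtain ⟨z, hzK, hz2, hzB⟩ := hmeet
    refine ⟨{x | ∀ hx : x ∈ V1, ⟨x, hx⟩ ∈ K}, fun x y hxy hx hy hxS hy1 => ?_, ?_⟩
    · by_cases hx1 : x ∈ V1
      · exact hK (x := ⟨x, hx1⟩) hxy hx hy (hxS hx1)
      · have hy2 := h.mem_right_of_adj hxy hx1
        rcases eq_or_ne z ⟨y, hy1⟩ with rfl | hzy
        · exact hzK
        · have hzy' := h.isClique ⟨z.2, hz2⟩ ⟨hy1, hy2⟩ fun heq => hzy (Subtype.ext heq)
          exact hK (x := z) hzy' hzB hy hzK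
    · ext x
      exact ⟨fun hx => hx x.2, fun hx _ => hx⟩
  · refine ⟨Subtype.val '' K, ?_, Set.preimage_image_eq K Subtype.val_injective⟩
    rintro _ y hxy hx hy ⟨x, hxK, rfl⟩
    have hy1 : y ∈ V1 := h.symm.mem_right_of_adj hxy fun hx2 => hmeet ⟨x, hxK, hx2, hx⟩
    exact ⟨⟨y, hy1⟩, hK hxy hx hy hxK, rfl⟩

theorem preimage_val_inducedComponent (h : IsCliqueSeparation G V1 V2) (B : Set V) (v : V1) :
    Subtype.val ⁻¹' inducedComponent G B v =
      inducedComponent (G.induce V1) (Subtype.val ⁻¹' B) v := by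
  by_cases hv : v.1 ∈ B
  · apply subset_antisymm
    · obtain ⟨S, hS, hSK⟩ := h.exists_isClosedWithin_preimage_val_eq
        (isClosedWithin_inducedComponent (G.induce V1) (Subtype.val ⁻¹' B) v)
      rw [← hSK]
      refine Set.preimage_mono (hS.inducedComponent_subset ?_)
      exact hSK.ge (mem_inducedComponent_self hv)
    · exact ((isClosedWithin_inducedComponent G B v).preimage_val V1).inducedComponent_subset
        (mem_inducedComponent_self hv)
  · ext w
    exact ⟨fun hw => (hv hw.1).elim, fun hw => (hv hw.1).elim⟩

end IsCliqueSeparation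

end CliqueSeparation

section PermuteOn

variable {κ : Type*} {a b : κ} {c : V → κ} {S T : Set V}

/-- The vertices bearing one of the colours `a` and `b`, on which a Kempe change with these two
colours may act. -/
def bicolored (c : V → κ) (a b : κ) : Set V :=
  {v | c v = a ∨ c v = b}

/-- The colouring obtained from `c` by permuting the colours on `S` by `π`; a Kempe change is the
case of a transposition and a Kempe chain. -/
noncomputable def permuteOn (π : Equiv.Perm κ) (S : Set V) (c : V → κ) : V → κ :=
  S.piecewise (π ∘ c) c

theorem permuteOn_of_mem {π : Equiv.Perm κ} {v : V} (hv : v ∈ S) :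
    permuteOn π S c v = π (c v) :=
  Set.piecewise_eq_of_mem _ _ _ hv

theorem permuteOn_of_notMem {π : Equiv.Perm κ} {v : V} (hv : v ∉ S) :
    permuteOn π S c v = c v :=
  Set.piecewise_eq_of_notMem _ _ _ hv

theorem permuteOn_sdiff (π : Equiv.Perm κ) (c : V → κ) (hTS : T ⊆ S) :
    permuteOn π (S \ T) (permuteOn π T c) = permuteOn π S c := by
  funext v
  by_cases hvT : v ∈ T
  · simp [permuteOn, hvT, hTS hvT]
  · simp [permuteOn, hvT, Set.piecewise]

theorem permuteOn_mul (σ π : Equiv.Perm κ) (S : Set V) (c : V → κ) :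
    permuteOn (σ * π) S c = permuteOn σ S (permuteOn π S c) := by
  funext v
  by_cases hv : v ∈ S <;> simp [permuteOn, hv]

theorem bicolored_perm_comp (π : Equiv.Perm κ) (c : V → κ) (a b : κ) :
    bicolored (π ∘ c) (π a) (π b) = bicolored c a b := by
  simp [bicolored]

variable [DecidableEq κ]

theorem permuteOn_swap_of_notMem_bicolored {v : V} (hv : v ∉ bicolored c a b) :
    permuteOn (Equiv.swap a b) S c v = c v := by
  by_cases hvS : v ∈ S
  · rw [permuteOn_of_mem hvS]
    exact Equiv.swap_apply_of_ne_of_ne (fun h => hv (.inl h)) fun h => hv (.inr h)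
  · exact permuteOn_of_notMem hvS

theorem permuteOn_swap_congr {v : V} (h : v ∈ bicolored c a b → (v ∈ S ↔ v ∈ T)) :
    permuteOn (Equiv.swap a b) S c v = permuteOn (Equiv.swap a b) T c v := by
  by_cases hv : v ∈ bicolored c a b
  · simp only [permuteOn, Set.piecewise, h hv]
  · simp only [permuteOn_swap_of_notMem_bicolored hv]

theorem swap_comp_permuteOn_swap (a b : κ) (S : Set V) (c : V → κ) :
    Equiv.swap a b ∘ permuteOn (Equiv.swap a b) S c = permuteOn (Equiv.swap a b) Sᶜ c := by
  funext v
  by_cases hv : v ∈ S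
  · rw [Function.comp_apply, permuteOn_of_mem hv, permuteOn_of_notMem (not_not.2 hv),
      Equiv.swap_apply_self]
  · rw [Function.comp_apply, permuteOn_of_notMem hv, permuteOn_of_mem hv]

theorem bicolored_permuteOn_swap (a b : κ) (S : Set V) (c : V → κ) :
    bicolored (permuteOn (Equiv.swap a b) S c) a b = bicolored c a b := by
  ext v
  by_cases hv : v ∈ S
  · simp only [bicolored, Set.mem_ofPred_eq, permuteOn_of_mem hv, Equiv.swap_apply_eq_iff,
      Equiv.swap_apply_left, Equiv.swap_apply_right, or_comm]
  · simp only [bicolored, Set.mem_ofPred_eq, permuteOn_of_notMem hv]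

theorem perm_comp_permuteOn_swap (π : Equiv.Perm κ) (a b : κ) (S : Set V)
    (c : V → κ) :
    π ∘ permuteOn (Equiv.swap a b) S c = permuteOn (Equiv.swap (π a) (π b)) S (π ∘ c) := by
  funext v
  by_cases hv : v ∈ S
  · simp only [Function.comp_apply, permuteOn_of_mem hv]
    exact π.injective.map_swap _ _ _
  · simp only [Function.comp_apply, permuteOn_of_notMem hv]

end PermuteOn

section Kempe

variable {G : SimpleGraph V} {k : ℕ} {c c' : V → Fin k} {S : Set V}

theorem kempeStep_iff : KempeStep G k c c' ↔ ∃ a b, ∃ v ∈ bicolored c a b,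
    c' = permuteOn (Equiv.swap a b) (inducedComponent G (bicolored c a b) v) c := by
  simp only [KempeStep, Subtype.exists]
  refine exists₂_congr fun a b => exists_congr fun v =>
    (exists_congr fun hv => ?_).trans exists_prop
  rw [funext_iff]
  refine forall_congr' fun w => ?_
  split_ifs with hw hvw
  · rw [permuteOn_of_mem]
    exact ⟨hv, hw, hvw⟩
  · rw [permuteOn_of_notMem]
    exact fun ⟨_, _, hvw'⟩ => hvw hvw'
  · rw [permuteOn_of_notMem]
    exact fun ⟨_, hw', _⟩ => hw hw'

theorem KempeStep.perm_comp (h : KempeStep G k c c') (π : Equiv.Perm (Fin k)) :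
    KempeStep G k (π ∘ c) (π ∘ c') := by
  obtain ⟨a, b, v, hv, rfl⟩ := kempeStep_iff.1 h
  rw [← bicolored_perm_comp π] at hv
  refine kempeStep_iff.2 ⟨π a, π b, v, hv, ?_⟩
  rw [perm_comp_permuteOn_swap, bicolored_perm_comp]

theorem IsProperColoring.domRestrict (hc : IsProperColoring G k c) (A : Set V) :
    IsProperColoring (G.induce A) k (A.domRestrict c) :=
  fun _ _ hxy => hc hxy

theorem IsProperColoring.permuteOn_swap (hc : IsProperColoring G k c) {a b : Fin k}
    (hS : IsClosedWithin G (bicolored c a b) S) :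
    IsProperColoring G k (permuteOn (Equiv.swap a b) S c) := by
  have ne_of_leaves : ∀ ⦃x y⦄, G.Adj x y → x ∈ S → y ∉ S →
      permuteOn (Equiv.swap a b) S c x ≠ c y := by
    intro x y hxy hxS hyS heq
    by_cases hx : x ∈ bicolored c a b
    · refine hyS (hS hxy hx ?_ hxS)
      rw [← bicolored_permuteOn_swap a b S] at hx
      simpa only [bicolored, Set.mem_ofPred_eq, heq] using hx
    · exact hc hxy (permuteOn_swap_of_notMem_bicolored hx ▸ heq)
  intro x y hxy
  by_cases hxS : x ∈ S <;> by_cases hyS : y ∈ S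
  · rw [permuteOn_of_mem hxS, permuteOn_of_mem hyS]
    exact (Equiv.injective _).ne (hc hxy)
  · exact permuteOn_of_notMem (c := c) hyS ▸ ne_of_leaves hxy hxS hyS
  · exact permuteOn_of_notMem (c := c) hxS ▸ (ne_of_leaves hxy.symm hyS hxS).symm
  · rw [permuteOn_of_notMem hxS, permuteOn_of_notMem hyS]
    exact hc hxy

theorem KempeEquiv.isProperColoring (h : KempeEquiv G k c c') (hc : IsProperColoring G k c) :
    IsProperColoring G k c' := by
  rw [KempeEquiv] at h
  induction h with
  | refl => exact hc
  | tail _ hstep ih =>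
    obtain ⟨a, b, v, -, rfl⟩ := kempeStep_iff.1 hstep
    exact ih.permuteOn_swap (isClosedWithin_inducedComponent G _ v)

theorem kempeEquiv_permuteOn_swap {a b : Fin k} (hfin : S.Finite)
    (hS : IsClosedWithin G (bicolored c a b) S) :
    KempeEquiv G k c (permuteOn (Equiv.swap a b) S c) := by
  induction hn : S.ncard using Nat.strong_induction_on generalizing S c with
  | _ n ih =>
  by_cases hne : ∃ v ∈ S, v ∈ bicolored c a b
  · obtain ⟨v, hvS, hv⟩ := hne
    set K := inducedComponent G (bicolored c a b) v
    have hKS : K ⊆ S := hS.inducedComponent_subset hvS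
    have hdiff : S \ K ⊂ S := hKS.sdiff_ssubset_of_nonempty ⟨v, mem_inducedComponent_self hv⟩
    have hstep : KempeStep G k c (permuteOn (Equiv.swap a b) K c) :=
      kempeStep_iff.2 ⟨a, b, v, hv, rfl⟩
    rw [← permuteOn_sdiff _ c hKS]
    refine .head hstep (ih _ (hn ▸ Set.ncard_lt_ncard hdiff hfin) (hfin.subset hdiff.subset) ?_ rfl)
    rw [bicolored_permuteOn_swap]
    exact hS.sdiff (isClosedWithin_inducedComponent G _ v)
  · have hfix : permuteOn (Equiv.swap a b) S c = c := by
      funext v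
      by_cases hvS : v ∈ S
      · exact permuteOn_swap_of_notMem_bicolored fun hv => hne ⟨v, hvS, hv⟩
      · exact permuteOn_of_notMem hvS
    rw [hfix]
    exact .refl

theorem kempeEquiv_permuteOn (hfin : S.Finite) (π : Equiv.Perm (Fin k))
    (hπ : ∀ x ∈ S, ∀ y ∉ S, G.Adj x y → π (c y) = c y) :
    KempeEquiv G k c (permuteOn π S c) := by
  induction hn : π.support.card using Nat.strong_induction_on generalizing π with
  | _ n ih =>
  by_cases hne : ∃ a, π a ≠ a
  · obtain ⟨a, ha⟩ := hne
    set σ := Equiv.swap a (π a)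
    have ne_of_fixed : ∀ i, π i = i → i ≠ a ∧ i ≠ π a := fun i hi =>
      ⟨fun h => ha (h ▸ hi), fun h => ha (π.injective (h ▸ hi))⟩
    have hfixed : ∀ x ∈ S, ∀ y ∉ S, G.Adj x y → (σ * π) (c y) = c y := fun x hx y hy hxy => by
      have hy' := ne_of_fixed _ (hπ x hx y hy hxy)
      rw [Equiv.Perm.mul_apply, hπ x hx y hy hxy, Equiv.swap_apply_of_ne_of_ne hy'.1 hy'.2]
    have hclosed : IsClosedWithin G (bicolored (permuteOn (σ * π) S c) a (π a)) S := by
      intro x y hxy _ hy hxS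
      by_contra hyS
      rw [bicolored, Set.mem_ofPred_eq, permuteOn_of_notMem hyS] at hy
      have hy' := ne_of_fixed _ (hπ x hxS y hyS hxy)
      exact hy.elim hy'.1 hy'.2
    have hfactor : π = σ * (σ * π) := (Equiv.swap_mul_self_mul a (π a) π).symm
    rw [hfactor, permuteOn_mul]
    exact (ih _ (hn ▸ Equiv.Perm.card_support_swap_mul ha) _ hfixed rfl).trans
      (kempeEquiv_permuteOn_swap hfin hclosed)
  · have hfix : permuteOn π S c = c := by
      funext v
      by_cases hvS : v ∈ S
      · rw [permuteOn_of_mem hvS, not_exists_not.1 hne]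
      · exact permuteOn_of_notMem hvS
    rw [hfix]
    exact .refl

end Kempe

namespace IsCliqueSeparation

variable {G : SimpleGraph V} {V1 V2 : Set V} {k : ℕ} {c : V → Fin k}

theorem exists_kempeStep_domRestrict_eq (h : IsCliqueSeparation G V1 V2) {d : V1 → Fin k}
    (hd : KempeStep (G.induce V1) k (V1.domRestrict c) d) :
    ∃ c', KempeStep G k c c' ∧ V1.domRestrict c' = d := by
  obtain ⟨a, b, v, hv, rfl⟩ := kempeStep_iff.1 hd
  refine ⟨_, kempeStep_iff.2 ⟨a, b, v, hv, rfl⟩, ?_⟩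
  exact congrArg (permuteOn (Equiv.swap a b) · (V1.domRestrict c))
    (h.preimage_val_inducedComponent (bicolored c a b) v)

theorem exists_kempeEquiv_domRestrict_eq (h : IsCliqueSeparation G V1 V2) {d : V1 → Fin k}
    (hd : KempeEquiv (G.induce V1) k (V1.domRestrict c) d) :
    ∃ c', KempeEquiv G k c c' ∧ V1.domRestrict c' = d := by
  rw [KempeEquiv] at hd
  induction hd with
  | refl => exact ⟨c, .refl, rfl⟩
  | tail _ hstep ih =>
    obtain ⟨e, hce, rfl⟩ := ih
    obtain ⟨e', hee', he'⟩ := h.exists_kempeStep_domRestrict_eq hstep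
    exact ⟨e', hce.tail hee', he'⟩

theorem exists_kempeEquiv_eqOn_of_kempeStep_domRestrict (h : IsCliqueSeparation G V1 V2)
    (hfin : V1ᶜ.Finite) {d : V2 → Fin k} (hd : KempeStep (G.induce V2) k (V2.domRestrict c) d) :
    ∃ c', ∃ π : Equiv.Perm (Fin k),
      KempeEquiv G k c c' ∧ Set.EqOn c' c V1 ∧ V2.domRestrict c' = π ∘ d := by
  obtain ⟨c₁, hstep, rfl⟩ := h.symm.exists_kempeStep_domRestrict_eq hd
  obtain ⟨a, b, v, -, rfl⟩ := kempeStep_iff.1 hstep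
  set B := bicolored c a b
  set K := inducedComponent G B v
  have hKclosed : IsClosedWithin G B K := isClosedWithin_inducedComponent G B v
  by_cases hmeet : ∃ z ∈ V1 ∩ V2 ∩ B, z ∈ K
  · obtain ⟨z, hz, hzK⟩ := hmeet
    have hclique : V1 ∩ V2 ∩ B ⊆ K := h.inter_inter_subset_of_isClosedWithin hKclosed hz hzK
    have hclosed : IsClosedWithin G B (V1ᶜ \ K) := fun x y hxy hx hy hxS =>
      have hyK : y ∉ K := fun hyK => hxS.2 (hKclosed hxy.symm hy hx hyK)
      ⟨fun hy1 => hyK (hclique ⟨⟨hy1, h.mem_right_of_adj hxy hxS.1⟩, hy⟩), hyK⟩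
    have hV2 : ∀ x ∈ V2, x ∈ B → (x ∈ V1ᶜ \ K ↔ x ∈ Kᶜ) := fun x hx2 hxB =>
      ⟨And.right, fun hxK => ⟨fun hx1 => hxK (hclique ⟨⟨hx1, hx2⟩, hxB⟩), hxK⟩⟩
    refine ⟨_, Equiv.swap a b, kempeEquiv_permuteOn_swap hfin.sdiff hclosed,
      fun x hx => permuteOn_of_notMem fun hxS => hxS.1 hx, funext fun x => ?_⟩
    exact (permuteOn_swap_congr (hV2 x x.2)).trans
      (congrFun (swap_comp_permuteOn_swap a b K c) x).symm
  · have hclosed : IsClosedWithin G B (V1ᶜ ∩ K) := fun x y hxy hx hy hxS =>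
      have hyK : y ∈ K := hKclosed hxy hx hy hxS.2
      ⟨fun hy1 => hmeet ⟨y, ⟨⟨hy1, h.mem_right_of_adj hxy hxS.1⟩, hy⟩, hyK⟩, hyK⟩
    have hV2 : ∀ x ∈ V2, x ∈ B → (x ∈ V1ᶜ ∩ K ↔ x ∈ K) := fun x hx2 hxB =>
      ⟨And.right, fun hxK => ⟨fun hx1 => hmeet ⟨x, ⟨⟨hx1, hx2⟩, hxB⟩, hxK⟩, hxK⟩⟩
    exact ⟨_, 1, kempeEquiv_permuteOn_swap (hfin.inter_of_left K) hclosed,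
      fun x hx => permuteOn_of_notMem fun hxS => hxS.1 hx,
      funext fun x => permuteOn_swap_congr (hV2 x x.2)⟩

theorem exists_kempeEquiv_eqOn_of_kempeEquiv_domRestrict (h : IsCliqueSeparation G V1 V2)
    (hfin : V1ᶜ.Finite) {d : V2 → Fin k} (hd : KempeEquiv (G.induce V2) k (V2.domRestrict c) d) :
    ∃ c', ∃ π : Equiv.Perm (Fin k),
      KempeEquiv G k c c' ∧ Set.EqOn c' c V1 ∧ V2.domRestrict c' = π ∘ d := by
  rw [KempeEquiv] at hd
  induction hd with
  | refl => exact ⟨c, 1, .refl, Set.eqOn_refl c V1, rfl⟩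
  | tail _ hstep ih =>
    obtain ⟨e, π, hce, heV1, heV2⟩ := ih
    have hstep' := hstep.perm_comp π
    rw [← heV2] at hstep'
    obtain ⟨e', σ, hee', he'V1, he'V2⟩ :=
      h.exists_kempeEquiv_eqOn_of_kempeStep_domRestrict hfin hstep'
    exact ⟨e', σ * π, hce.trans hee', he'V1.trans heV1, he'V2⟩

theorem kempeEquiv_of_eqOn (h : IsCliqueSeparation G V1 V2) (hfin : V1ᶜ.Finite) {c' : V → Fin k}
    (hV1 : Set.EqOn c c' V1)
    (hV2 : KempeEquiv (G.induce V2) k (V2.domRestrict c) (V2.domRestrict c')) :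
    KempeEquiv G k c c' := by
  obtain ⟨e, π, hce, heV1, heV2⟩ := h.exists_kempeEquiv_eqOn_of_kempeEquiv_domRestrict hfin hV2
  have he1 : Set.EqOn e c' V1 := heV1.trans hV1
  have he2 : ∀ x ∈ V2, π⁻¹ (e x) = c' x := fun x hx =>
    Equiv.Perm.inv_eq_iff_eq.2 (congrFun heV2 ⟨x, hx⟩)
  have hboundary : ∀ x ∈ V1ᶜ, ∀ y ∉ V1ᶜ, G.Adj x y → π⁻¹ (e y) = e y := fun x hx y hy hxy => by
    rw [he2 y (h.mem_right_of_adj hxy hx), he1 (not_not.1 hy)]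
  have hundo : permuteOn π⁻¹ V1ᶜ e = c' := by
    funext x
    by_cases hx : x ∈ V1
    · rw [permuteOn_of_notMem (not_not.2 hx), he1 hx]
    · have hx2 : x ∈ V2 := (h.union_eq_univ.ge (Set.mem_univ x)).resolve_left hx
      rw [permuteOn_of_mem hx, he2 x hx2]
  exact hce.trans (hundo ▸ kempeEquiv_permuteOn hfin π⁻¹ hboundary)

end IsCliqueSeparation

theorem stmt4_general {G : SimpleGraph V} {V1 V2 : Set V} {k : ℕ}
    (h : IsCliqueSeparation G V1 V2) (hfin : V1ᶜ.Finite)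
    (h1 : KempeClass (G.induce V1) k) (h2 : KempeClass (G.induce V2) k) : KempeClass G k := by
  intro c c' hc hc'
  obtain ⟨e, hce, heV1⟩ :=
    h.exists_kempeEquiv_domRestrict_eq (h1 _ _ (hc.domRestrict V1) (hc'.domRestrict V1))
  have he : IsProperColoring G k e := hce.isProperColoring hc
  exact hce.trans <| h.kempeEquiv_of_eqOn hfin (Set.domRestrict_eq_domRestrict_iff.1 heV1)
    (h2 _ _ (he.domRestrict V2) (hc'.domRestrict V2))

/-- if `G` is the union of two graphs (on vertex sets `V1`, `V2` covering
all vertices, every edge lying inside `V1` or inside `V2`) whose intersection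
`G[V1 ∩ V2]` is complete, and the proper `k`-colourings of `G[V1]` and of `G[V2]` are
each a Kempe class, then the proper `k`-colourings of `G` form a Kempe class. -/
theorem stmt4 {V : Type*} [Fintype V] (k : ℕ) (hk : 0 < k) (G : SimpleGraph V)
    (V1 V2 : Set V) (hcover : V1 ∪ V2 = Set.univ)
    (hedges : ∀ x y : V, G.Adj x y → (x ∈ V1 ∧ y ∈ V1) ∨ (x ∈ V2 ∧ y ∈ V2))
    (hcomplete : ∀ x ∈ V1 ∩ V2, ∀ y ∈ V1 ∩ V2, x ≠ y → G.Adj x y)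
    (h1 : KempeClass (G.induce V1) k) (h2 : KempeClass (G.induce V2) k) :
    KempeClass G k :=
  stmt4_general ⟨hcover, hedges, fun x hx y hy => hcomplete x hx y hy⟩ (Set.toFinite V1ᶜ) h1 h2
end
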